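/- arXiv:1905.07983 — 4 statements merged into one kernel-verified Lean document; each statement's English description precedes it below -/
import Mathlib

section
/- Let N ≥ 1, a ≥ 0, b > 0, and set α = a+b−1 and β = b−1 (so α, β > −1). Let z_1 < ... < z_N be the ordered zeros of the Jacobi polynomial P_N^{(α,β)} and let φ(x) = Π_{1≤i<j≤N}(x_j−x_i) · Π_{j=1}^N (1−x_j)^{(a+b)/2}(1+x_j)^{b/2}. Then φ(z) = 2^{N(N+α+β+1)/2} · Π_{j=1}^N j^{j/2} (α+j)^{(α+j)/2} (β+j)^{(β+j)/2} / (N+α+β+j)^{(N+α+β+j)/2}. -/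
open MeasureTheory Filter Real Finset Topology

open Polynomial in
/-- The Jacobi operator without the eigenvalue term. -/
noncomputable def jacL {K : Type*} [Field K] (α β : K) (p : Polynomial K) : Polynomial K :=
  (1 - X ^ 2) * derivative (derivative p) + (C (β - α) - C (α + β + 2) * X) * derivative p

open Polynomial in
theorem jacL_coeff (α β : ℝ) (p : Polynomial ℝ) (k : ℕ) :
    (jacL α β p).coeff k = (k + 2) * (k + 1) * p.coeff (k + 2) - (k * k - k) * p.coeff k
      + (β - α) * ((k + 1) * p.coeff (k + 1)) - (α + β + 2) * (k * p.coeff k) := by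
  have hX : ∀ (f : Polynomial ℝ), (X * derivative f).coeff k = k * f.coeff k := by
    intro f
    cases k with
    | zero => simp
    | succ n => rw [coeff_X_mul, coeff_derivative]; push_cast; ring
  have h : jacL α β p = derivative (derivative p) -
      (X * derivative (X * derivative p) - X * derivative p)
      + C (β - α) * derivative p - C (α + β + 2) * (X * derivative p) := by
    simp only [jacL, derivative_mul, derivative_X]; ring
  rw [h]
  simp only [coeff_add, coeff_sub, coeff_C_mul, hX, coeff_derivative]
  push_cast; ring

theorem jac_integrable (α β : ℝ) (hα : -1 < α) (hβ : -1 < β) (G : Polynomial ℝ) :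
    IntervalIntegrable (fun x : ℝ => (1 - x) ^ α * (1 + x) ^ β * G.eval x) volume (-1) 1 := by
  have h1 : IntervalIntegrable (fun x : ℝ => (1 - x) ^ α * (1 + x) ^ β) volume (-1) 0 := by
    have : IntervalIntegrable (fun x : ℝ => (1 + x) ^ β) volume (-1) 0 := by
      have := (intervalIntegral.intervalIntegrable_rpow' (a := 0) (b := 1) hβ).comp_add_left 1
      simpa using this
    refine this.continuousOn_mul ?_
    rw [Set.uIcc_of_le (by norm_num)]
    refine ContinuousOn.rpow_const (by fun_prop) ?_
    intro x hx; left; have := hx.2; linarith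
  have h2 : IntervalIntegrable (fun x : ℝ => (1 - x) ^ α * (1 + x) ^ β) volume 0 1 := by
    have : IntervalIntegrable (fun x : ℝ => (1 - x) ^ α) volume 0 1 := by
      have := (intervalIntegral.intervalIntegrable_rpow' (a := 1) (b := 0) hα).comp_sub_left 1
      simpa using this
    refine this.mul_continuousOn ?_
    rw [Set.uIcc_of_le (by norm_num)]
    refine ContinuousOn.rpow_const (by fun_prop) ?_
    intro x hx; left; have := hx.1; linarith
  exact (h1.trans h2).mul_continuousOn (by fun_prop)

open Polynomial in
theorem jac_ftc (α β : ℝ) (hα : -1 < α) (hβ : -1 < β) (G : Polynomial ℝ) :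
    ∫ x in (-1 : ℝ)..1, (1 - x) ^ α * (1 + x) ^ β *
      ((C (β - α) - C (α + β + 2) * X) * G + (1 - X ^ 2) * derivative G).eval x = 0 := by
  have := intervalIntegral.integral_eq_sub_of_hasDerivAt_of_le (a := -1) (b := 1)
    (f := fun x : ℝ => (1 - x) ^ (α + 1) * (1 + x) ^ (β + 1) * G.eval x) (by norm_num)
    ?_ ?_ (jac_integrable α β hα hβ
      ((C (β - α) - C (α + β + 2) * X) * G + (1 - X ^ 2) * derivative G))
  · rw [this]
    have e1 : α + 1 ≠ 0 := by linarith
    have e2 : β + 1 ≠ 0 := by linarith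
    simp [Real.zero_rpow e1, Real.zero_rpow e2]
  · refine ContinuousOn.mul (ContinuousOn.mul ?_ ?_) (by fun_prop)
    · exact ContinuousOn.rpow_const (by fun_prop) (fun x _ => Or.inr (by linarith))
    · exact ContinuousOn.rpow_const (by fun_prop) (fun x _ => Or.inr (by linarith))
  · intro x hx
    have p1 : 0 < 1 - x := by linarith [hx.2]
    have p2 : 0 < 1 + x := by linarith [hx.1]
    have d1 : HasDerivAt (fun x : ℝ => (1 - x) ^ (α + 1)) (-1 * (α + 1) * (1 - x) ^ (α + 1 - 1)) x :=
      ((hasDerivAt_id x).const_sub 1).rpow_const (Or.inl p1.ne')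
    have d2 : HasDerivAt (fun x : ℝ => (1 + x) ^ (β + 1)) (1 * (β + 1) * (1 + x) ^ (β + 1 - 1)) x :=
      ((hasDerivAt_id x).const_add 1).rpow_const (Or.inl p2.ne')
    refine ((d1.mul d2).mul (G.hasDerivAt x)).congr_deriv ?_
    simp only [add_sub_cancel_right, Real.rpow_add_one p1.ne', Real.rpow_add_one p2.ne',
      eval_add, eval_mul, eval_sub, eval_C, eval_X, eval_one, eval_pow, Pi.mul_apply]
    ring

open Polynomial in
theorem jac_zero_of_sq (α β : ℝ) (hα : -1 < α) (hβ : -1 < β) (r : Polynomial ℝ)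
    (h : ∫ x in (-1 : ℝ)..1, (1 - x) ^ α * (1 + x) ^ β * (r * r).eval x = 0) : r = 0 := by
  by_contra hr
  have hpos : 0 < ∫ x in (-1 : ℝ)..1, (1 - x) ^ α * (1 + x) ^ β * (r * r).eval x := by
    rw [intervalIntegral.integral_pos_iff_support_of_nonneg_ae' ?_ (jac_integrable α β hα hβ _)]
    · refine ⟨by norm_num, ?_⟩
      have hsub : Set.Ioo (-1 : ℝ) 1 \ (r.roots.toFinset : Set ℝ) ⊆
          Function.support (fun x : ℝ => (1 - x) ^ α * (1 + x) ^ β * (r * r).eval x)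
            ∩ Set.Ioc (-1) 1 := by
        rintro x ⟨hx, hx2⟩
        refine ⟨?_, hx.1, hx.2.le⟩
        have p1 : 0 < 1 - x := by linarith [hx.2]
        have p2 : 0 < 1 + x := by linarith [hx.1]
        have : r.eval x ≠ 0 := by simpa [hr] using hx2
        simp only [Function.mem_support, eval_mul]
        have := Real.rpow_pos_of_pos p1 α
        have := Real.rpow_pos_of_pos p2 β
        positivity
      refine lt_of_lt_of_le ?_ (measure_mono hsub)
      rw [measure_sdiff_null (Finset.measure_zero _ _)]
      simp
    · rw [Set.uIoc_of_le (by norm_num)]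
      filter_upwards [ae_restrict_mem measurableSet_Ioc] with x hx
      have p1 : 0 ≤ 1 - x := by linarith [hx.2]
      have p2 : 0 ≤ 1 + x := by linarith [hx.1]
      simp only [eval_mul, Pi.zero_apply]
      have := Real.rpow_nonneg p1 α
      have := Real.rpow_nonneg p2 β
      have := mul_self_nonneg (r.eval x)
      positivity
  exact hpos.ne' h

open Polynomial in
theorem jac_ode (N : ℕ) (hN : 1 ≤ N) (α β : ℝ) (hα : -1 < α) (hβ : -1 < β)
    (P : Polynomial ℝ) (hPdeg : P.natDegree = N)
    (hPorth : ∀ Q : Polynomial ℝ, Q.natDegree < N →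
      ∫ x in Set.Ioo (-1 : ℝ) 1,
        P.eval x * Q.eval x * (1 - x) ^ α * (1 + x) ^ β = 0) :
    jacL α β P + C (N * (N + α + β + 1) : ℝ) * P = 0 := by
  have horth : ∀ Q : Polynomial ℝ, Q.natDegree < N →
      ∫ x in (-1 : ℝ)..1, (1 - x) ^ α * (1 + x) ^ β * (P * Q).eval x = 0 := by
    intro Q hQ
    rw [intervalIntegral.integral_of_le (by norm_num), integral_Ioc_eq_integral_Ioo, ← hPorth Q hQ]
    congr 1
    ext x
    simp only [eval_mul]; ring
  set r := jacL α β P + C (N * (N + α + β + 1) : ℝ) * P with hr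
  have hrdeg : r.natDegree < N := by
    have : r.natDegree ≤ N - 1 := by
      rw [natDegree_le_iff_coeff_eq_zero]
      intro k hk
      have z1 : P.coeff (k + 1) = 0 := coeff_eq_zero_of_natDegree_lt (by omega)
      have z2 : P.coeff (k + 2) = 0 := coeff_eq_zero_of_natDegree_lt (by omega)
      rw [hr, coeff_add, jacL_coeff, coeff_C_mul, z1, z2]
      rcases Nat.lt_or_ge N k with h | h
      · rw [coeff_eq_zero_of_natDegree_lt (by omega : P.natDegree < k)]; ring
      · have : k = N := by omega
        rw [this]; ring
    omega
  have hLdeg : (jacL α β r).natDegree < N := by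
    refine lt_of_le_of_lt ?_ hrdeg
    rw [natDegree_le_iff_coeff_eq_zero]
    intro k hk
    rw [jacL_coeff, coeff_eq_zero_of_natDegree_lt hk,
      coeff_eq_zero_of_natDegree_lt (by omega : r.natDegree < k + 1),
      coeff_eq_zero_of_natDegree_lt (by omega : r.natDegree < k + 2)]
    ring
  refine jac_zero_of_sq α β hα hβ r ?_
  have e1 := horth _ hLdeg
  have e2 := horth _ hrdeg
  have e3 := jac_ftc α β hα hβ (derivative P * r - P * derivative r)
  have key : ∀ x : ℝ, (1 - x) ^ α * (1 + x) ^ β * (r * r).eval x =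
      (1 - x) ^ α * (1 + x) ^ β * ((C (β - α) - C (α + β + 2) * X) *
        (derivative P * r - P * derivative r) +
        (1 - X ^ 2) * derivative (derivative P * r - P * derivative r)).eval x
      + (1 - x) ^ α * (1 + x) ^ β * (P * jacL α β r).eval x
      + (N * (N + α + β + 1) : ℝ) * ((1 - x) ^ α * (1 + x) ^ β * (P * r).eval x) := by
    intro x
    have : r * r = ((C (β - α) - C (α + β + 2) * X) *
        (derivative P * r - P * derivative r) +
        (1 - X ^ 2) * derivative (derivative P * r - P * derivative r))
        + P * jacL α β r + C (N * (N + α + β + 1) : ℝ) * (P * r) := by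
      have : r * r = r * (jacL α β P + C (N * (N + α + β + 1) : ℝ) * P) := by rw [← hr]
      rw [this]
      clear_value r
      simp only [jacL, derivative_sub, derivative_mul]
      ring
    rw [this, eval_add, eval_add, eval_mul (p := C _), eval_C]
    ring
  simp_rw [key]
  rw [intervalIntegral.integral_add, intervalIntegral.integral_add,
    intervalIntegral.integral_const_mul, e1, e2, e3]
  · simp
  · exact jac_integrable α β hα hβ _
  · exact jac_integrable α β hα hβ _
  · exact (jac_integrable α β hα hβ _).add (jac_integrable α β hα hβ _)
  · exact (jac_integrable α β hα hβ _).const_mul _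

/-- product of the values of `g` at the roots of `f`. -/
noncomputable def rootProd (f g : Polynomial ℂ) : ℂ := (f.roots.map (fun x => g.eval x)).prod

open Polynomial in
theorem monic_eval_roots (f : Polynomial ℂ) (hf : f.Monic) (x : ℂ) :
    f.eval x = (f.roots.map (fun r => x - r)).prod := by
  conv_lhs => rw [(IsAlgClosed.splits f).eq_prod_roots_of_monic hf]
  rw [eval_multiset_prod, Multiset.map_map]
  simp

theorem norm_mprod (s : Multiset ℂ) : ‖s.prod‖ = (s.map (fun x => ‖x‖)).prod :=
  (Multiset.prod_hom s (normHom (α := ℂ))).symm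

theorem rootProd_norm_symm (f g : Polynomial ℂ) (hf : f.Monic) (hg : g.Monic) :
    ‖rootProd f g‖ = ‖rootProd g f‖ := by
  have h : ∀ f g : Polynomial ℂ, g.Monic → ‖rootProd f g‖ =
      (f.roots.map (fun x => (g.roots.map (fun y => ‖x - y‖)).prod)).prod := by
    intro f g hg
    unfold rootProd
    rw [norm_mprod, Multiset.map_map]
    congr 1
    refine Multiset.map_congr rfl fun x _ => ?_
    simp only [Function.comp, monic_eval_roots g hg]
    rw [norm_mprod, Multiset.map_map]
    rfl
  rw [h f g hg, h g f hf, Multiset.prod_map_prod_map]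
  simp_rw [norm_sub_rev]

theorem rootProd_mul (f g h : Polynomial ℂ) :
    rootProd f (g * h) = rootProd f g * rootProd f h := by
  simp [rootProd, Multiset.prod_map_mul]

open Polynomial in
theorem rootProd_C (f : Polynomial ℂ) (c : ℂ) (n : ℕ) (hf : f.natDegree = n) :
    rootProd f (C c) = c ^ n := by
  simp [rootProd, IsAlgClosed.card_roots_eq_natDegree, hf]

open Polynomial in
theorem rootProd_quad (f : Polynomial ℂ) (hf : f.Monic) :
    ‖rootProd f (1 - X ^ 2)‖ = ‖f.eval 1‖ * ‖f.eval (-1)‖ := by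
  have e : (1 - X ^ 2 : Polynomial ℂ) = (1 - X) * (1 + X) := by ring
  rw [e, rootProd_mul, norm_mul, monic_eval_roots f hf, monic_eval_roots f hf]
  unfold rootProd
  congr 1
  · simp
  · rw [← norm_neg, ← norm_neg]
    simp only [norm_neg]
    rw [norm_mprod, Multiset.map_map,
      norm_mprod, Multiset.map_map]
    congr 1
    refine Multiset.map_congr rfl fun x _ => ?_
    simp only [Function.comp]
    rw [← norm_neg]; congr 1; simp; ring

open Polynomial in
theorem jac_main (N : ℕ) : ∀ (α β : ℝ), -1 < α → -1 < β → ∀ p : Polynomial ℂ, p.Monic →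
    p.natDegree = N →
    jacL (α : ℂ) (β : ℂ) p + C (N * (N + α + β + 1) : ℂ) * p = 0 →
    ‖p.eval 1‖ = ∏ j ∈ range N, (2 * (α + j + 1) / (N + α + β + j + 1)) ∧
    ‖p.eval (-1)‖ = ∏ j ∈ range N, (2 * (β + j + 1) / (N + α + β + j + 1)) ∧
    ‖rootProd p (derivative p)‖ = ∏ j ∈ range N, ((4:ℝ) ^ j * ((j:ℝ) + 1) ^ (j + 1) *
      (α + j + 1) ^ j * (β + j + 1) ^ j *
      ((N + α + β + j + 1) / (N + α + β + j + 1) ^ (N + j))) := by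
  induction N with
  | zero =>
    intro α β _ _ p hp hd _
    rw [hp.natDegree_eq_zero.mp hd]
    simp [rootProd]
  | succ M ih =>
    intro α β hα hβ p hp hd hode
    have hM : (M : ℂ) + 1 ≠ 0 := by exact_mod_cast Nat.succ_ne_zero M
    have hMr : (0 : ℝ) ≤ M := Nat.cast_nonneg M
    set q : Polynomial ℂ := C (1 / ((M : ℂ) + 1)) * derivative p with hq
    have hpq : derivative p = C ((M : ℂ) + 1) * q := by
      rw [hq, ← mul_assoc, ← C_mul, mul_one_div_cancel hM]; simp
    have hqdeg : q.natDegree = M := by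
      rw [hq, natDegree_C_mul (by simpa using hM), natDegree_derivative, hd]; rfl
    have hqm : q.Monic := by
      rw [Monic, leadingCoeff, hqdeg, hq, coeff_C_mul, coeff_derivative]
      have : p.coeff (M + 1) = 1 := by rw [← hd]; exact hp
      rw [this, one_mul, one_div_mul_cancel hM]
    clear_value q
    have hS : (0 : ℝ) < M + α + β + 2 := by linarith
    have hSc : ((M : ℂ) + α + β + 2) ≠ 0 := by exact_mod_cast hS.ne'
    have hode' : jacL ((α + 1 : ℝ) : ℂ) ((β + 1 : ℝ) : ℂ) q +
        C (M * (M + ((α + 1 : ℝ) : ℂ) + ((β + 1 : ℝ) : ℂ) + 1) : ℂ) * q = 0 := by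
      have h := congrArg derivative hode
      have h2 : C ((M : ℂ) + 1) * (jacL ((α + 1 : ℝ) : ℂ) ((β + 1 : ℝ) : ℂ) q +
        C (M * (M + ((α + 1 : ℝ) : ℂ) + ((β + 1 : ℝ) : ℂ) + 1) : ℂ) * q) = 0 := by
        rw [derivative_zero] at h
        rw [← h]
        simp only [jacL, derivative_add, derivative_mul, derivative_sub, derivative_C,
          derivative_X, derivative_X_pow, derivative_one, derivative_zero, hpq]
        push_cast
        simp only [C_add, C_sub, C_mul, map_ofNat, C_1, map_natCast]
        ring
      exact (mul_eq_zero.mp h2).resolve_left (C_ne_zero.mpr hM)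
    -- the differential equation, solved for p
    have hred : C ((M : ℂ) + α + β + 2) * p =
        -((1 - X ^ 2) * derivative q + (C ((β : ℂ) - α) - C ((α : ℂ) + β + 2) * X) * q) := by
      have h2 : C ((M : ℂ) + 1) * (C ((M : ℂ) + α + β + 2) * p +
        ((1 - X ^ 2) * derivative q + (C ((β : ℂ) - α) - C ((α : ℂ) + β + 2) * X) * q)) = 0 := by
        rw [← hode]
        simp only [jacL, derivative_mul, derivative_C, hpq]
        push_cast
        simp only [C_add, C_sub, C_mul, map_ofNat, C_1, map_natCast]
        ring
      have := (mul_eq_zero.mp h2).resolve_left (C_ne_zero.mpr hM)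
      exact eq_neg_of_add_eq_zero_left this
    obtain ⟨i1, i2, i3⟩ := ih (α + 1) (β + 1) (by linarith) (by linarith) q hqm hqdeg hode'
    have hSn : ‖(M : ℂ) + α + β + 2‖ = M + α + β + 2 := by
      have : (M : ℂ) + α + β + 2 = ((M + α + β + 2 : ℝ) : ℂ) := by push_cast; ring
      rw [this, Complex.norm_of_nonneg hS.le]
    have hMn : ‖(M : ℂ) + 1‖ = M + 1 := by
      have : (M : ℂ) + 1 = ((M + 1 : ℝ) : ℂ) := by push_cast; ring
      rw [this, Complex.norm_of_nonneg (by positivity)]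
    have hX : ∀ j : ℕ, (0 : ℝ) < ((M + 1 : ℕ) : ℝ) + α + β + ((j + 1 : ℕ) : ℝ) + 1 := by
      intro j; push_cast; have : (0 : ℝ) ≤ j := Nat.cast_nonneg j; linarith
    have hXe : ∀ j : ℕ, (M : ℝ) + (α + 1) + (β + 1) + j + 1 =
        ((M + 1 : ℕ) : ℝ) + α + β + ((j + 1 : ℕ) : ℝ) + 1 := by
      intro j; push_cast; ring
    have hX0 : ((M + 1 : ℕ) : ℝ) + α + β + ((0 : ℕ) : ℝ) + 1 = M + α + β + 2 := by
      push_cast; ring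
    have hae : ∀ (γ : ℝ) (j : ℕ), (γ + 1) + j + 1 = γ + ((j + 1 : ℕ) : ℝ) + 1 := by
      intro γ j; push_cast; ring
    simp only [hXe, hae] at i1 i2 i3
    refine ⟨?_, ?_, ?_⟩
    · have h := congrArg (fun f => ‖f.eval 1‖) hred
      have e : eval 1 (-((1 - X ^ 2) * derivative q +
          (C ((β : ℂ) - α) - C ((α : ℂ) + β + 2) * X) * q)) =
          ((2 * (α + 1) : ℝ) : ℂ) * q.eval 1 := by
        simp; ring
      simp only [e] at h
      rw [eval_mul, eval_C, norm_mul, norm_mul, hSn, Complex.norm_of_nonneg (by linarith), i1] at h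
      rw [prod_range_succ', hX0]
      field_simp
      rw [mul_comm, h]
      push_cast; ring
    · have h := congrArg (fun f => ‖f.eval (-1)‖) hred
      have e : eval (-1) (-((1 - X ^ 2) * derivative q +
          (C ((β : ℂ) - α) - C ((α : ℂ) + β + 2) * X) * q)) =
          -(((2 * (β + 1) : ℝ) : ℂ) * q.eval (-1)) := by
        simp only [eval_neg, eval_add, eval_mul, eval_sub, eval_C, eval_X, eval_one, eval_pow]
        push_cast; ring
      simp only [e] at h
      rw [eval_mul, eval_C, norm_mul, norm_neg, norm_mul, hSn,
        Complex.norm_of_nonneg (by linarith), i2] at h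
      rw [prod_range_succ', hX0]
      field_simp
      rw [mul_comm, h]
      push_cast; ring
    · have s1 : ‖rootProd p (derivative p)‖ = ((M : ℝ) + 1) ^ (M + 1) * ‖rootProd q p‖ := by
        rw [hpq, rootProd_mul, rootProd_C p _ _ hd, norm_mul, norm_pow, hMn,
          rootProd_norm_symm p q hp hqm]
      have s2 : ((M : ℝ) + α + β + 2) ^ M * ‖rootProd q p‖ =
          ‖q.eval 1‖ * ‖q.eval (-1)‖ * ‖rootProd q (derivative q)‖ := by
        have t1 : rootProd q (C ((M : ℂ) + α + β + 2) * p) =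
            rootProd q (C (-1) * ((1 - X ^ 2) * derivative q)) := by
          unfold rootProd
          congr 1
          refine Multiset.map_congr rfl fun x hx => ?_
          have hx0 : q.eval x = 0 := (mem_roots'.mp hx).2
          rw [hred]
          simp [hx0]
        have t2 := congrArg norm t1
        rw [rootProd_mul, rootProd_mul, rootProd_mul, rootProd_C q _ _ hqdeg,
          rootProd_C q _ _ hqdeg, norm_mul, norm_mul, norm_mul, rootProd_quad q hqm,
          norm_pow, hSn, norm_pow] at t2
        simpa using t2
      have s3 : ‖rootProd q p‖ = ‖q.eval 1‖ * ‖q.eval (-1)‖ * ‖rootProd q (derivative q)‖ /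
          ((M : ℝ) + α + β + 2) ^ M := by
        rw [← s2]; field_simp
      rw [s1, s3, i1, i2, i3]
      have hj : ∀ (f : ℕ → ℝ) (n : ℕ), ∏ j ∈ range n, ((4:ℝ) ^ j * ((j:ℝ) + 1) ^ (j + 1) *
          (α + j + 1) ^ j * (β + j + 1) ^ j * f j) =
          (∏ j ∈ range n, ((j:ℝ) + 1) ^ (j + 1)) *
          ∏ j ∈ range n, ((4:ℝ) ^ j * (α + j + 1) ^ j * (β + j + 1) ^ j * f j) := by
        intro f n
        rw [← prod_mul_distrib]
        exact prod_congr rfl fun j _ => by ring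
      rw [hj, prod_range_succ (fun j : ℕ => ((j:ℝ) + 1) ^ (j + 1)), prod_range_succ' _ M, hX0]
      have hfin : (∏ j ∈ range M, (2 * (α + ((j + 1 : ℕ) : ℝ) + 1) /
            (((M + 1 : ℕ) : ℝ) + α + β + ((j + 1 : ℕ) : ℝ) + 1))) *
          (∏ j ∈ range M, (2 * (β + ((j + 1 : ℕ) : ℝ) + 1) /
            (((M + 1 : ℕ) : ℝ) + α + β + ((j + 1 : ℕ) : ℝ) + 1))) *
          (∏ j ∈ range M, ((4:ℝ) ^ j * ((j:ℝ) + 1) ^ (j + 1) *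
            (α + ((j + 1 : ℕ) : ℝ) + 1) ^ j * (β + ((j + 1 : ℕ) : ℝ) + 1) ^ j *
            ((((M + 1 : ℕ) : ℝ) + α + β + ((j + 1 : ℕ) : ℝ) + 1) /
              (((M + 1 : ℕ) : ℝ) + α + β + ((j + 1 : ℕ) : ℝ) + 1) ^ (M + j)))) =
          (∏ j ∈ range M, ((j:ℝ) + 1) ^ (j + 1)) *
          ∏ j ∈ range M, ((4:ℝ) ^ (j + 1) * (α + ((j + 1 : ℕ) : ℝ) + 1) ^ (j + 1) *
            (β + ((j + 1 : ℕ) : ℝ) + 1) ^ (j + 1) *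
            ((((M + 1 : ℕ) : ℝ) + α + β + ((j + 1 : ℕ) : ℝ) + 1) /
              (((M + 1 : ℕ) : ℝ) + α + β + ((j + 1 : ℕ) : ℝ) + 1) ^ (M + 1 + (j + 1)))) := by
        rw [← prod_mul_distrib, ← prod_mul_distrib, ← prod_mul_distrib]
        refine prod_congr rfl fun j _ => ?_
        have := hX j
        set Y := ((M + 1 : ℕ) : ℝ) + α + β + ((j + 1 : ℕ) : ℝ) + 1
        field_simp
        ring
      rw [hfin]
      field_simp
      ring

open Polynomial in
theorem vandermonde_sq (N : ℕ) (z : Fin N → ℝ) :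
    ‖rootProd (∏ i, (X - C (z i : ℂ))) (derivative (∏ i, (X - C (z i : ℂ))))‖ =
    (∏ p ∈ Finset.univ.filter (fun p : Fin N × Fin N => p.1 < p.2), (z p.2 - z p.1)) ^ 2 := by
  have h1 : (∏ i, (X - C (z i : ℂ))) = Lagrange.nodal univ (fun i => (z i : ℂ)) := rfl
  have hr : (∏ i, (X - C (z i : ℂ))).roots = univ.val.map (fun i => (z i : ℂ)) := by
    have := roots_multiset_prod_X_sub_C (univ.val.map (fun i : Fin N => (z i : ℂ)))
    rw [Multiset.map_map] at this
    exact this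
  have h2 : ‖rootProd (∏ i, (X - C (z i : ℂ))) (derivative (∏ i, (X - C (z i : ℂ))))‖ =
      ∏ i, ∏ j ∈ univ.erase i, |z i - z j| := by
    unfold rootProd
    rw [hr, Multiset.map_map]
    change ‖∏ i, (derivative (∏ i, (X - C (z i : ℂ)))).eval (z i : ℂ)‖ = _
    rw [norm_prod]
    refine prod_congr rfl fun i _ => ?_
    rw [h1, Lagrange.eval_nodal_derivative_eval_node_eq (v := fun i => (z i : ℂ)) (mem_univ i), Lagrange.eval_nodal, norm_prod]
    refine prod_congr rfl fun j _ => ?_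
    rw [← Complex.ofReal_sub, Complex.norm_real, Real.norm_eq_abs]
  rw [h2]
  have h3 : ∏ i, ∏ j ∈ univ.erase i, |z i - z j| =
      ∏ p ∈ univ.filter (fun p : Fin N × Fin N => p.1 ≠ p.2), |z p.1 - z p.2| := by
    rw [prod_sigma']
    refine prod_bij' (fun s _ => (s.1, s.2)) (fun p _ => ⟨p.1, p.2⟩) ?_ ?_ ?_ ?_ ?_ <;> simp
    · exact fun a h => Ne.symm h
    · exact fun a b h => Ne.symm h
  have h4 : univ.filter (fun p : Fin N × Fin N => p.1 ≠ p.2) =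
      univ.filter (fun p : Fin N × Fin N => p.1 < p.2) ∪
      univ.filter (fun p : Fin N × Fin N => p.2 < p.1) := by
    ext p; simp [lt_or_lt_iff_ne]
  have h5 : Disjoint (univ.filter (fun p : Fin N × Fin N => p.1 < p.2))
      (univ.filter (fun p : Fin N × Fin N => p.2 < p.1)) := by
    rw [disjoint_filter]; intro p _ h h'; exact absurd h (not_lt.mpr h'.le)
  have h6 : ∏ p ∈ univ.filter (fun p : Fin N × Fin N => p.2 < p.1), |z p.1 - z p.2| =
      ∏ p ∈ univ.filter (fun p : Fin N × Fin N => p.1 < p.2), |z p.1 - z p.2| := by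
    refine prod_bij' (fun p _ => p.swap) (fun p _ => p.swap) ?_ ?_ ?_ ?_ ?_ <;> simp
    intro a b _; exact abs_sub_comm _ _
  rw [h3, h4, prod_union h5, h6, ← sq, ← Finset.abs_prod, sq_abs, ← prod_pow, ← prod_pow]
  exact prod_congr rfl fun p _ => by ring

theorem log_final (N : ℕ) (α β : ℝ) (hα : -1 < α) (hβ : -1 < β)
    (V A B : ℝ) (hV : 0 < V)
    (hA : A = ∏ j ∈ range N, (2 * (α + j + 1) / (N + α + β + j + 1)))
    (hB : B = ∏ j ∈ range N, (2 * (β + j + 1) / (N + α + β + j + 1)))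
    (hV2 : V ^ 2 = ∏ j ∈ range N, ((4:ℝ) ^ j * ((j:ℝ) + 1) ^ (j + 1) *
      (α + j + 1) ^ j * (β + j + 1) ^ j *
      ((N + α + β + j + 1) / (N + α + β + j + 1) ^ (N + j)))) :
    V * (A ^ ((α + 1) / 2) * B ^ ((β + 1) / 2)) =
      (2 : ℝ) ^ ((N : ℝ) * ((N : ℝ) + α + β + 1) / 2) *
      ∏ j ∈ Finset.range N,
        ((j : ℝ) + 1) ^ (((j : ℝ) + 1) / 2) *
          (α + (j : ℝ) + 1) ^ ((α + (j : ℝ) + 1) / 2) *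
          (β + (j : ℝ) + 1) ^ ((β + (j : ℝ) + 1) / 2) /
          ((N : ℝ) + α + β + (j : ℝ) + 1) ^ (((N : ℝ) + α + β + (j : ℝ) + 1) / 2) := by
  have pj : ∀ j : ℕ, (0:ℝ) < (j:ℝ) + 1 := fun j => by positivity
  have pa : ∀ j : ℕ, (0:ℝ) < α + j + 1 := fun j => by
    have : (0 : ℝ) ≤ j := Nat.cast_nonneg j
    linarith
  have pb : ∀ j : ℕ, (0:ℝ) < β + j + 1 := fun j => by
    have : (0 : ℝ) ≤ j := Nat.cast_nonneg j
    linarith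
  have px : ∀ j ∈ range N, (0:ℝ) < N + α + β + j + 1 := fun j hj => by
    have h0 : (0 : ℝ) ≤ j := Nat.cast_nonneg j
    have : (1 : ℝ) ≤ N := by
      have := mem_range.mp hj
      exact_mod_cast (by omega : 1 ≤ N)
    linarith
  have qA : ∀ j ∈ range N, 0 < 2 * (α + j + 1) / (N + α + β + j + 1) := fun j hj =>
    div_pos (mul_pos two_pos (pa j)) (px j hj)
  have qB : ∀ j ∈ range N, 0 < 2 * (β + j + 1) / (N + α + β + j + 1) := fun j hj =>
    div_pos (mul_pos two_pos (pb j)) (px j hj)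
  have hA0 : 0 < A := hA ▸ prod_pos qA
  have hB0 : 0 < B := hB ▸ prod_pos qB
  have qR : ∀ j ∈ range N, 0 < ((j : ℝ) + 1) ^ (((j : ℝ) + 1) / 2) *
          (α + (j : ℝ) + 1) ^ ((α + (j : ℝ) + 1) / 2) *
          (β + (j : ℝ) + 1) ^ ((β + (j : ℝ) + 1) / 2) /
          ((N : ℝ) + α + β + (j : ℝ) + 1) ^ (((N : ℝ) + α + β + (j : ℝ) + 1) / 2) := by
    intro j hj
    have := pj j; have := pa j; have := pb j; have := px j hj
    positivity
  have p2 : (0:ℝ) < (2 : ℝ) ^ ((N : ℝ) * ((N : ℝ) + α + β + 1) / 2) := by positivity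
  refine Real.log_injOn_pos (Set.mem_Ioi.mpr (by positivity))
    (Set.mem_Ioi.mpr (mul_pos p2 (prod_pos qR))) ?_
  have lA : log A = ∑ j ∈ range N, (log 2 + log (α + j + 1) - log (N + α + β + j + 1)) := by
    rw [hA, Real.log_prod (fun j hj => (qA j hj).ne')]
    refine sum_congr rfl fun j hj => ?_
    rw [Real.log_div (mul_pos two_pos (pa j)).ne' (px j hj).ne',
      Real.log_mul two_ne_zero (pa j).ne']
  have lB : log B = ∑ j ∈ range N, (log 2 + log (β + j + 1) - log (N + α + β + j + 1)) := by
    rw [hB, Real.log_prod (fun j hj => (qB j hj).ne')]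
    refine sum_congr rfl fun j hj => ?_
    rw [Real.log_div (mul_pos two_pos (pb j)).ne' (px j hj).ne',
      Real.log_mul two_ne_zero (pb j).ne']
  have l4 : log (4:ℝ) = 2 * log 2 := by
    rw [show (4:ℝ) = 2 ^ 2 by norm_num, Real.log_pow]; norm_num
  have lV : log V = ∑ j ∈ range N, (1 / 2) * (j * (2 * log 2) + (j + 1) * log ((j:ℝ) + 1)
      + j * log (α + j + 1) + j * log (β + j + 1) + log (N + α + β + j + 1)
      - (N + j) * log (N + α + β + j + 1)) := by
    have : 2 * log V = log (V ^ 2) := by rw [Real.log_pow]; norm_num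
    rw [← mul_sum]
    have h2 : log (V ^ 2) = ∑ j ∈ range N, (j * (2 * log 2) + (j + 1) * log ((j:ℝ) + 1)
      + j * log (α + j + 1) + j * log (β + j + 1) + log (N + α + β + j + 1)
      - (N + j) * log (N + α + β + j + 1)) := by
      rw [hV2, Real.log_prod]
      · refine sum_congr rfl fun j hj => ?_
        have h1 := pj j; have h2 := pa j; have h3 := pb j; have h4 := px j hj
        rw [Real.log_mul (by positivity) (by positivity), Real.log_mul (by positivity) (by positivity),
          Real.log_mul (by positivity) (by positivity), Real.log_mul (by positivity) (by positivity),
          Real.log_div (by positivity) (by positivity), Real.log_pow, Real.log_pow, Real.log_pow,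
          Real.log_pow, Real.log_pow, l4]
        push_cast; ring
      · intro j hj
        have h1 := pj j; have h2 := pa j; have h3 := pb j; have h4 := px j hj
        positivity
    linarith
  have lR : log (∏ j ∈ Finset.range N,
        ((j : ℝ) + 1) ^ (((j : ℝ) + 1) / 2) *
          (α + (j : ℝ) + 1) ^ ((α + (j : ℝ) + 1) / 2) *
          (β + (j : ℝ) + 1) ^ ((β + (j : ℝ) + 1) / 2) /
          ((N : ℝ) + α + β + (j : ℝ) + 1) ^ (((N : ℝ) + α + β + (j : ℝ) + 1) / 2)) =
      ∑ j ∈ range N, (((j : ℝ) + 1) / 2 * log ((j : ℝ) + 1)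
        + (α + (j : ℝ) + 1) / 2 * log (α + (j : ℝ) + 1)
        + (β + (j : ℝ) + 1) / 2 * log (β + (j : ℝ) + 1)
        - ((N : ℝ) + α + β + (j : ℝ) + 1) / 2 * log ((N : ℝ) + α + β + (j : ℝ) + 1)) := by
    rw [Real.log_prod (fun j hj => (qR j hj).ne')]
    refine sum_congr rfl fun j hj => ?_
    have h1 := pj j; have h2 := pa j; have h3 := pb j; have h4 := px j hj
    rw [Real.log_div (by positivity) (by positivity), Real.log_mul (by positivity) (by positivity),
      Real.log_mul (by positivity) (by positivity), Real.log_rpow h1, Real.log_rpow h2,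
      Real.log_rpow h3, Real.log_rpow h4]
  have lN : (N : ℝ) * ((N : ℝ) + α + β + 1) / 2 =
      ∑ j ∈ range N, ((j : ℝ) + (α + β + 2) / 2) := by
    have : ∀ n : ℕ, (n : ℝ) * ((n : ℝ) + α + β + 1) / 2 =
        ∑ j ∈ range n, ((j : ℝ) + (α + β + 2) / 2) := by
      intro n
      induction n with
      | zero => simp
      | succ n ih => rw [sum_range_succ, ← ih]; push_cast; ring
    exact this N
  rw [Real.log_mul hV.ne' (by positivity), Real.log_mul (by positivity) (by positivity),
    Real.log_rpow hA0, Real.log_rpow hB0, Real.log_mul p2.ne' (prod_pos qR).ne',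
    Real.log_rpow two_pos, lA, lB, lV, lR, lN, mul_sum, mul_sum, sum_mul,
    ← sum_add_distrib, ← sum_add_distrib, ← sum_add_distrib]
  refine sum_congr rfl fun j _ => ?_
  ring

theorem jacobi_phi_value_at_zeros
    (N : ℕ) (hN : 1 ≤ N) (a b : ℝ) (ha : 0 ≤ a) (hb : 0 < b)
    (α β : ℝ) (hα : α = a + b - 1) (hβ : β = b - 1)
    (P : Polynomial ℝ) (hPdeg : P.natDegree = N)
    (hPorth : ∀ Q : Polynomial ℝ, Q.natDegree < N →
      ∫ x in Set.Ioo (-1 : ℝ) 1,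
        P.eval x * Q.eval x * (1 - x) ^ α * (1 + x) ^ β = 0)
    (hPone : P.eval 1 = (∏ j ∈ Finset.range N, (α + 1 + j)) / (N.factorial : ℝ))
    (z : Fin N → ℝ) (hzmono : StrictMono z)
    (hzroot : ∀ i, P.eval (z i) = 0)
    (hzmem : ∀ i, z i ∈ Set.Ioo (-1 : ℝ) 1)
    (φ : (Fin N → ℝ) → ℝ)
    (hφ : φ = fun x =>
      (∏ p ∈ Finset.univ.filter (fun p : Fin N × Fin N => p.1 < p.2), (x p.2 - x p.1)) *
      ∏ j, ((1 - x j) ^ ((a + b) / 2) * (1 + x j) ^ (b / 2)))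
    : φ z = (2 : ℝ) ^ ((N : ℝ) * ((N : ℝ) + α + β + 1) / 2) *
      ∏ j ∈ Finset.range N,
        ((j : ℝ) + 1) ^ (((j : ℝ) + 1) / 2) *
          (α + (j : ℝ) + 1) ^ ((α + (j : ℝ) + 1) / 2) *
          (β + (j : ℝ) + 1) ^ ((β + (j : ℝ) + 1) / 2) /
          ((N : ℝ) + α + β + (j : ℝ) + 1) ^ (((N : ℝ) + α + β + (j : ℝ) + 1) / 2) := by
  have hα1 : -1 < α := by linarith
  have hβ1 : -1 < β := by linarith
  have hode := jac_ode N hN α β hα1 hβ1 P hPdeg hPorth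
  have hP0 : P ≠ 0 := by
    rintro rfl
    simp at hPdeg; omega
  -- factor P
  have hfac : P = Polynomial.C P.leadingCoeff * ∏ i, (Polynomial.X - Polynomial.C (z i)) := by
    have hle : univ.val.map z ≤ P.roots := by
      rw [Multiset.le_iff_subset (Multiset.Nodup.map hzmono.injective univ.nodup)]
      intro x hx
      obtain ⟨i, _, rfl⟩ := Multiset.mem_map.mp hx
      exact (Polynomial.mem_roots hP0).mpr (hzroot i)
    have heq : univ.val.map z = P.roots := by
      refine Multiset.eq_of_le_of_card_le hle ?_
      have := P.card_roots'
      simpa [hPdeg] using this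
    have := Polynomial.C_leadingCoeff_mul_prod_multiset_X_sub_C (p := P) (by
      rw [← heq, hPdeg]; simp)
    rw [← heq, Multiset.map_map] at this
    exact this.symm
  set c := P.leadingCoeff with hc
  have hc0 : c ≠ 0 := Polynomial.leadingCoeff_ne_zero.mpr hP0
  set p : Polynomial ℂ := ∏ i, (Polynomial.X - Polynomial.C (z i : ℂ)) with hp
  have hPp : P.map Complex.ofRealHom = Polynomial.C (c : ℂ) * p := by
    conv_lhs => rw [hfac]
    rw [Polynomial.map_mul, Polynomial.map_prod]
    simp [hp]
  have hodeC : jacL (α : ℂ) (β : ℂ) p + Polynomial.C (N * (N + α + β + 1) : ℂ) * p = 0 := by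
    have h := congrArg (Polynomial.map Complex.ofRealHom) hode
    have h2 : Polynomial.C (c : ℂ) *
        (jacL (α : ℂ) (β : ℂ) p + Polynomial.C (N * (N + α + β + 1) : ℂ) * p) = 0 := by
      have e : Polynomial.map Complex.ofRealHom (jacL α β P) =
          jacL (α : ℂ) (β : ℂ) (P.map Complex.ofRealHom) := by
        simp [jacL, Polynomial.derivative_map]
      rw [Polynomial.map_add, e, Polynomial.map_mul, hPp, Polynomial.map_C, Polynomial.map_zero] at h
      rw [← h]
      simp only [jacL, Polynomial.derivative_mul, Polynomial.derivative_C, zero_mul, zero_add]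
      simp only [map_mul, map_add, map_natCast, Complex.ofRealHom_eq_coe, map_one]
      ring
    exact (mul_eq_zero.mp h2).resolve_left (Polynomial.C_ne_zero.mpr (by exact_mod_cast hc0))
  have hpm : p.Monic := Polynomial.monic_prod_of_monic _ _ fun i _ => Polynomial.monic_X_sub_C _
  have hpd : p.natDegree = N := by
    rw [hp, Polynomial.natDegree_prod_of_monic _ _ fun i _ => Polynomial.monic_X_sub_C _]
    simp
  obtain ⟨k1, k2, k3⟩ := jac_main N α β hα1 hβ1 p hpm hpd hodeC
  have m1 : ∀ i, 0 < 1 - z i := fun i => by linarith [(hzmem i).2]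
  have m2 : ∀ i, 0 < 1 + z i := fun i => by linarith [(hzmem i).1]
  have n1 : ‖p.eval 1‖ = ∏ i, (1 - z i) := by
    rw [hp, Polynomial.eval_prod, norm_prod]
    refine prod_congr rfl fun i _ => ?_
    have : Polynomial.eval 1 (Polynomial.X - Polynomial.C (z i : ℂ)) = ((1 - z i : ℝ) : ℂ) := by
      simp
    rw [this, Complex.norm_of_nonneg (m1 i).le]
  have n2 : ‖p.eval (-1)‖ = ∏ i, (1 + z i) := by
    rw [hp, Polynomial.eval_prod, norm_prod]
    refine prod_congr rfl fun i _ => ?_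
    have : Polynomial.eval (-1) (Polynomial.X - Polynomial.C (z i : ℂ)) =
        -((1 + z i : ℝ) : ℂ) := by
      simp; ring
    rw [this, norm_neg, Complex.norm_of_nonneg (m2 i).le]
  rw [hp, vandermonde_sq] at k3
  rw [n1] at k1
  rw [n2] at k2
  have hVpos : 0 < ∏ p ∈ Finset.univ.filter (fun p : Fin N × Fin N => p.1 < p.2),
      (z p.2 - z p.1) := by
    refine prod_pos fun q hq => ?_
    have := hzmono (mem_filter.mp hq).2
    linarith
  rw [← log_final N α β hα1 hβ1 _ _ _ hVpos k1 k2 k3, hφ]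
  simp only
  rw [prod_mul_distrib, Real.finsetProd_rpow _ _ (fun i _ => (m1 i).le),
    Real.finsetProd_rpow _ _ (fun i _ => (m2 i).le)]
  rw [show α + 1 = a + b by linarith, show β + 1 = b by linarith]
end

section
/- Let N ≥ 1, a ≥ 0, b > 0, and set α = a+b−1 and β = b−1. For each κ > 0 let X_κ be a random vector with distribution μ_κ (the β-Jacobi ensemble), and let z = (z_1,...,z_N), where z_1 < ... < z_N are the ordered zeros of the Jacobi polynomial P_N^{(α,β)}. Then X_κ converges to z in probability as κ → ∞, i.e., for every ε > 0, lim_{κ→∞} μ_κ({x ∈ A : ‖x − z‖ > ε}) = 0. -/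
open MeasureTheory Filter Real Finset Topology

lemma laplace_aux {N : ℕ} (A : Set (Fin N → ℝ)) (hAc : IsCompact A) (F W : (Fin N → ℝ) → ℝ)
    (hF : Continuous F) (hW : Continuous W) (hF0 : ∀ x ∈ A, 0 ≤ F x) (hW0 : ∀ x ∈ A, 0 ≤ W x)
    (z : Fin N → ℝ) (hzA : z ∈ interior A) (hFz : 0 < F z) (hWz : 0 < W z)
    (hmax : ∀ y ∈ A, y ≠ z → F y < F z) (ε : ℝ) (hε : 0 < ε) :
    Tendsto (fun t : ℝ => (∫ x in {x ∈ A | ε < dist x z}, F x ^ t * W x) /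
      (∫ x in A, F x ^ t * W x)) atTop (𝓝 0) := by
  obtain ⟨M, hM0, hMz, hM⟩ : ∃ M, 0 ≤ M ∧ M < F z ∧ ∀ x ∈ A, ε < dist x z → F x ≤ M := by
    have hK : IsCompact (A ∩ {x | ε ≤ dist x z}) :=
      hAc.inter_right (isClosed_le continuous_const (continuous_id.dist continuous_const))
    rcases (A ∩ {x | ε ≤ dist x z}).eq_empty_or_nonempty with h | h
    · refine ⟨0, le_rfl, hFz, fun x hx hd => ?_⟩
      have : x ∈ A ∩ {x | ε ≤ dist x z} := ⟨hx, hd.le⟩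
      rw [h] at this
      exact this.elim
    · obtain ⟨y, hy, hym⟩ := hK.exists_isMaxOn h hF.continuousOn
      refine ⟨F y, hF0 y hy.1, hmax y hy.1 ?_, fun x hx hd => hym ⟨hx, hd.le⟩⟩
      rintro rfl
      have := hy.2
      simp at this
      linarith
  obtain ⟨C, hC⟩ := hAc.exists_bound_of_continuousOn hW.continuousOn
  set m := (M + F z) / 2 with hm
  have hmpos : 0 < m := by rw [hm]; linarith
  have hMm : M < m := by rw [hm]; linarith
  have hmF : m < F z := by rw [hm]; linarith
  set V := interior A ∩ ({x | m < F x} ∩ {x | W z / 2 < W x}) with hV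
  have hVo : IsOpen V := isOpen_interior.inter
    ((isOpen_lt continuous_const hF).inter (isOpen_lt continuous_const hW))
  have hzV : z ∈ V := ⟨hzA, hmF, by simp; linarith⟩
  have hVA : V ⊆ A := fun x hx => interior_subset hx.1
  have hAfin : volume A < ⊤ := hAc.measure_lt_top
  have hVpos : 0 < volume V := hVo.measure_pos volume ⟨z, hzV⟩
  have hVfin : volume V < ⊤ := (measure_mono hVA).trans_lt hAfin
  have hVr : 0 < volume.real V := ENNReal.toReal_pos hVpos.ne' hVfin.ne
  have hC0 : 0 ≤ C := (norm_nonneg _).trans (hC z (interior_subset hzA))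
  have hAm : MeasurableSet A := hAc.isClosed.measurableSet
  have hSm : MeasurableSet {x ∈ A | ε < dist x z} :=
    hAm.inter (isOpen_lt continuous_const (continuous_id.dist continuous_const)).measurableSet
  have hSA : {x ∈ A | ε < dist x z} ⊆ A := fun x hx => hx.1
  have hlim : Tendsto (fun t : ℝ => (C * volume.real A / (W z / 2 * volume.real V)) * (M / m) ^ t)
      atTop (𝓝 0) := by
    have := tendsto_rpow_atTop_of_base_lt_one (M / m)
      (by have : 0 ≤ M / m := by positivity
          linarith) ((div_lt_one hmpos).2 hMm)
    simpa using this.const_mul (C * volume.real A / (W z / 2 * volume.real V))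
  refine squeeze_zero' ?_ ?_ hlim
  · filter_upwards with t
    refine div_nonneg (setIntegral_nonneg hSm fun x hx => ?_) (setIntegral_nonneg hAm fun x hx => ?_)
    · exact mul_nonneg (rpow_nonneg (hF0 x hx.1) _) (hW0 x hx.1)
    · exact mul_nonneg (rpow_nonneg (hF0 x hx) _) (hW0 x hx)
  · filter_upwards [eventually_gt_atTop 0] with t ht
    have hcont : Continuous fun x => F x ^ t * W x :=
      (hF.rpow_const (fun _ => Or.inr ht.le)).mul hW
    have hint : IntegrableOn (fun x => F x ^ t * W x) A := hcont.continuousOn.integrableOn_compact hAc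
    have hnum : (∫ x in {x ∈ A | ε < dist x z}, F x ^ t * W x) ≤ M ^ t * C * volume.real A := by
      calc _ ≤ ∫ x in {x ∈ A | ε < dist x z}, M ^ t * C := by
            refine setIntegral_mono_on (hint.mono_set hSA) ?_ hSm fun x hx => ?_
            · exact integrableOn_const ((measure_mono hSA).trans_lt hAfin).ne
            · exact mul_le_mul (rpow_le_rpow (hF0 x hx.1) (hM x hx.1 hx.2) ht.le)
                ((le_abs_self _).trans (hC x hx.1)) (hW0 x hx.1) (by positivity)
        _ = volume.real {x ∈ A | ε < dist x z} * (M ^ t * C) := by simp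
        _ ≤ volume.real A * (M ^ t * C) := by
            gcongr
            exact hAfin.ne
        _ = _ := by ring
    have hden : m ^ t * (W z / 2) * volume.real V ≤ ∫ x in A, F x ^ t * W x := by
      calc _ = ∫ x in V, m ^ t * (W z / 2) := by simp; ring
        _ ≤ ∫ x in V, F x ^ t * W x := by
            refine setIntegral_mono_on ?_ (hint.mono_set hVA) hVo.measurableSet fun x hx => ?_
            · exact integrableOn_const hVfin.ne
            · exact mul_le_mul (rpow_le_rpow hmpos.le (le_of_lt hx.2.1) ht.le) (le_of_lt hx.2.2)
                (by positivity) (rpow_nonneg (hF0 x (hVA hx)) _)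
        _ ≤ _ := by
            refine setIntegral_mono_set hint ?_ hVA.eventuallyLE
            filter_upwards [ae_restrict_mem hAm] with x hx
            exact mul_nonneg (rpow_nonneg (hF0 x hx) _) (hW0 x hx)
    have hmt : 0 < m ^ t := rpow_pos_of_pos hmpos t
    calc _ ≤ (M ^ t * C * volume.real A) / (m ^ t * (W z / 2) * volume.real V) := by
          have : 0 < m ^ t * (W z / 2) * volume.real V := by positivity
          gcongr
      _ = _ := by
          rw [div_rpow hM0 hmpos.le]
          field_simp

lemma weight_integrable {α β : ℝ} (hα : -1 < α) (hβ : -1 < β) :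
    IntegrableOn (fun x : ℝ => (1 - x) ^ α * (1 + x) ^ β) (Set.Icc (-1) 1) := by
  have h1 : IntervalIntegrable (fun x : ℝ => (1 - x) ^ α * (1 + x) ^ β) volume (-1) 0 := by
    have : IntervalIntegrable (fun x : ℝ => (1 + x) ^ β) volume (-1) 0 := by
      have := (intervalIntegral.intervalIntegrable_rpow' (a := 0) (b := 1) hβ).comp_add_left 1
      simpa using this
    refine this.continuousOn_mul ?_
    refine ContinuousOn.rpow_const (by fun_prop) fun x hx => Or.inl ?_
    rw [Set.uIcc_of_le (by norm_num)] at hx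
    have := hx.2
    linarith
  have h2 : IntervalIntegrable (fun x : ℝ => (1 - x) ^ α * (1 + x) ^ β) volume 0 1 := by
    have : IntervalIntegrable (fun x : ℝ => (1 - x) ^ α) volume 0 1 := by
      have := (intervalIntegral.intervalIntegrable_rpow' (a := 0) (b := 1) hα).comp_sub_left 1
      simpa using this.symm
    refine this.mul_continuousOn ?_
    refine ContinuousOn.rpow_const (by fun_prop) fun x hx => Or.inl ?_
    rw [Set.uIcc_of_le (by norm_num)] at hx
    have := hx.1
    linarith
  exact (intervalIntegrable_iff_integrableOn_Icc_of_le (by norm_num)).1 (h1.trans h2)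

lemma poly_weight_integrable {α β : ℝ} (hα : -1 < α) (hβ : -1 < β) (Q : Polynomial ℝ) :
    IntegrableOn (fun x : ℝ => Q.eval x * ((1 - x) ^ α * (1 + x) ^ β)) (Set.Icc (-1) 1) :=
  (weight_integrable hα hβ).continuousOn_mul Q.continuous.continuousOn isCompact_Icc

lemma ibp {α β : ℝ} (hα : -1 < α) (hβ : -1 < β) (G : Polynomial ℝ) (S : Polynomial ℝ)
    (hS : ∀ x, S.eval x = ((β + 1) * (1 - x) - (α + 1) * (1 + x)) * G.eval x
      + 2 * (1 - x ^ 2) * G.derivative.eval x) :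
    ∫ x in Set.Ioo (-1 : ℝ) 1, (G * S).eval x * ((1 - x) ^ α * (1 + x) ^ β) = 0 := by
  have key := intervalIntegral.integral_eq_sub_of_hasDerivAt_of_le (a := -1) (b := 1) (by norm_num)
    (f := fun x : ℝ => (1 - x) ^ (α + 1) * (1 + x) ^ (β + 1) * G.eval x ^ 2)
    (f' := fun x : ℝ => (G * S).eval x * ((1 - x) ^ α * (1 + x) ^ β)) ?_ ?_ ?_
  · rw [intervalIntegral.integral_of_le (by norm_num), integral_Ioc_eq_integral_Ioo] at key
    rw [key]
    have h1 : α + 1 ≠ 0 := by linarith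
    have h2 : β + 1 ≠ 0 := by linarith
    simp [h1, h2]
  · refine Continuous.continuousOn ?_
    have h1 : Continuous fun x : ℝ => (1 - x) ^ (α + 1) :=
      Continuous.rpow_const (by fun_prop) fun _ => Or.inr (by linarith)
    have h2 : Continuous fun x : ℝ => (1 + x) ^ (β + 1) :=
      Continuous.rpow_const (by fun_prop) fun _ => Or.inr (by linarith)
    have h3 := G.continuous
    fun_prop
  · intro x hx
    have hx1 : 0 < 1 - x := by linarith [hx.2]
    have hx2 : 0 < 1 + x := by linarith [hx.1]
    have d1 : HasDerivAt (fun x : ℝ => (1 - x) ^ (α + 1)) (-1 * (α + 1) * (1 - x) ^ (α + 1 - 1)) x :=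
      ((hasDerivAt_id x).const_sub 1).rpow_const (Or.inl hx1.ne')
    have d2 : HasDerivAt (fun x : ℝ => (1 + x) ^ (β + 1)) (1 * (β + 1) * (1 + x) ^ (β + 1 - 1)) x :=
      ((hasDerivAt_id x).const_add 1).rpow_const (Or.inl hx2.ne')
    have d3 := (G.hasDerivAt x).pow 2
    refine ((d1.mul d2).mul d3).congr_deriv ?_
    simp only [Polynomial.eval_mul, hS, add_sub_cancel_right, rpow_add_one hx1.ne',
      rpow_add_one hx2.ne', Pi.mul_apply, Pi.pow_apply]
    push_cast
    ring
  · exact (intervalIntegrable_iff_integrableOn_Icc_of_le (by norm_num)).2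
      (poly_weight_integrable hα hβ _)

lemma sq_integral_ne {α β : ℝ} (hα : -1 < α) (hβ : -1 < β) (G : Polynomial ℝ) (z : ℝ)
    (hz : z ∈ Set.Ioo (-1 : ℝ) 1) (hG : G.eval z ≠ 0) :
    ∫ x in Set.Ioo (-1 : ℝ) 1, (G * G).eval x * ((1 - x) ^ α * (1 + x) ^ β) ≠ 0 := by
  intro h
  have hpos : ∀ x ∈ Set.Ioo (-1 : ℝ) 1, 0 < (1 - x) ^ α * (1 + x) ^ β := fun x hx =>
    mul_pos (rpow_pos_of_pos (by linarith [hx.2]) _) (rpow_pos_of_pos (by linarith [hx.1]) _)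
  rw [setIntegral_eq_zero_iff_of_nonneg_ae ?_
    ((poly_weight_integrable hα hβ _).mono_set Set.Ioo_subset_Icc_self)] at h
  · have h0 := Measure.eqOn_open_of_ae_eq (μ := volume) h isOpen_Ioo ?_ continuousOn_const
    · have := h0 hz
      simp only [Polynomial.eval_mul, Pi.zero_apply, mul_eq_zero, hG, false_or] at this
      have h3 := hpos z hz
      rcases this with h | h <;> simp [h] at h3
    · refine (G * G).continuous.continuousOn.mul (ContinuousOn.mul ?_ ?_)
      · exact ContinuousOn.rpow_const (by fun_prop) fun x hx => Or.inl (by linarith [hx.2])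
      · exact ContinuousOn.rpow_const (by fun_prop) fun x hx => Or.inl (by linarith [hx.1])
  · filter_upwards [ae_restrict_mem measurableSet_Ioo] with x hx
    simp only [Polynomial.eval_mul, Pi.zero_apply]
    exact mul_nonneg (mul_self_nonneg _) (hpos x hx).le

lemma crit_poly {α β : ℝ} (hα : -1 < α) (hβ : -1 < β) (N : ℕ) (P G : Polynomial ℝ)
    (hPdeg : P.natDegree = N)
    (hPorth : ∀ Q : Polynomial ℝ, Q.natDegree < N →
      ∫ x in Set.Ioo (-1 : ℝ) 1,
        P.eval x * Q.eval x * (1 - x) ^ α * (1 + x) ^ β = 0)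
    (z : ℝ) (hz : z ∈ Set.Ioo (-1 : ℝ) 1) (hPG : P = (Polynomial.X - Polynomial.C z) * G)
    (hG : G.eval z ≠ 0) :
    ((β + 1) * (1 - z) - (α + 1) * (1 + z)) * G.eval z
      + 2 * (1 - z ^ 2) * G.derivative.eval z = 0 := by
  have hG0 : G ≠ 0 := by rintro rfl; simp at hG
  have hGdeg : N = 1 + G.natDegree := by
    rw [← hPdeg, hPG, Polynomial.natDegree_mul (Polynomial.X_sub_C_ne_zero z) hG0,
      Polynomial.natDegree_X_sub_C]
  set S : Polynomial ℝ := (Polynomial.C (β + 1) * (1 - Polynomial.X) -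
    Polynomial.C (α + 1) * (1 + Polynomial.X)) * G
    + Polynomial.C 2 * (1 - Polynomial.X ^ 2) * G.derivative with hSdef
  have hS : ∀ x, S.eval x = ((β + 1) * (1 - x) - (α + 1) * (1 + x)) * G.eval x
      + 2 * (1 - x ^ 2) * G.derivative.eval x := by
    intro x; simp [hSdef]
  have hSdeg : S.natDegree ≤ N := by
    rw [hSdef]
    refine Polynomial.natDegree_add_le_of_degree_le ?_ ?_
    · refine Polynomial.natDegree_mul_le.trans ?_
      rw [hGdeg]
      gcongr
      compute_degree
    · by_cases h : G.natDegree = 0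
      · rw [Polynomial.derivative_of_natDegree_zero h]; simp
      · refine Polynomial.natDegree_mul_le.trans ?_
        have h1 := Polynomial.natDegree_derivative_lt h
        have h2 : (Polynomial.C 2 * (1 - Polynomial.X ^ 2) : Polynomial ℝ).natDegree ≤ 2 := by
          compute_degree
        omega
  set s := S.eval z / G.eval z with hs
  have hroot : (S - Polynomial.C s * G).eval z = 0 := by
    simp only [Polynomial.eval_sub, Polynomial.eval_mul, Polynomial.eval_C, hs]
    field_simp; ring
  obtain ⟨T, hT⟩ := Polynomial.dvd_iff_isRoot.2 hroot
  have hTdeg : T.natDegree < N := by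
    by_cases h : T = 0
    · subst h; simp; omega
    have h1 : (S - Polynomial.C s * G).natDegree = 1 + T.natDegree := by
      rw [hT, Polynomial.natDegree_mul (Polynomial.X_sub_C_ne_zero z) h,
        Polynomial.natDegree_X_sub_C]
    have h2 : (S - Polynomial.C s * G).natDegree ≤ N := by
      refine (Polynomial.natDegree_sub_le _ _).trans (max_le hSdeg ?_)
      exact (Polynomial.natDegree_C_mul_le _ _).trans (by omega)
    omega
  have hST : G * S = Polynomial.C s * (G * G) + P * T := by
    rw [hPG]; linear_combination G * hT
  have h1 := ibp hα hβ G S hS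
  have i1 := (poly_weight_integrable hα hβ (G * G)).mono_set Set.Ioo_subset_Icc_self
  have i2 := (poly_weight_integrable hα hβ (P * T)).mono_set Set.Ioo_subset_Icc_self
  have h2 : ∫ x in Set.Ioo (-1 : ℝ) 1, (P * T).eval x * ((1 - x) ^ α * (1 + x) ^ β) = 0 := by
    rw [← hPorth T hTdeg]
    congr 1; ext x; simp; ring
  have h3 : ∫ x in Set.Ioo (-1 : ℝ) 1, (G * S).eval x * ((1 - x) ^ α * (1 + x) ^ β) =
      s * (∫ x in Set.Ioo (-1 : ℝ) 1, (G * G).eval x * ((1 - x) ^ α * (1 + x) ^ β)) +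
      ∫ x in Set.Ioo (-1 : ℝ) 1, (P * T).eval x * ((1 - x) ^ α * (1 + x) ^ β) := by
    rw [← integral_const_mul, ← integral_add (i1.const_mul s) i2]
    congr 1; ext x; rw [hST]; simp; ring
  rw [h1, h2, add_zero] at h3
  have hs0 : s = 0 := by
    rcases mul_eq_zero.1 h3.symm with h | h
    · exact h
    · exact absurd h (sq_integral_ne hα hβ G z hz hG)
  rw [← hS]
  rw [hs, div_eq_zero_iff] at hs0
  exact hs0.resolve_right hG

lemma crit {α β : ℝ} (hα : -1 < α) (hβ : -1 < β) (N : ℕ) (P : Polynomial ℝ)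
    (hPdeg : P.natDegree = N) (hP0 : P ≠ 0)
    (hPorth : ∀ Q : Polynomial ℝ, Q.natDegree < N →
      ∫ x in Set.Ioo (-1 : ℝ) 1,
        P.eval x * Q.eval x * (1 - x) ^ α * (1 + x) ^ β = 0)
    (z : Fin N → ℝ) (hzmono : StrictMono z)
    (hzroot : ∀ i, P.eval (z i) = 0)
    (hzmem : ∀ i, z i ∈ Set.Ioo (-1 : ℝ) 1) (i : Fin N) :
    (β + 1) / 2 / (1 + z i) - (α + 1) / 2 / (1 - z i) + ∑ j ∈ univ.erase i, 1 / (z i - z j) = 0 := by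
  have hdvd : (∏ j : Fin N, (Polynomial.X - Polynomial.C (z j))) ∣ P := by
    refine Finset.prod_dvd_of_coprime ?_ fun j _ => Polynomial.dvd_iff_isRoot.2 (hzroot j)
    exact (Polynomial.pairwise_coprime_X_sub_C hzmono.injective).set_pairwise _
  obtain ⟨Q, hQ⟩ := hdvd
  have hQ0 : Q ≠ 0 := by rintro rfl; simp at hQ; exact hP0 hQ
  have hD0 : (∏ j : Fin N, (Polynomial.X - Polynomial.C (z j))) ≠ 0 :=
    prod_ne_zero_iff.2 fun j _ => Polynomial.X_sub_C_ne_zero _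
  have hQd : Q.natDegree = 0 := by
    have := congrArg Polynomial.natDegree hQ
    rw [Polynomial.natDegree_mul hD0 hQ0, Polynomial.natDegree_finsetProd_X_sub_C_eq_card] at this
    simp at this
    omega
  obtain ⟨c, rfl⟩ := Polynomial.natDegree_eq_zero.1 hQd
  have hc : c ≠ 0 := by rintro rfl; simp at hQ0
  set D : Polynomial ℝ := ∏ j ∈ univ.erase i, (Polynomial.X - Polynomial.C (z j)) with hD
  have hne : ∀ j ∈ univ.erase i, z i - z j ≠ 0 := fun j hj =>
    sub_ne_zero.2 fun h => (Finset.ne_of_mem_erase hj) (hzmono.injective h).symm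
  have hDz : D.eval (z i) ≠ 0 := by
    rw [hD, Polynomial.eval_prod]
    exact prod_ne_zero_iff.2 fun j hj => by simpa using hne j hj
  have hder : D.derivative.eval (z i) = D.eval (z i) * ∑ j ∈ univ.erase i, 1 / (z i - z j) := by
    rw [hD, Polynomial.derivative_prod_finset, Polynomial.eval_finsetSum, mul_sum]
    refine sum_congr rfl fun j hj => ?_
    rw [← mul_prod_erase _ _ hj]
    have := hne j hj
    simp
    field_simp
  have hPG : P = (Polynomial.X - Polynomial.C (z i)) * (D * Polynomial.C c) := by
    rw [hQ, ← mul_prod_erase univ _ (mem_univ i), mul_assoc]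
  have := crit_poly hα hβ N P (D * Polynomial.C c) hPdeg hPorth (z i) (hzmem i) hPG
    (by simp [hDz, hc])
  simp only [Polynomial.derivative_mul, Polynomial.derivative_C, mul_zero, add_zero,
    Polynomial.eval_mul, Polynomial.eval_C, hder] at this
  set σ := ∑ j ∈ univ.erase i, 1 / (z i - z j)
  have h1 : 1 + z i ≠ 0 := by linarith [(hzmem i).1]
  have h2 : 1 - z i ≠ 0 := by linarith [(hzmem i).2]
  have h3 : D.eval (z i) * c ≠ 0 := mul_ne_zero hDz hc
  have h4 : (β + 1) * (1 - z i) - (α + 1) * (1 + z i) + 2 * (1 - z i ^ 2) * σ = 0 := by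
    apply mul_left_cancel₀ h3
    linear_combination this
  field_simp
  linear_combination h4

lemma pair_sum {N : ℕ} (z d : Fin N → ℝ) :
    ∑ p ∈ univ.filter (fun p : Fin N × Fin N => p.1 < p.2), (d p.2 - d p.1) / (z p.2 - z p.1)
      = ∑ i, d i * ∑ j ∈ univ.erase i, 1 / (z i - z j) := by
  have h1 : ∑ i, d i * ∑ j ∈ univ.erase i, 1 / (z i - z j)
      = ∑ p ∈ univ.filter (fun p : Fin N × Fin N => p.1 ≠ p.2), d p.1 / (z p.1 - z p.2) := by
    rw [sum_filter, Fintype.sum_prod_type]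
    refine sum_congr rfl fun i _ => ?_
    rw [mul_sum, ← sum_filter]
    refine sum_congr ?_ fun j _ => by ring
    ext j; simp [eq_comm]
  have h2 : univ.filter (fun p : Fin N × Fin N => p.1 ≠ p.2) =
      univ.filter (fun p : Fin N × Fin N => p.1 < p.2) ∪
      univ.filter (fun p : Fin N × Fin N => p.2 < p.1) := by
    ext p; simp [lt_or_lt_iff_ne]
  have h3 : ∑ p ∈ univ.filter (fun p : Fin N × Fin N => p.2 < p.1), d p.1 / (z p.1 - z p.2)
      = ∑ p ∈ univ.filter (fun p : Fin N × Fin N => p.1 < p.2), d p.2 / (z p.2 - z p.1) := by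
    refine sum_nbij' Prod.swap Prod.swap ?_ ?_ ?_ ?_ ?_ <;> simp
  rw [h1, h2, sum_union, h3, ← sum_add_distrib]
  · refine sum_congr rfl fun p _ => ?_
    rw [sub_div, ← neg_sub (z p.2) (z p.1), div_neg]
    ring
  · rw [disjoint_left]
    intro p hp hp'
    simp at hp hp'
    exact absurd hp (not_lt.2 hp'.le)

lemma rpow_le_aux {y z c : ℝ} (hy : 0 ≤ y) (hz : 0 < z) (hc : 0 < c) :
    y ^ c ≤ z ^ c * exp (c * ((y - z) / z)) := by
  have h : y ≤ z * exp ((y - z) / z) := by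
    have := add_one_le_exp ((y - z) / z)
    calc y = z * ((y - z) / z + 1) := by field_simp; ring
      _ ≤ _ := by gcongr
  calc y ^ c ≤ (z * exp ((y - z) / z)) ^ c := rpow_le_rpow hy h hc.le
    _ = _ := by rw [mul_rpow hz.le (exp_pos _).le, ← exp_mul, mul_comm c]

lemma rpow_lt_aux {y z c : ℝ} (hy : 0 ≤ y) (hz : 0 < z) (hc : 0 < c) (hne : y ≠ z) :
    y ^ c < z ^ c * exp (c * ((y - z) / z)) := by
  have h : y < z * exp ((y - z) / z) := by
    have := add_one_lt_exp (x := (y - z) / z) (div_ne_zero (sub_ne_zero.2 hne) hz.ne')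
    calc y = z * ((y - z) / z + 1) := by field_simp; ring
      _ < _ := by gcongr
  calc y ^ c < (z * exp ((y - z) / z)) ^ c := rpow_lt_rpow hy h hc
    _ = _ := by rw [mul_rpow hz.le (exp_pos _).le, ← exp_mul, mul_comm c]

lemma unique_max {N : ℕ} (p q : ℝ) (hp : 0 < p) (hq : 0 < q) (z y : Fin N → ℝ)
    (hzmono : StrictMono z) (hzmem : ∀ i, z i ∈ Set.Ioo (-1 : ℝ) 1)
    (hcrit : ∀ i, q / (1 + z i) - p / (1 - z i) + ∑ j ∈ univ.erase i, 1 / (z i - z j) = 0)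
    (hy : Monotone y) (hymem : ∀ i, y i ∈ Set.Icc (-1 : ℝ) 1) (hne : y ≠ z) :
    (∏ p ∈ univ.filter (fun p : Fin N × Fin N => p.1 < p.2), (y p.2 - y p.1)) *
      (∏ i, ((1 - y i) ^ p * (1 + y i) ^ q)) <
    (∏ p ∈ univ.filter (fun p : Fin N × Fin N => p.1 < p.2), (z p.2 - z p.1)) *
      (∏ i, ((1 - z i) ^ p * (1 + z i) ^ q)) := by
  have hz1 : ∀ i, 0 < 1 - z i := fun i => by linarith [(hzmem i).2]
  have hz2 : ∀ i, 0 < 1 + z i := fun i => by linarith [(hzmem i).1]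
  have hy1 : ∀ i, 0 ≤ 1 - y i := fun i => by linarith [(hymem i).2]
  have hy2 : ∀ i, 0 ≤ 1 + y i := fun i => by linarith [(hymem i).1]
  have hzz : ∀ r ∈ univ.filter (fun p : Fin N × Fin N => p.1 < p.2), 0 < z r.2 - z r.1 := by
    intro r hr
    exact sub_pos.2 (hzmono (by simpa using hr))
  have hyy : ∀ r ∈ univ.filter (fun p : Fin N × Fin N => p.1 < p.2), 0 ≤ y r.2 - y r.1 := by
    intro r hr
    exact sub_nonneg.2 (hy (by simpa using (mem_filter.1 hr).2.le))
  have hA : ∏ r ∈ univ.filter (fun p : Fin N × Fin N => p.1 < p.2), (y r.2 - y r.1) ≤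
      ∏ r ∈ univ.filter (fun p : Fin N × Fin N => p.1 < p.2), ((z r.2 - z r.1) *
        exp (((y r.2 - z r.2) - (y r.1 - z r.1)) / (z r.2 - z r.1))) := by
    refine prod_le_prod hyy fun r hr => ?_
    have := rpow_le_aux (hyy r hr) (hzz r hr) one_pos
    simp only [rpow_one, one_mul] at this
    have e : (y r.2 - z r.2) - (y r.1 - z r.1) = y r.2 - y r.1 - (z r.2 - z r.1) := by ring
    rwa [e]
  obtain ⟨k, hk⟩ := Function.ne_iff.1 hne
  -- strict upper bound by a positive product
  have hB1 : ∀ i, (1 - y i) ^ p * (1 + y i) ^ q ≤ ((1 - z i) ^ p * exp (p * (((1 - y i) - (1 - z i)) / (1 - z i)))) *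
      ((1 + z i) ^ q * exp (q * (((1 + y i) - (1 + z i)) / (1 + z i)))) := fun i =>
    mul_le_mul (rpow_le_aux (hy1 i) (hz1 i) hp) (rpow_le_aux (hy2 i) (hz2 i) hq)
      (rpow_nonneg (hy2 i) _) (mul_nonneg (rpow_nonneg (hz1 i).le _) (exp_pos _).le)
  have hB2 : (1 - y k) ^ p * (1 + y k) ^ q < ((1 - z k) ^ p * exp (p * (((1 - y k) - (1 - z k)) / (1 - z k)))) *
      ((1 + z k) ^ q * exp (q * (((1 + y k) - (1 + z k)) / (1 + z k)))) :=
    mul_lt_mul'' (rpow_lt_aux (hy1 k) (hz1 k) hp (by intro h; apply hk; linarith))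
      (rpow_lt_aux (hy2 k) (hz2 k) hq (by intro h; apply hk; linarith))
      (rpow_nonneg (hy1 k) _) (rpow_nonneg (hy2 k) _)
  have hBpos : ∀ i, 0 < ((1 - z i) ^ p * exp (p * (((1 - y i) - (1 - z i)) / (1 - z i)))) *
      ((1 + z i) ^ q * exp (q * (((1 + y i) - (1 + z i)) / (1 + z i)))) := fun i => by
    have := rpow_pos_of_pos (hz1 i) p
    have := rpow_pos_of_pos (hz2 i) q
    positivity
  have hB0 : ∀ i, 0 ≤ (1 - y i) ^ p * (1 + y i) ^ q := fun i =>
    mul_nonneg (rpow_nonneg (hy1 i) _) (rpow_nonneg (hy2 i) _)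
  have hB : ∏ i, ((1 - y i) ^ p * (1 + y i) ^ q) < ∏ i, (((1 - z i) ^ p * exp (p * (((1 - y i) - (1 - z i)) / (1 - z i)))) *
      ((1 + z i) ^ q * exp (q * (((1 + y i) - (1 + z i)) / (1 + z i))))) := by
    rw [← mul_prod_erase univ _ (mem_univ k), ← mul_prod_erase univ (fun i => ((1 - z i) ^ p * exp (p * (((1 - y i) - (1 - z i)) / (1 - z i)))) *
      ((1 + z i) ^ q * exp (q * (((1 + y i) - (1 + z i)) / (1 + z i))))) (mem_univ k)]
    refine (mul_le_mul_of_nonneg_left (prod_le_prod (fun i _ => hB0 i) fun i _ => hB1 i)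
      (hB0 k)).trans_lt ?_
    exact mul_lt_mul_of_pos_right hB2 (prod_pos fun i _ => hBpos i)
  have hApos : 0 < ∏ r ∈ univ.filter (fun p : Fin N × Fin N => p.1 < p.2), ((z r.2 - z r.1) *
        exp (((y r.2 - z r.2) - (y r.1 - z r.1)) / (z r.2 - z r.1))) :=
    prod_pos fun r hr => mul_pos (hzz r hr) (exp_pos _)
  refine (mul_lt_mul' hA hB (prod_nonneg fun i _ => hB0 i) hApos).trans_eq ?_
  have hsum : ∑ r ∈ univ.filter (fun p : Fin N × Fin N => p.1 < p.2),
      ((y r.2 - z r.2) - (y r.1 - z r.1)) / (z r.2 - z r.1) +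
      (∑ i, p * (((1 - y i) - (1 - z i)) / (1 - z i)) +
      ∑ i, q * (((1 + y i) - (1 + z i)) / (1 + z i))) = 0 := by
    rw [pair_sum z (fun i => y i - z i), ← sum_add_distrib, ← sum_add_distrib]
    refine sum_eq_zero fun i _ => ?_
    linear_combination (y i - z i) * hcrit i
  simp only [prod_mul_distrib, ← exp_sum]
  have hexp := congrArg exp hsum
  rw [exp_add, exp_add, exp_zero] at hexp
  linear_combination (∏ r ∈ univ.filter (fun p : Fin N × Fin N => p.1 < p.2), (z r.2 - z r.1)) *
    (∏ i, (1 - z i) ^ p) * (∏ i, (1 + z i) ^ q) * hexp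

theorem jacobi_ensemble_convergence_in_probability
    (N : ℕ) (hN : 1 ≤ N) (a b : ℝ) (ha : 0 ≤ a) (hb : 0 < b)
    (α β : ℝ) (hα : α = a + b - 1) (hβ : β = b - 1)
    (P : Polynomial ℝ) (hPdeg : P.natDegree = N)
    (hPorth : ∀ Q : Polynomial ℝ, Q.natDegree < N →
      ∫ x in Set.Ioo (-1 : ℝ) 1,
        P.eval x * Q.eval x * (1 - x) ^ α * (1 + x) ^ β = 0)
    (hPone : P.eval 1 = (∏ j ∈ Finset.range N, (α + 1 + j)) / (N.factorial : ℝ))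
    (z : Fin N → ℝ) (hzmono : StrictMono z)
    (hzroot : ∀ i, P.eval (z i) = 0)
    (hzmem : ∀ i, z i ∈ Set.Ioo (-1 : ℝ) 1)
    (A : Set (Fin N → ℝ))
    (hA : A = {x | Monotone x ∧ ∀ i, x i ∈ Set.Icc (-1 : ℝ) 1})
    (w : ℝ → (Fin N → ℝ) → ℝ)
    (hw : w = fun κ x =>
      (∏ p ∈ Finset.univ.filter (fun p : Fin N × Fin N => p.1 < p.2), (x p.2 - x p.1) ^ κ) *
      ∏ i, ((1 - x i) ^ (κ * (a + b) / 2 - 1 / 2) * (1 + x i) ^ (κ * b / 2 - 1 / 2)))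
    : ∀ ε : ℝ, 0 < ε →
      Tendsto (fun κ : ℝ =>
          (∫ x in {x ∈ A | ε < dist x z}, w κ x) / (∫ x in A, w κ x))
        atTop (𝓝 0) := by
  intro ε hε
  have hα1 : -1 < α := by linarith
  have hβ1 : -1 < β := by linarith
  have hP0 : P ≠ 0 := by rintro rfl; simp at hPdeg; omega
  have hab : 0 < a + b := by linarith
  set F : (Fin N → ℝ) → ℝ := fun x =>
    (∏ p ∈ Finset.univ.filter (fun p : Fin N × Fin N => p.1 < p.2), (x p.2 - x p.1)) *
      ∏ i, ((1 - x i) ^ ((a + b) / 2) * (1 + x i) ^ (b / 2)) with hFdef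
  set κ₀ : ℝ := 2 / b with hκ₀
  have hκ₀pos : 0 < κ₀ := by positivity
  have he1 : 0 ≤ κ₀ * (a + b) / 2 - 1 / 2 := by
    have : 1 ≤ κ₀ * (a + b) / 2 := by
      rw [hκ₀, div_mul_eq_mul_div, div_div, le_div_iff₀ (by positivity)]
      linarith
    linarith
  have he2 : 0 ≤ κ₀ * b / 2 - 1 / 2 := by
    have : κ₀ * b / 2 = 1 := by rw [hκ₀]; field_simp
    linarith
  have hcrit : ∀ i, b / 2 / (1 + z i) - (a + b) / 2 / (1 - z i) +
      ∑ j ∈ univ.erase i, 1 / (z i - z j) = 0 := by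
    intro i
    have := crit hα1 hβ1 N P hPdeg hP0 hPorth z hzmono hzroot hzmem i
    rwa [show β + 1 = b by linarith, show α + 1 = a + b by linarith] at this
  have hd : ∀ x ∈ A, ∀ r ∈ univ.filter (fun p : Fin N × Fin N => p.1 < p.2), 0 ≤ x r.2 - x r.1 := by
    intro x hx r hr
    rw [hA] at hx
    exact sub_nonneg.2 (hx.1 (mem_filter.1 hr).2.le)
  have h1 : ∀ x ∈ A, ∀ i, 0 ≤ 1 - x i := by
    intro x hx i
    rw [hA] at hx
    linarith [(hx.2 i).2]
  have h2 : ∀ x ∈ A, ∀ i, 0 ≤ 1 + x i := by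
    intro x hx i
    rw [hA] at hx
    linarith [(hx.2 i).1]
  have hzz : ∀ r ∈ univ.filter (fun p : Fin N × Fin N => p.1 < p.2), 0 < z r.2 - z r.1 := by
    intro r hr
    exact sub_pos.2 (hzmono (mem_filter.1 hr).2)
  have hz1 : ∀ i, 0 < 1 - z i := fun i => by linarith [(hzmem i).2]
  have hz2 : ∀ i, 0 < 1 + z i := fun i => by linarith [(hzmem i).1]
  have hAc : IsCompact A := by
    have : A = {x | Monotone x} ∩ Set.pi Set.univ (fun _ => Set.Icc (-1 : ℝ) 1) := by
      rw [hA]; ext x; simp only [Set.mem_inter_iff, Set.mem_pi, Set.mem_setOf_eq, Set.mem_univ, true_implies]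
    rw [this]
    refine (isCompact_univ_pi fun _ => isCompact_Icc).inter_left ?_
    have : {x : Fin N → ℝ | Monotone x} = ⋂ (i) (j) (_ : i ≤ j), {x | x i ≤ x j} := by
      ext x; simp [Monotone]
    rw [this]
    exact isClosed_iInter fun i => isClosed_iInter fun j => isClosed_iInter fun _ =>
      isClosed_le (continuous_apply i) (continuous_apply j)
  have hzA : z ∈ interior A := by
    rw [mem_interior_iff_mem_nhds, hA]
    have e1 : ∀ᶠ x in 𝓝 z, ∀ i, x i ∈ Set.Ioo (-1 : ℝ) 1 := by
      rw [eventually_all]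
      intro i
      exact (continuous_apply i).continuousAt.eventually_mem (isOpen_Ioo.mem_nhds (hzmem i))
    have e2 : ∀ᶠ x in 𝓝 z, ∀ i j, i < j → x i < x j := by
      rw [eventually_all]
      intro i
      rw [eventually_all]
      intro j
      by_cases hij : i < j
      · filter_upwards [(continuous_apply i).continuousAt.eventually_lt
          (continuous_apply j).continuousAt (hzmono hij)] with x hx _ using hx
      · exact Eventually.of_forall fun x h => absurd h hij
    filter_upwards [e1, e2] with x hx1 hx2
    exact ⟨StrictMono.monotone fun i j => hx2 i j, fun i => Set.Ioo_subset_Icc_self (hx1 i)⟩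
  have hFc : Continuous F := by
    refine Continuous.mul (by fun_prop) (continuous_finsetProd _ fun i _ => Continuous.mul ?_ ?_)
    · exact Continuous.rpow_const (by fun_prop) fun _ => Or.inr (by positivity)
    · exact Continuous.rpow_const (by fun_prop) fun _ => Or.inr (by positivity)
  have hWc : Continuous (w κ₀) := by
    rw [hw]
    refine Continuous.mul (continuous_finsetProd _ fun r _ => ?_)
      (continuous_finsetProd _ fun i _ => Continuous.mul ?_ ?_)
    · exact Continuous.rpow_const (by fun_prop) fun _ => Or.inr hκ₀pos.le
    · exact Continuous.rpow_const (by fun_prop) fun _ => Or.inr he1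
    · exact Continuous.rpow_const (by fun_prop) fun _ => Or.inr he2
  have hW0 : ∀ x ∈ A, 0 ≤ w κ₀ x := by
    intro x hx
    rw [hw]
    exact mul_nonneg (prod_nonneg fun r hr => rpow_nonneg (hd x hx r hr) _)
      (prod_nonneg fun i _ => mul_nonneg (rpow_nonneg (h1 x hx i) _) (rpow_nonneg (h2 x hx i) _))
  have hWz : 0 < w κ₀ z := by
    rw [hw]
    exact mul_pos (prod_pos fun r hr => rpow_pos_of_pos (hzz r hr) _)
      (prod_pos fun i _ => mul_pos (rpow_pos_of_pos (hz1 i) _) (rpow_pos_of_pos (hz2 i) _))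
  have hF0 : ∀ x ∈ A, 0 ≤ F x := by
    intro x hx
    exact mul_nonneg (prod_nonneg fun r hr => hd x hx r hr)
      (prod_nonneg fun i _ => mul_nonneg (rpow_nonneg (h1 x hx i) _) (rpow_nonneg (h2 x hx i) _))
  have hFz : 0 < F z := by
    exact mul_pos (prod_pos fun r hr => hzz r hr)
      (prod_pos fun i _ => mul_pos (rpow_pos_of_pos (hz1 i) _) (rpow_pos_of_pos (hz2 i) _))
  have hmax : ∀ y ∈ A, y ≠ z → F y < F z := by
    intro y hy hne
    rw [hA] at hy
    exact unique_max _ _ (by positivity) (by positivity) z y hzmono hzmem hcrit hy.1 hy.2 hne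
  have hfac : ∀ t, 0 < t → ∀ x ∈ A, w (t + κ₀) x = F x ^ t * w κ₀ x := by
    intro t ht x hx
    have g1 : ∀ r ∈ univ.filter (fun p : Fin N × Fin N => p.1 < p.2),
        (x r.2 - x r.1) ^ (t + κ₀) = (x r.2 - x r.1) ^ t * (x r.2 - x r.1) ^ κ₀ := fun r hr =>
      rpow_add_of_nonneg (hd x hx r hr) ht.le hκ₀pos.le
    have g2 : ∀ i, (1 - x i) ^ ((t + κ₀) * (a + b) / 2 - 1 / 2) =
        ((1 - x i) ^ ((a + b) / 2)) ^ t * (1 - x i) ^ (κ₀ * (a + b) / 2 - 1 / 2) := by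
      intro i
      rw [← rpow_mul (h1 x hx i), ← rpow_add_of_nonneg (h1 x hx i) (by positivity) he1]
      congr 1; ring
    have g3 : ∀ i, (1 + x i) ^ ((t + κ₀) * b / 2 - 1 / 2) =
        ((1 + x i) ^ (b / 2)) ^ t * (1 + x i) ^ (κ₀ * b / 2 - 1 / 2) := by
      intro i
      rw [← rpow_mul (h2 x hx i), ← rpow_add_of_nonneg (h2 x hx i) (by positivity) he2]
      congr 1; ring
    have g4 : F x ^ t = (∏ r ∈ univ.filter (fun p : Fin N × Fin N => p.1 < p.2), (x r.2 - x r.1) ^ t) *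
        ∏ i, (((1 - x i) ^ ((a + b) / 2)) ^ t * ((1 + x i) ^ (b / 2)) ^ t) := by
      have n1 : ∀ i ∈ univ, 0 ≤ (1 - x i) ^ ((a + b) / 2) * (1 + x i) ^ (b / 2) := fun i _ =>
        mul_nonneg (rpow_nonneg (h1 x hx i) _) (rpow_nonneg (h2 x hx i) _)
      rw [hFdef]
      simp only
      rw [mul_rpow (prod_nonneg fun r hr => hd x hx r hr) (prod_nonneg n1),
        ← Real.finsetProd_rpow _ _ (hd x hx), ← Real.finsetProd_rpow _ _ n1]
      congr 1
      exact prod_congr rfl fun i _ =>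
        mul_rpow (rpow_nonneg (h1 x hx i) _) (rpow_nonneg (h2 x hx i) _)
    rw [g4, hw]
    simp only
    rw [prod_congr rfl g1]
    simp only [g2, g3, prod_mul_distrib]
    ring
  have hL := (laplace_aux A hAc F (w κ₀) hFc hWc hF0 hW0 z hzA hFz hWz hmax ε hε).comp
    (tendsto_atTop_add_const_right atTop (-κ₀) tendsto_id)
  refine hL.congr' ?_
  filter_upwards [eventually_gt_atTop κ₀] with κ hκ
  have hAm : MeasurableSet A := hAc.isClosed.measurableSet
  have hSm : MeasurableSet {x ∈ A | ε < dist x z} :=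
    hAm.inter (isOpen_lt continuous_const (continuous_id.dist continuous_const)).measurableSet
  have hk : ∀ x ∈ A, F x ^ (κ + -κ₀) * w κ₀ x = w κ x := by
    intro x hx
    rw [← hfac (κ + -κ₀) (by linarith) x hx]
    congr 1; ring
  simp only [Function.comp_apply, id]
  rw [setIntegral_congr_fun hSm fun x hx => hk x hx.1, setIntegral_congr_fun hAm hk]
end

section
/- Let N ≥ 1, a ≥ 0, b > 0, and set α = a+b−1 and β = b−1. For each κ > 0 let X̃_κ be a random vector with distribution μ̃_κ (the trigonometric β-Jacobi ensemble), and let z_1 < ... < z_N be the ordered zeros of the Jacobi polynomial P_N^{(α,β)}. Then X̃_κ converges in probability as κ → ∞ to the point ((1/2)arccos(z_1), ..., (1/2)arccos(z_N)). -/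
open MeasureTheory Filter Real Finset Topology

lemma laplace_aux_s7 {N : ℕ} (K : Set (Fin N → ℝ)) (hK : IsCompact K) (V : (Fin N → ℝ) → ℝ)
    (hV : Continuous V) (hV0 : ∀ t ∈ K, 0 ≤ V t) (x0 : Fin N → ℝ) (hx0 : x0 ∈ interior K)
    (hpos : 0 < V x0) (hmax : ∀ t ∈ K, t ≠ x0 → V t < V x0) (ε : ℝ) (hε : 0 < ε) :
    Tendsto (fun κ : ℝ => (∫ t in {t ∈ K | ε < dist t x0}, V t ^ κ) / (∫ t in K, V t ^ κ))
      atTop (𝓝 0) := by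
  set S : Set (Fin N → ℝ) := {t ∈ K | ε < dist t x0} with hS
  have hSK : S ⊆ K := fun t ht => ht.1
  have hSm : MeasurableSet S :=
    hK.measurableSet.inter (isOpen_lt continuous_const (continuous_id.dist continuous_const)).measurableSet
  obtain ⟨m, hm0, hm1, hm⟩ : ∃ m, 0 < m ∧ m < V x0 ∧ ∀ t ∈ S, V t ≤ m := by
    have hC : IsCompact (K ∩ {t | ε ≤ dist t x0}) :=
      hK.inter_right (isClosed_le continuous_const (continuous_id.dist continuous_const))
    rcases (K ∩ {t | ε ≤ dist t x0}).eq_empty_or_nonempty with h | h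
    · refine ⟨V x0 / 2, by linarith, by linarith, fun t ht => ?_⟩
      have : t ∈ K ∩ {t | ε ≤ dist t x0} := ⟨ht.1, ht.2.le⟩
      simp [h] at this
    · obtain ⟨y, hy, hy'⟩ := hC.exists_isMaxOn h hV.continuousOn
      have hyx : y ≠ x0 := by
        rintro rfl
        have := hy.2
        simp at this
        linarith
      refine ⟨max (V y) (V x0 / 2), lt_max_of_lt_right (by linarith),
        max_lt (hmax y hy.1 hyx) (by linarith), fun t ht => le_max_of_le_left ?_⟩
      exact hy' (show t ∈ K ∩ {t | ε ≤ dist t x0} from ⟨ht.1, ht.2.le⟩)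
  obtain ⟨m', hmm', hm'⟩ := exists_between hm1
  have hm'0 : 0 < m' := hm0.trans hmm'
  let U : Set (Fin N → ℝ) := interior K ∩ {t | m' < V t}
  have hUo : IsOpen U := isOpen_interior.inter (isOpen_lt continuous_const hV)
  have hUK : U ⊆ K := fun t ht => interior_subset ht.1
  have hUfin : volume U ≠ ⊤ := ((measure_mono hUK).trans_lt hK.measure_lt_top).ne
  have hSfin : volume S ≠ ⊤ := ((measure_mono hSK).trans_lt hK.measure_lt_top).ne
  have hUpos : 0 < volume.real U :=
    ENNReal.toReal_pos (hUo.measure_pos volume ⟨x0, hx0, hm'⟩).ne' hUfin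
  have hInt : ∀ κ : ℝ, 0 < κ → IntegrableOn (fun t => V t ^ κ) K volume := fun κ hκ =>
    (hV.rpow_const (fun _ => Or.inr hκ.le)).continuousOn.integrableOn_compact hK
  have hden : ∀ κ : ℝ, 0 < κ → m' ^ κ * volume.real U ≤ ∫ t in K, V t ^ κ := by
    intro κ hκ
    calc m' ^ κ * volume.real U = ∫ t in U, m' ^ κ := by simp [mul_comm]
      _ ≤ ∫ t in U, V t ^ κ := by
        refine setIntegral_mono_on (integrableOn_const hUfin) ((hInt κ hκ).mono_set hUK)
          hUo.measurableSet fun t ht => ?_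
        exact Real.rpow_le_rpow hm'0.le (le_of_lt ht.2) hκ.le
      _ ≤ _ := by
        refine setIntegral_mono_set (hInt κ hκ) ?_ hUK.eventuallyLE
        filter_upwards [ae_restrict_mem hK.measurableSet] with t ht
        exact Real.rpow_nonneg (hV0 t ht) _
  have hnum : ∀ κ : ℝ, 0 < κ → ∫ t in S, V t ^ κ ≤ m ^ κ * volume.real S := by
    intro κ hκ
    calc ∫ t in S, V t ^ κ ≤ ∫ t in S, m ^ κ := by
          refine setIntegral_mono_on ((hInt κ hκ).mono_set hSK) (integrableOn_const hSfin)
            hSm fun t ht => ?_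
          exact Real.rpow_le_rpow (hV0 t ht.1) (hm t ht) hκ.le
      _ = _ := by simp [mul_comm]
  have hlim : Tendsto (fun κ : ℝ => (m / m') ^ κ * (volume.real S / volume.real U)) atTop (𝓝 0) := by
    have h := tendsto_rpow_atTop_of_base_lt_one (m / m') (by have := div_pos hm0 hm'0; linarith) ((div_lt_one hm'0).2 hmm')
    simpa using h.mul_const (volume.real S / volume.real U)
  refine tendsto_of_tendsto_of_tendsto_of_le_of_le' tendsto_const_nhds hlim ?_ ?_
  · filter_upwards [eventually_gt_atTop 0] with κ hκ
    exact div_nonneg (setIntegral_nonneg hSm fun t ht => Real.rpow_nonneg (hV0 t ht.1) _)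
      (setIntegral_nonneg hK.measurableSet fun t ht => Real.rpow_nonneg (hV0 t ht) _)
  · filter_upwards [eventually_gt_atTop 0] with κ hκ
    have h1 : 0 < m' ^ κ * volume.real U := mul_pos (Real.rpow_pos_of_pos hm'0 _) hUpos
    calc _ ≤ (m ^ κ * volume.real S) / (m' ^ κ * volume.real U) := by
          apply div_le_div₀ _ (hnum κ hκ) h1 (hden κ hκ)
          exact mul_nonneg (Real.rpow_nonneg hm0.le _) measureReal_nonneg
      _ = _ := by rw [Real.div_rpow hm0.le hm'0.le]; field_simp

lemma jac_int (p q : ℝ) (hp : 0 < p) (hq : 0 < q) (G : ℝ → ℝ) (hG : Continuous G) :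
    IntervalIntegrable (fun x => G x * (1 - x) ^ (p - 1) * (1 + x) ^ (q - 1)) volume (-1) 1 := by
  have h1 : IntervalIntegrable (fun x : ℝ => (1 - x) ^ (p - 1)) volume 0 1 := by
    have := (intervalIntegral.intervalIntegrable_rpow' (a := 1) (b := 0) (r := p - 1) (by linarith)).comp_sub_left 1
    simpa using this
  have h2 : IntervalIntegrable (fun x : ℝ => (1 + x) ^ (q - 1)) volume (-1) 0 := by
    have := (intervalIntegral.intervalIntegrable_rpow' (a := 0) (b := 1) (r := q - 1) (by linarith)).comp_add_left 1
    simpa using this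
  refine IntervalIntegrable.trans (b := 0) ?_ ?_
  · refine h2.continuousOn_mul (hG.continuousOn.mul ?_)
    refine ContinuousOn.rpow_const (by fun_prop) fun x hx => Or.inl ?_
    rw [Set.uIcc_of_le (by norm_num)] at hx
    have := hx.2
    linarith
  · have : (fun x => G x * (1 - x) ^ (p - 1) * (1 + x) ^ (q - 1)) =
      fun x => (G x * (1 + x) ^ (q - 1)) * (1 - x) ^ (p - 1) := by ext; ring
    rw [this]
    refine h1.continuousOn_mul (hG.continuousOn.mul ?_)
    refine ContinuousOn.rpow_const (by fun_prop) fun x hx => Or.inl ?_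
    rw [Set.uIcc_of_le (by norm_num)] at hx
    have := hx.1
    linarith

lemma jac_ftc_s7 (p q : ℝ) (hp : 0 < p) (hq : 0 < q) (G : Polynomial ℝ) :
    ∫ x in Set.Ioo (-1 : ℝ) 1, (((1 - x ^ 2) * G.derivative.eval x +
      (q * (1 - x) - p * (1 + x)) * G.eval x)) * (1 - x) ^ (p - 1) * (1 + x) ^ (q - 1) = 0 := by
  rw [← integral_Ioc_eq_integral_Ioo, ← intervalIntegral.integral_of_le (by norm_num)]
  rw [intervalIntegral.integral_eq_sub_of_hasDerivAt_of_le (by norm_num)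
    (f := fun x => G.eval x * (1 - x) ^ p * (1 + x) ^ q)]
  · simp [hp.ne', hq.ne']
  · refine (ContinuousOn.mul G.continuous.continuousOn ?_).mul ?_
    · exact ContinuousOn.rpow_const (by fun_prop) fun x hx => Or.inr hp.le
    · exact ContinuousOn.rpow_const (by fun_prop) fun x hx => Or.inr hq.le
  · intro x hx
    have h1 : 0 < 1 - x := by linarith [hx.2]
    have h2 : 0 < 1 + x := by linarith [hx.1]
    have d1 := ((hasDerivAt_id x).const_sub 1).rpow_const (p := p) (Or.inl h1.ne')
    have d2 := ((hasDerivAt_id x).const_add 1).rpow_const (p := q) (Or.inl h2.ne')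
    have d := ((G.hasDerivAt x).mul d1).mul d2
    refine d.congr_deriv ?_
    simp only [id, Pi.mul_apply]
    have e1 : (1 - x) ^ p = (1 - x) ^ (p - 1) * (1 - x) := by
      rw [← Real.rpow_add_one h1.ne']; simp
    have e2 : (1 + x) ^ q = (1 + x) ^ (q - 1) * (1 + x) := by
      rw [← Real.rpow_add_one h2.ne']; simp
    rw [e1, e2]
    ring
  · exact jac_int p q hp hq _ (by fun_prop)

lemma jac_pos (p q : ℝ) (hp : 0 < p) (hq : 0 < q) (Q : Polynomial ℝ) (hQ : Q ≠ 0) :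
    0 < ∫ x in Set.Ioo (-1 : ℝ) 1, (Q.eval x) ^ 2 * (1 - x) ^ (p - 1) * (1 + x) ^ (q - 1) := by
  have hi := jac_int p q hp hq (fun x => (Q.eval x) ^ 2) (by fun_prop)
  rw [intervalIntegrable_iff_integrableOn_Ioo_of_le (by norm_num)] at hi
  rw [setIntegral_pos_iff_support_of_nonneg_ae _ hi]
  · have hsub : Set.Ioo (-1 : ℝ) 1 \ (Q.roots.toFinset : Set ℝ) ⊆
      Function.support (fun x => (Q.eval x) ^ 2 * (1 - x) ^ (p - 1) * (1 + x) ^ (q - 1)) ∩ Set.Ioo (-1) 1 := by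
      rintro x ⟨hx, hx'⟩
      refine ⟨?_, hx⟩
      have h1 : 0 < 1 - x := by linarith [hx.2]
      have h2 : 0 < 1 + x := by linarith [hx.1]
      have : Q.eval x ≠ 0 := by simpa [hQ] using hx'
      rw [Function.mem_support]
      have := Real.rpow_pos_of_pos h1 (p - 1)
      have := Real.rpow_pos_of_pos h2 (q - 1)
      positivity
    refine lt_of_lt_of_le ?_ (measure_mono hsub)
    rw [measure_sdiff_null (Finset.measure_zero _ _)]
    simp
  · filter_upwards [ae_restrict_mem measurableSet_Ioo] with x hx
    have h1 : 0 < 1 - x := by linarith [hx.2]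
    have h2 : 0 < 1 + x := by linarith [hx.1]
    have := Real.rpow_pos_of_pos h1 (p - 1)
    have := Real.rpow_pos_of_pos h2 (q - 1)
    simp only [Pi.zero_apply]
    positivity

open Polynomial in
lemma jac_crit (N : ℕ) (p q : ℝ) (hp : 0 < p) (hq : 0 < q) (P Q : Polynomial ℝ) (y : ℝ)
    (hPQ : P = (X - C y) * Q) (hQd : Q.natDegree < N) (hQy : Q ≠ 0)
    (hPorth : ∀ Q : Polynomial ℝ, Q.natDegree < N →
      ∫ x in Set.Ioo (-1 : ℝ) 1,
        P.eval x * Q.eval x * (1 - x) ^ (p - 1) * (1 + x) ^ (q - 1) = 0) :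
    2 * (1 - y ^ 2) * Q.derivative.eval y + (q * (1 - y) - p * (1 + y)) * Q.eval y = 0 := by
  have hInt : ∀ R : Polynomial ℝ, IntegrableOn
      (fun x => R.eval x * (1 - x) ^ (p - 1) * (1 + x) ^ (q - 1)) (Set.Ioo (-1) 1) volume := by
    intro R
    have := jac_int p q hp hq (fun x => R.eval x) (by fun_prop)
    rwa [intervalIntegrable_iff_integrableOn_Ioo_of_le (by norm_num)] at this
  -- evaluation functional
  have key : ∀ T : Polynomial ℝ, T.natDegree ≤ N →
      ∫ x in Set.Ioo (-1 : ℝ) 1, (T * Q).eval x * (1 - x) ^ (p - 1) * (1 + x) ^ (q - 1) =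
      T.eval y * ∫ x in Set.Ioo (-1 : ℝ) 1, Q.eval x * (1 - x) ^ (p - 1) * (1 + x) ^ (q - 1) := by
    intro T hT
    have hdeg : (T /ₘ (X - C y)).natDegree < N := by
      rw [natDegree_divByMonic _ (monic_X_sub_C y)]
      simp only [natDegree_X_sub_C]
      omega
    have h0 := hPorth _ hdeg
    have hTe : T = C (T.eval y) + (X - C y) * (T /ₘ (X - C y)) := by
      conv_lhs => rw [← modByMonic_add_div T (X - C y), modByMonic_X_sub_C_eq_C_eval]
    have : ∀ x, (T * Q).eval x * (1 - x) ^ (p - 1) * (1 + x) ^ (q - 1) =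
        T.eval y * (Q.eval x * (1 - x) ^ (p - 1) * (1 + x) ^ (q - 1)) +
        (P * (T /ₘ (X - C y))).eval x * (1 - x) ^ (p - 1) * (1 + x) ^ (q - 1) := by
      intro x
      have e : T.eval x = T.eval y + (x - y) * (T /ₘ (X - C y)).eval x := by
        have := congrArg (Polynomial.eval x) hTe
        simpa using this
      rw [eval_mul, eval_mul, hPQ, e]
      simp
      ring
    simp_rw [this]
    rw [integral_add ((hInt Q).const_mul _) (hInt _), integral_const_mul]
    simp_rw [eval_mul]
    rw [h0, add_zero]
  have h1 := key Q hQd.le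
  have h2 := jac_pos p q hp hq Q hQy
  have hne : (∫ x in Set.Ioo (-1 : ℝ) 1, Q.eval x * (1 - x) ^ (p - 1) * (1 + x) ^ (q - 1)) ≠ 0 := by
    intro h
    rw [h, mul_zero] at h1
    simp_rw [eval_mul, ← sq] at h1
    linarith
  let T : Polynomial ℝ := C 2 * (1 - X ^ 2) * derivative Q + (C q * (1 - X) - C p * (1 + X)) * Q
  have hTd : T.natDegree ≤ N := by
    by_cases hQ0 : Q.natDegree = 0
    · have : derivative Q = 0 := by
        rw [eq_C_of_natDegree_eq_zero hQ0]; simp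
      simp only [T, this, mul_zero, zero_add]
      refine natDegree_mul_le.trans ?_
      have : (C q * (1 - X) - C p * (1 + X)).natDegree ≤ 1 := by compute_degree
      omega
    · have h3 := natDegree_derivative_lt hQ0
      refine natDegree_add_le_of_degree_le (natDegree_mul_le.trans ?_) (natDegree_mul_le.trans ?_)
      · have : (C 2 * (1 - X ^ 2) : ℝ[X]).natDegree ≤ 2 := by compute_degree
        omega
      · have : (C q * (1 - X) - C p * (1 + X)).natDegree ≤ 1 := by compute_degree
        omega
  have h3 := key T hTd
  have h4 := jac_ftc_s7 p q hp hq (Q ^ 2)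
  have h5 : T.eval y = 0 := by
    have h6 : (∫ x in Set.Ioo (-1 : ℝ) 1, (T * Q).eval x * (1 - x) ^ (p - 1) * (1 + x) ^ (q - 1)) = 0 := by
      rw [← h4]
      congr 1
      ext x
      have : (T * Q).eval x = (1 - x ^ 2) * (derivative (Q ^ 2)).eval x +
          (q * (1 - x) - p * (1 + x)) * (Q ^ 2).eval x := by
        simp [T, derivative_pow]
        ring
      rw [this]
    rw [h6] at h3
    exact (mul_eq_zero.1 h3.symm).resolve_right hne
  simpa [T] using h5

lemma sum_pairs_lt {N : ℕ} (z d : Fin N → ℝ) :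
    ∑ p ∈ Finset.univ.filter (fun p : Fin N × Fin N => p.1 < p.2), (d p.2 - d p.1) / (z p.2 - z p.1)
      = ∑ i, d i * ∑ j, 1 / (z i - z j) := by
  have h1 : ∑ i, d i * ∑ j, 1 / (z i - z j) = ∑ p : Fin N × Fin N, d p.1 / (z p.1 - z p.2) := by
    rw [Fintype.sum_prod_type]
    refine Finset.sum_congr rfl fun i _ => ?_
    rw [Finset.mul_sum]
    refine Finset.sum_congr rfl fun j _ => by ring
  have h2 : ∑ p : Fin N × Fin N, d p.1 / (z p.1 - z p.2) =
      ∑ p : Fin N × Fin N, ((if p.1 < p.2 then d p.1 / (z p.1 - z p.2) else 0) +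
        (if p.2 < p.1 then d p.1 / (z p.1 - z p.2) else 0)) := by
    refine Finset.sum_congr rfl fun p _ => ?_
    rcases lt_trichotomy p.1 p.2 with h | h | h
    · simp [h, h.le]
    · simp [h]
    · simp [h, h.le]
  have h3 : ∑ p : Fin N × Fin N, (if p.2 < p.1 then d p.1 / (z p.1 - z p.2) else 0) =
      ∑ p : Fin N × Fin N, (if p.1 < p.2 then d p.2 / (z p.2 - z p.1) else 0) :=
    Fintype.sum_equiv (Equiv.prodComm _ _) _ _ (fun p => by
      simp only [Equiv.prodComm_apply, Prod.fst_swap, Prod.snd_swap]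
      exact if_congr Iff.rfl rfl rfl)
  rw [h1, h2, Finset.sum_add_distrib, h3, ← Finset.sum_add_distrib, Finset.sum_filter]
  refine Finset.sum_congr rfl fun p _ => ?_
  split_ifs with h
  · have : z p.1 - z p.2 = -(z p.2 - z p.1) := by ring
    rw [this, div_neg]; ring
  · simp

lemma log_le_tangent (u v : ℝ) (hu : 0 < u) (hv : 0 < v) : Real.log u ≤ Real.log v + (u - v) / v := by
  have := Real.log_le_sub_one_of_pos (div_pos hu hv)
  rw [Real.log_div hu.ne' hv.ne'] at this
  have h : (u - v) / v = u / v - 1 := by field_simp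
  linarith

lemma log_lt_tangent (u v : ℝ) (hu : 0 < u) (hv : 0 < v) (h : u ≠ v) :
    Real.log u < Real.log v + (u - v) / v := by
  have := Real.log_lt_sub_one_of_pos (div_pos hu hv) (by rwa [Ne, div_eq_one_iff_eq hv.ne'])
  rw [Real.log_div hu.ne' hv.ne'] at this
  have h : (u - v) / v = u / v - 1 := by field_simp
  linarith

/-- The energy inequality in the algebraic coordinates. -/
lemma energy_lt {N : ℕ} (p q : ℝ) (hp : 0 < p) (hq : 0 < q) (z x : Fin N → ℝ)
    (hz : StrictMono z) (hx : StrictMono x) (hz1 : ∀ i, z i ∈ Set.Ioo (-1 : ℝ) 1)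
    (hx1 : ∀ i, x i ∈ Set.Ioo (-1 : ℝ) 1) (hne : x ≠ z)
    (hst : ∀ i, 2 * ∑ j, 1 / (z i - z j) - p / (1 - z i) + q / (1 + z i) = 0) :
    (∑ r ∈ Finset.univ.filter (fun r : Fin N × Fin N => r.1 < r.2), Real.log (x r.2 - x r.1)) +
      ∑ i, (p / 2 * Real.log (1 - x i) + q / 2 * Real.log (1 + x i)) <
    (∑ r ∈ Finset.univ.filter (fun r : Fin N × Fin N => r.1 < r.2), Real.log (z r.2 - z r.1)) +
      ∑ i, (p / 2 * Real.log (1 - z i) + q / 2 * Real.log (1 + z i)) := by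
  have A : (∑ r ∈ Finset.univ.filter (fun r : Fin N × Fin N => r.1 < r.2), Real.log (x r.2 - x r.1)) ≤
      (∑ r ∈ Finset.univ.filter (fun r : Fin N × Fin N => r.1 < r.2), Real.log (z r.2 - z r.1)) +
      ∑ i, (x i - z i) * ∑ j, 1 / (z i - z j) := by
    rw [← sum_pairs_lt z (fun i => x i - z i), ← Finset.sum_add_distrib]
    refine Finset.sum_le_sum fun r hr => ?_
    have hr' : r.1 < r.2 := by simpa using hr
    have := log_le_tangent (x r.2 - x r.1) (z r.2 - z r.1) (sub_pos.2 (hx hr')) (sub_pos.2 (hz hr'))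
    refine this.trans_eq ?_
    congr 2
    ring
  have B : ∑ i, (p / 2 * Real.log (1 - x i) + q / 2 * Real.log (1 + x i)) <
      ∑ i, (p / 2 * Real.log (1 - z i) + q / 2 * Real.log (1 + z i)) +
        ∑ i, ((x i - z i) / 2 * (- p / (1 - z i) + q / (1 + z i))) := by
    rw [← Finset.sum_add_distrib (f := fun i => p / 2 * Real.log (1 - z i) + q / 2 * Real.log (1 + z i))]
    have e : ∀ i, (p / 2 * Real.log (1 - z i) + q / 2 * Real.log (1 + z i)) +
        (x i - z i) / 2 * (- p / (1 - z i) + q / (1 + z i)) =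
        p / 2 * (Real.log (1 - z i) + ((1 - x i) - (1 - z i)) / (1 - z i)) +
        q / 2 * (Real.log (1 + z i) + ((1 + x i) - (1 + z i)) / (1 + z i)) := fun i => by ring
    have c : ∀ i, 0 < 1 - z i ∧ 0 < 1 + z i ∧ 0 < 1 - x i ∧ 0 < 1 + x i := fun i =>
      ⟨by linarith [(hz1 i).2], by linarith [(hz1 i).1], by linarith [(hx1 i).2], by linarith [(hx1 i).1]⟩
    obtain ⟨k, hk⟩ := Function.ne_iff.1 hne
    refine Finset.sum_lt_sum (fun i _ => ?_) ⟨k, Finset.mem_univ _, ?_⟩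
    · obtain ⟨h1, h2, h3, h4⟩ := c i
      rw [e]
      exact add_le_add (mul_le_mul_of_nonneg_left (log_le_tangent _ _ h3 h1) (by positivity))
        (mul_le_mul_of_nonneg_left (log_le_tangent _ _ h4 h2) (by positivity))
    · obtain ⟨h1, h2, h3, h4⟩ := c k
      rw [e]
      exact add_lt_add_of_le_of_lt (mul_le_mul_of_nonneg_left (log_le_tangent _ _ h3 h1) (by positivity))
        (mul_lt_mul_of_pos_left (log_lt_tangent _ _ h4 h2 (by simpa using hk)) (by positivity))
  have E : ∑ i, (x i - z i) * ∑ j, 1 / (z i - z j) +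
      ∑ i, (x i - z i) / 2 * (- p / (1 - z i) + q / (1 + z i)) = 0 := by
    rw [← Finset.sum_add_distrib]
    refine Finset.sum_eq_zero fun i _ => ?_
    have := hst i
    linear_combination (x i - z i) / 2 * this
  linarith

open Polynomial in
lemma jac_factor (N : ℕ) (P : Polynomial ℝ) (hPdeg : P.natDegree = N)
    (z : Fin N → ℝ) (hz : StrictMono z) (hzroot : ∀ i, P.eval (z i) = 0) :
    P = C P.leadingCoeff * ∏ i, (X - C (z i)) := by
  by_cases hP : P = 0
  · simp [hP]
  have h1 : (∏ i, (X - C (z i))) ∣ P := by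
    refine Finset.prod_dvd_of_coprime ?_ (fun i _ => dvd_iff_isRoot.2 (hzroot i))
    intro i _ j _ hij
    exact pairwise_coprime_X_sub_C hz.injective hij
  have hm : (∏ i, (X - C (z i))).Monic := monic_prod_of_monic _ _ fun i _ => monic_X_sub_C _
  have hd : (∏ i, (X - C (z i))).natDegree = N := by
    rw [natDegree_prod_of_monic _ _ fun i _ => monic_X_sub_C _]; simp
  rw [mul_comm]
  exact eq_mul_leadingCoeff_of_monic_of_dvd_of_natDegree_le hm h1 (by omega)

open Polynomial in
lemma log_der (N : ℕ) (z : Fin N → ℝ) (hz : StrictMono z) (c : ℝ) (i : Fin N) :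
    (derivative (C c * ∏ j ∈ Finset.univ.erase i, (X - C (z j)))).eval (z i) =
    (C c * ∏ j ∈ Finset.univ.erase i, (X - C (z j))).eval (z i) * ∑ j, 1 / (z i - z j) := by
  have h0 : ∑ j, 1 / (z i - z j) = ∑ j ∈ Finset.univ.erase i, 1 / (z i - z j) := by
    rw [← Finset.add_sum_erase _ _ (Finset.mem_univ i)]; simp
  rw [h0, derivative_C_mul, derivative_prod_finset, eval_mul, eval_mul, mul_assoc, eval_finsetSum]
  congr 1
  rw [Finset.mul_sum]
  refine Finset.sum_congr rfl fun j hj => ?_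
  rw [← Finset.mul_prod_erase _ _ hj]
  have : z i - z j ≠ 0 := sub_ne_zero.2 (fun h => (Finset.ne_of_mem_erase hj) (hz.injective h).symm)
  simp
  field_simp

/-- The weight with exponent one. -/
noncomputable def jacV (N : ℕ) (a b : ℝ) (t : Fin N → ℝ) : ℝ :=
  (∏ p ∈ Finset.univ.filter (fun p : Fin N × Fin N => p.1 < p.2),
    (Real.cos (2 * t p.2) - Real.cos (2 * t p.1))) *
  ∏ i, (Real.sin (t i) ^ a * Real.sin (2 * t i) ^ b)

lemma jacV_log (N : ℕ) (a b : ℝ) (t : Fin N → ℝ) (ht : StrictAnti t)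
    (h1 : ∀ i, t i ∈ Set.Ioo (0 : ℝ) (π / 2)) :
    0 < jacV N a b t ∧ Real.log (jacV N a b t) =
    (∑ r ∈ Finset.univ.filter (fun r : Fin N × Fin N => r.1 < r.2),
        Real.log (Real.cos (2 * t r.2) - Real.cos (2 * t r.1))) +
      ∑ i, ((a + b) / 2 * Real.log (1 - Real.cos (2 * t i)) + b / 2 * Real.log (1 + Real.cos (2 * t i)))
      - N * (a / 2 * Real.log 2) := by
  have hc : ∀ r ∈ Finset.univ.filter (fun r : Fin N × Fin N => r.1 < r.2),
      0 < Real.cos (2 * t r.2) - Real.cos (2 * t r.1) := by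
    intro r hr
    have hr' : r.1 < r.2 := by simpa using hr
    have := ht hr'
    exact sub_pos.2 (Real.cos_lt_cos_of_nonneg_of_le_pi (by linarith [(h1 r.2).1])
      (by linarith [(h1 r.1).2]) (by linarith))
  have hs : ∀ i, 0 < Real.sin (t i) := fun i =>
    Real.sin_pos_of_pos_of_lt_pi (h1 i).1 (by linarith [(h1 i).2, Real.pi_pos])
  have hs2 : ∀ i, 0 < Real.sin (2 * t i) := fun i =>
    Real.sin_pos_of_pos_of_lt_pi (by linarith [(h1 i).1]) (by linarith [(h1 i).2, Real.pi_pos])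
  have hf : ∀ i, 0 < Real.sin (t i) ^ a * Real.sin (2 * t i) ^ b := fun i =>
    mul_pos (Real.rpow_pos_of_pos (hs i) _) (Real.rpow_pos_of_pos (hs2 i) _)
  have p1 := Finset.prod_pos hc
  have p2 : 0 < ∏ i, (Real.sin (t i) ^ a * Real.sin (2 * t i) ^ b) := Finset.prod_pos fun i _ => hf i
  refine ⟨mul_pos p1 p2, ?_⟩
  unfold jacV
  rw [Real.log_mul p1.ne' p2.ne', Real.log_prod fun r hr => (hc r hr).ne',
    Real.log_prod fun i _ => (hf i).ne', add_sub_assoc]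
  congr 1
  have : (N : ℝ) * (a / 2 * Real.log 2) = ∑ i : Fin N, a / 2 * Real.log 2 := by simp
  rw [this, ← Finset.sum_sub_distrib]
  refine Finset.sum_congr rfl fun i _ => ?_
  rw [Real.log_mul (Real.rpow_pos_of_pos (hs i) _).ne' (Real.rpow_pos_of_pos (hs2 i) _).ne',
    Real.log_rpow (hs i), Real.log_rpow (hs2 i)]
  have hcos : 0 < Real.cos (t i) :=
    Real.cos_pos_of_mem_Ioo ⟨by linarith [(h1 i).1, Real.pi_pos], (h1 i).2⟩
  have e1 : 1 - Real.cos (2 * t i) = 2 * Real.sin (t i) ^ 2 := by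
    rw [Real.cos_two_mul, Real.cos_sq']; ring
  have e2 : 1 + Real.cos (2 * t i) = 2 * Real.cos (t i) ^ 2 := by
    rw [Real.cos_two_mul]; ring
  have hsi := (hs i).ne'
  rw [e1, e2, Real.sin_two_mul, Real.log_mul (by positivity) hcos.ne', Real.log_mul two_ne_zero hsi,
    Real.log_mul two_ne_zero (by positivity), Real.log_mul two_ne_zero (by positivity),
    Real.log_pow, Real.log_pow]
  push_cast
  ring

theorem trig_jacobi_ensemble_convergence_in_probability
    (N : ℕ) (hN : 1 ≤ N) (a b : ℝ) (ha : 0 ≤ a) (hb : 0 < b)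
    (α β : ℝ) (hα : α = a + b - 1) (hβ : β = b - 1)
    (P : Polynomial ℝ) (hPdeg : P.natDegree = N)
    (hPorth : ∀ Q : Polynomial ℝ, Q.natDegree < N →
      ∫ x in Set.Ioo (-1 : ℝ) 1,
        P.eval x * Q.eval x * (1 - x) ^ α * (1 + x) ^ β = 0)
    (hPone : P.eval 1 = (∏ j ∈ Finset.range N, (α + 1 + j)) / (N.factorial : ℝ))
    (z : Fin N → ℝ) (hzmono : StrictMono z)
    (hzroot : ∀ i, P.eval (z i) = 0)
    (hzmem : ∀ i, z i ∈ Set.Ioo (-1 : ℝ) 1)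
    (At : Set (Fin N → ℝ))
    (hAt : At = {t | Antitone t ∧ ∀ i, t i ∈ Set.Icc (0 : ℝ) (π / 2)})
    (w : ℝ → (Fin N → ℝ) → ℝ)
    (hw : w = fun κ t =>
      (∏ p ∈ Finset.univ.filter (fun p : Fin N × Fin N => p.1 < p.2),
        (Real.cos (2 * t p.2) - Real.cos (2 * t p.1)) ^ κ) *
      ∏ i, (Real.sin (t i) ^ (κ * a) * Real.sin (2 * t i) ^ (κ * b)))
    : ∀ ε : ℝ, 0 < ε →
      Tendsto (fun κ : ℝ =>
          (∫ t in {t ∈ At | ε < dist t (fun i => Real.arccos (z i) / 2)}, w κ t) /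
            (∫ t in At, w κ t))
        atTop (𝓝 0) := by
  
  have hp : 0 < a + b := by linarith
  subst hα hβ
  have hz2 : ∀ i, Real.cos (2 * (Real.arccos (z i) / 2)) = z i := fun i => by
    rw [mul_div_cancel₀ _ two_ne_zero, Real.cos_arccos (hzmem i).1.le (hzmem i).2.le]
  -- Stieltjes relations
  have hst : ∀ i, 2 * ∑ j, 1 / (z i - z j) - (a + b) / (1 - z i) + b / (1 + z i) = 0 := by
    intro i
    have hP0 : P.leadingCoeff ≠ 0 := by
      rw [Ne, Polynomial.leadingCoeff_eq_zero]
      rintro rfl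
      simp at hPdeg
      omega
    set Q : Polynomial ℝ := Polynomial.C P.leadingCoeff *
      ∏ j ∈ Finset.univ.erase i, (Polynomial.X - Polynomial.C (z j)) with hQ
    have hQd : Q.natDegree < N := by
      rw [hQ, Polynomial.natDegree_C_mul hP0,
        Polynomial.natDegree_prod_of_monic _ _ fun i _ => Polynomial.monic_X_sub_C _]
      simp
      omega
    have hPQ : P = (Polynomial.X - Polynomial.C (z i)) * Q := by
      rw [hQ, mul_left_comm, Finset.mul_prod_erase _ (fun j => Polynomial.X - Polynomial.C (z j))
        (Finset.mem_univ i)]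
      exact jac_factor N P hPdeg z hzmono hzroot
    have hQz : Q.eval (z i) ≠ 0 := by
      rw [hQ, Polynomial.eval_mul, Polynomial.eval_prod, Polynomial.eval_C]
      refine mul_ne_zero hP0 (Finset.prod_ne_zero_iff.2 fun j hj => ?_)
      simp only [Polynomial.eval_sub, Polynomial.eval_X, Polynomial.eval_C]
      exact sub_ne_zero.2 (fun h => (Finset.ne_of_mem_erase hj) (hzmono.injective h).symm)
    have hQ0 : Q ≠ 0 := by
      intro h
      rw [h] at hQz
      simp at hQz
    have h := jac_crit N (a + b) b hp hb P Q (z i) hPQ hQd hQ0 hPorth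
    have hl : Q.derivative.eval (z i) = Q.eval (z i) * ∑ j, 1 / (z i - z j) :=
      log_der N z hzmono _ i
    rw [hl] at h
    have n1 : 1 - z i ≠ 0 := by linarith [(hzmem i).2]
    have n2 : 1 + z i ≠ 0 := by linarith [(hzmem i).1]
    generalize ∑ j, 1 / (z i - z j) = S at h ⊢
    have h' : Q.eval (z i) *
        (2 * (1 - z i ^ 2) * S + (b * (1 - z i) - (a + b) * (1 + z i))) = 0 := by
      rw [← h]; ring
    have h'' := (mul_eq_zero.1 h').resolve_left hQz
    field_simp
    linarith
  -- the maximal point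
  set x0 : Fin N → ℝ := fun i => Real.arccos (z i) / 2 with hx0
  have hx0I : ∀ i, x0 i ∈ Set.Ioo (0 : ℝ) (π / 2) := fun i => by
    have h1 := Real.arccos_pos.2 (hzmem i).2
    have h2 : Real.arccos (z i) < π := by
      refine lt_of_le_of_ne (Real.arccos_le_pi _) fun h => ?_
      have := Real.arccos_eq_pi.1 h
      linarith [(hzmem i).1]
    exact ⟨by simp only [hx0]; linarith, by simp only [hx0]; linarith⟩
  have hx0A : StrictAnti x0 := fun i j hij => by
    have := Real.arccos_lt_arccos (hzmem i).1.le (hzmono hij) (hzmem j).2.le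
    simp only [hx0]
    linarith
  have hAt' : At = {t | Antitone t} ∩ Set.pi Set.univ (fun _ => Set.Icc (0 : ℝ) (π / 2)) := by
    rw [hAt]; ext t; simp only [Set.mem_inter_iff, Set.mem_pi, Set.mem_univ, true_implies]; rfl
  have hAtc : IsCompact At := by
    rw [hAt']
    exact (isCompact_univ_pi fun _ => isCompact_Icc).inter_left isClosed_antitone
  have hInt : x0 ∈ interior At := by
    have hop : IsOpen {t : Fin N → ℝ | (∀ i j : Fin N, i < j → t j < t i) ∧
        ∀ i, t i ∈ Set.Ioo (0 : ℝ) (π / 2)} := by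
      refine IsOpen.and ?_ ?_
      · simp only [Set.ofPred_forall]
        refine isOpen_iInter_of_finite fun i => isOpen_iInter_of_finite fun j =>
          isOpen_iInter_of_finite fun _ => isOpen_lt (continuous_apply j) (continuous_apply i)
      · simp only [Set.ofPred_forall]
        exact isOpen_iInter_of_finite fun i => isOpen_Ioo.preimage (continuous_apply i)
    refine interior_maximal ?_ hop ⟨fun i j h => hx0A h, hx0I⟩
    rintro t ⟨h1, h2⟩
    rw [hAt]
    exact ⟨StrictAnti.antitone fun i j h => h1 i j h, fun i => Set.Ioo_subset_Icc_self (h2 i)⟩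
  have hbase : ∀ t ∈ At, (∀ r ∈ Finset.univ.filter (fun r : Fin N × Fin N => r.1 < r.2),
      0 ≤ Real.cos (2 * t r.2) - Real.cos (2 * t r.1)) ∧ (∀ i, 0 ≤ Real.sin (t i)) ∧
      (∀ i, 0 ≤ Real.sin (2 * t i)) := by
    intro t ht
    rw [hAt] at ht
    obtain ⟨h1, h2⟩ := ht
    refine ⟨fun r hr => ?_, fun i => ?_, fun i => ?_⟩
    · have hr' : r.1 < r.2 := by simpa using hr
      have := h1 hr'.le
      exact sub_nonneg.2 (Real.cos_le_cos_of_nonneg_of_le_pi (by linarith [(h2 r.2).1])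
        (by linarith [(h2 r.1).2]) (by linarith))
    · exact Real.sin_nonneg_of_nonneg_of_le_pi (h2 i).1 (by linarith [(h2 i).2, Real.pi_pos])
    · exact Real.sin_nonneg_of_nonneg_of_le_pi (by linarith [(h2 i).1]) (by linarith [(h2 i).2])
  have hV0 : ∀ t ∈ At, 0 ≤ jacV N a b t := by
    intro t ht
    obtain ⟨h1, h2, h3⟩ := hbase t ht
    exact mul_nonneg (Finset.prod_nonneg h1) (Finset.prod_nonneg fun i _ =>
      mul_nonneg (Real.rpow_nonneg (h2 i) _) (Real.rpow_nonneg (h3 i) _))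
  have hwV : ∀ κ : ℝ, ∀ t ∈ At, w κ t = jacV N a b t ^ κ := by
    intro κ t ht
    obtain ⟨h1, h2, h3⟩ := hbase t ht
    have h4 : ∀ i ∈ (Finset.univ : Finset (Fin N)), 0 ≤ Real.sin (t i) ^ a * Real.sin (2 * t i) ^ b :=
      fun i _ => mul_nonneg (Real.rpow_nonneg (h2 i) _) (Real.rpow_nonneg (h3 i) _)
    unfold jacV
    rw [hw, Real.mul_rpow (Finset.prod_nonneg h1) (Finset.prod_nonneg h4),
      ← Real.finsetProd_rpow _ _ h1, ← Real.finsetProd_rpow _ _ h4]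
    simp only
    congr 1
    refine Finset.prod_congr rfl fun i _ => ?_
    rw [Real.mul_rpow (Real.rpow_nonneg (h2 i) _) (Real.rpow_nonneg (h3 i) _),
      ← Real.rpow_mul (h2 i), ← Real.rpow_mul (h3 i), mul_comm a, mul_comm b]
  have hVc : Continuous (jacV N a b) := by
    unfold jacV
    refine (continuous_finsetProd _ fun p _ => by fun_prop).mul
      (continuous_finsetProd _ fun i _ => ?_)
    exact (Continuous.rpow_const (by fun_prop) fun _ => Or.inr ha).mul
      (Continuous.rpow_const (by fun_prop) fun _ => Or.inr hb.le)
  obtain ⟨hpos, hlog0⟩ := jacV_log N a b x0 hx0A hx0I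
  have hmax : ∀ t ∈ At, t ≠ x0 → jacV N a b t < jacV N a b x0 := by
    intro t ht hne
    rcases (hV0 t ht).eq_or_lt with h0 | h0
    · rwa [← h0]
    have ht' := ht
    rw [hAt] at ht'
    obtain ⟨hanti, hmem⟩ := ht'
    obtain ⟨hn1, hn2⟩ := mul_ne_zero_iff.1 h0.ne'
    have hmem' : ∀ i, t i ∈ Set.Ioo (0 : ℝ) (π / 2) := by
      intro i
      have h5 := (mul_ne_zero_iff.1 (Finset.prod_ne_zero_iff.1 hn2 i (Finset.mem_univ i))).2
      refine ⟨lt_of_le_of_ne (hmem i).1 fun h => h5 ?_, lt_of_le_of_ne (hmem i).2 fun h => h5 ?_⟩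
      · rw [← h]; simp [hb.ne']
      · rw [h, mul_div_cancel₀ _ two_ne_zero]; simp [hb.ne']
    have hanti' : StrictAnti t := by
      intro i j hij
      refine lt_of_le_of_ne (hanti hij.le) fun h => ?_
      refine Finset.prod_ne_zero_iff.1 hn1 (i, j) (by simpa using hij) ?_
      simp [h]
    obtain ⟨hpt, hlogt⟩ := jacV_log N a b t hanti' hmem'
    rw [← Real.log_lt_log_iff hpt hpos, hlogt, hlog0]
    refine sub_lt_sub_right ?_ _
    simp only [hx0, hz2]
    refine energy_lt (a + b) b hp hb z (fun i => Real.cos (2 * t i)) hzmono ?_ hzmem ?_ ?_ hst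
    · intro i j hij
      exact Real.cos_lt_cos_of_nonneg_of_le_pi (by linarith [(hmem j).1])
        (by linarith [(hmem i).2]) (by linarith [hanti' hij])
    · intro i
      have h6 := Real.cos_lt_cos_of_nonneg_of_le_pi (x := 0) (y := 2 * t i) le_rfl
        (by linarith [(hmem i).2]) (by linarith [(hmem' i).1])
      have h7 := Real.cos_lt_cos_of_nonneg_of_le_pi (x := 2 * t i) (y := π)
        (by linarith [(hmem i).1]) le_rfl (by linarith [(hmem' i).2])
      rw [Real.cos_zero] at h6
      rw [Real.cos_pi] at h7
      exact ⟨h7, h6⟩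
    · intro h
      refine hne (funext fun i => ?_)
      have h8 : Real.cos (2 * t i) = z i := congrFun h i
      simp only [hx0]
      rw [← h8, Real.arccos_cos (by linarith [(hmem i).1]) (by linarith [(hmem i).2])]
      ring
  intro ε hε
  refine (laplace_aux_s7 At hAtc (jacV N a b) hVc hV0 x0 hInt hpos hmax ε hε).congr fun κ => ?_
  have hSm : MeasurableSet {t ∈ At | ε < dist t x0} :=
    hAtc.measurableSet.inter
      (isOpen_lt continuous_const (continuous_id.dist continuous_const)).measurableSet
  rw [setIntegral_congr_fun hSm (fun t ht => (hwV κ t ht.1).symm),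
    setIntegral_congr_fun hAtc.measurableSet (fun t ht => (hwV κ t ht).symm)]
end

section
/- Let N ≥ 1, a ≥ 0, b > 0, and set α = a+b−1 and β = b−1. For each κ > 0 let X_κ be a random vector with distribution μ_κ (the β-Jacobi ensemble), and let z = (z_1,...,z_N), where z_1 < ... < z_N are the ordered zeros of the Jacobi polynomial P_N^{(α,β)}. Then the N×N matrix S with entries s_{j,j} = Σ_{l≠j} 1/(z_j−z_l)² + (a+b)/2 · 1/(1−z_j)² + b/2 · 1/(1+z_j)² and s_{i,j} = −1/(z_i−z_j)² for i ≠ j is positive definite, and √κ·(X_κ − z) converges in distribution as κ → ∞ to the centered N-dimensional normal distribution with covariance matrix S^{−1}. -/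
open MeasureTheory Filter Real Finset Topology

lemma jac_weight_integrable {α β : ℝ} (hα : -1 < α) (hβ : -1 < β) :
    IntervalIntegrable (fun x : ℝ => (1 - x) ^ α * (1 + x) ^ β) volume (-1) 1 := by
  have key : ∀ α β : ℝ, -1 < β →
      IntervalIntegrable (fun x : ℝ => (1 - x) ^ α * (1 + x) ^ β) volume (-1) 0 := by
    intro α β hβ
    apply IntervalIntegrable.continuousOn_mul
    · have h := (intervalIntegral.intervalIntegrable_rpow' (a := 0) (b := 1) hβ).comp_add_left 1
      simpa using h
    · intro x hx
      rw [Set.uIcc_of_le (by norm_num)] at hx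
      refine ContinuousAt.continuousWithinAt ?_
      apply ContinuousAt.rpow_const (by fun_prop)
      left; linarith [hx.2]
  refine (key α β hβ).trans ?_
  rw [IntervalIntegrable.iff_comp_neg]
  have h := (key β α hα).symm
  simp only [neg_zero]
  refine h.congr ?_
  intro x _
  simp only []
  rw [mul_comm, sub_neg_eq_add, ← sub_eq_add_neg]

lemma jac_poly_integrable {α β : ℝ} (hα : -1 < α) (hβ : -1 < β) (R : Polynomial ℝ) :
    IntervalIntegrable (fun x : ℝ => R.eval x * ((1 - x) ^ α * (1 + x) ^ β)) volume (-1) 1 :=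
  (jac_weight_integrable hα hβ).continuousOn_mul R.continuous.continuousOn

lemma jac_parts {α β : ℝ} (hα : -1 < α) (hβ : -1 < β) (R : Polynomial ℝ) :
    ∫ x in (-1 : ℝ)..1, ((1 - Polynomial.X ^ 2) * R.derivative +
      (Polynomial.C (β + 1) * (1 - Polynomial.X) - Polynomial.C (α + 1) * (1 + Polynomial.X)) * R
      : Polynomial ℝ).eval x * ((1 - x) ^ α * (1 + x) ^ β) = 0 := by
  have h := intervalIntegral.integral_eq_sub_of_hasDerivAt_of_le (a := (-1 : ℝ)) (b := 1)
    (f := fun x => R.eval x * ((1 - x) ^ (α + 1) * (1 + x) ^ (β + 1)))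
    (f' := fun x => ((1 - Polynomial.X ^ 2) * R.derivative +
      (Polynomial.C (β + 1) * (1 - Polynomial.X) - Polynomial.C (α + 1) * (1 + Polynomial.X)) * R
      : Polynomial ℝ).eval x * ((1 - x) ^ α * (1 + x) ^ β)) (by norm_num) ?_ ?_
      (jac_poly_integrable hα hβ _)
  · rw [h]
    simp [Real.zero_rpow (by linarith : α + 1 ≠ 0), Real.zero_rpow (by linarith : β + 1 ≠ 0)]
  · refine R.continuous.continuousOn.mul (ContinuousOn.mul ?_ ?_)
    · exact ContinuousOn.rpow_const (by fun_prop) (fun x _ => Or.inr (by linarith))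
    · exact ContinuousOn.rpow_const (by fun_prop) (fun x _ => Or.inr (by linarith))
  · intro x hx
    have h1 : (0 : ℝ) < 1 - x := by linarith [hx.2]
    have h2 : (0 : ℝ) < 1 + x := by linarith [hx.1]
    have d1 : HasDerivAt (fun x : ℝ => (1 - x) ^ (α + 1)) (-1 * (α + 1) * (1 - x) ^ (α + 1 - 1)) x :=
      HasDerivAt.rpow_const ((hasDerivAt_id x).const_sub 1) (Or.inl h1.ne')
    have d2 : HasDerivAt (fun x : ℝ => (1 + x) ^ (β + 1)) (1 * (β + 1) * (1 + x) ^ (β + 1 - 1)) x :=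
      HasDerivAt.rpow_const ((hasDerivAt_id x).const_add 1) (Or.inl h2.ne')
    convert! (R.hasDerivAt x).mul (d1.mul d2) using 1
    have e1 : (1 - x) ^ (α + 1) = (1 - x) ^ α * (1 - x) := by
      rw [Real.rpow_add h1, Real.rpow_one]
    have e2 : (1 + x) ^ (β + 1) = (1 + x) ^ β * (1 + x) := by
      rw [Real.rpow_add h2, Real.rpow_one]
    simp only [Pi.mul_apply, add_sub_cancel_right, e1, e2]
    simp
    ring

lemma jac_critical (N : ℕ) (hN : 1 ≤ N) (α β : ℝ) (hα : -1 < α) (hβ : -1 < β)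
    (P : Polynomial ℝ) (hPdeg : P.natDegree = N)
    (hPorth : ∀ Q : Polynomial ℝ, Q.natDegree < N →
      ∫ x in Set.Ioo (-1 : ℝ) 1,
        P.eval x * Q.eval x * (1 - x) ^ α * (1 + x) ^ β = 0)
    (z : Fin N → ℝ) (hzmono : StrictMono z)
    (hzroot : ∀ i, P.eval (z i) = 0)
    (hzmem : ∀ i, z i ∈ Set.Ioo (-1 : ℝ) 1) (j : Fin N) :
    ∑ l ∈ univ.erase j, 1 / (z j - z l) - (α + 1) / 2 * (1 / (1 - z j))
      + (β + 1) / 2 * (1 / (1 + z j)) = 0 := by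
  classical
  let I : Polynomial ℝ → ℝ := fun R => ∫ x in (-1 : ℝ)..1, R.eval x * ((1 - x) ^ α * (1 + x) ^ β)
  have I_add : ∀ R T, I (R + T) = I R + I T := by
    intro R T
    simp only [I]
    rw [← intervalIntegral.integral_add (jac_poly_integrable hα hβ _)
      (jac_poly_integrable hα hβ _)]
    congr 1; ext x; simp; ring
  have I_C : ∀ c R, I (Polynomial.C c * R) = c * I R := by
    intro c R
    simp only [I]
    rw [← intervalIntegral.integral_const_mul]
    congr 1; ext x; simp; ring
  have I_orth : ∀ Q : Polynomial ℝ, Q.natDegree < N → I (P * Q) = 0 := by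
    intro Q hQ
    have := hPorth Q hQ
    simp only [I]
    rw [intervalIntegral.integral_of_le (by norm_num), integral_Ioc_eq_integral_Ioo, ← this]
    congr 1; ext x; simp; ring
  -- P = c * prod
  have hP0 : P ≠ 0 := by rintro rfl; simp at hPdeg; omega
  have hprod : P = Polynomial.C P.leadingCoeff * ∏ i, (Polynomial.X - Polynomial.C (z i)) := by
    have hdvd : (∏ i, (Polynomial.X - Polynomial.C (z i))) ∣ P := by
      apply Finset.prod_dvd_of_coprime
      · intro i _ k _ hik
        exact Polynomial.pairwise_coprime_X_sub_C hzmono.injective hik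
      · intro i _
        exact Polynomial.dvd_iff_isRoot.mpr (hzroot i)
    have hm : (∏ i, (Polynomial.X - Polynomial.C (z i))).Monic :=
      Polynomial.monic_prod_of_monic _ _ fun i _ => Polynomial.monic_X_sub_C _
    obtain ⟨T, hT⟩ := hdvd
    have hT0 : T ≠ 0 := by rintro rfl; simp at hT; exact hP0 hT
    have hdeg : T.natDegree = 0 := by
      have := hm.natDegree_mul' hT0
      rw [← hT, hPdeg, Polynomial.natDegree_prod_of_monic _ _ (fun i _ => Polynomial.monic_X_sub_C _)] at this
      simp at this
      exact this
    obtain ⟨c, rfl⟩ := Polynomial.natDegree_eq_zero.mp hdeg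
    have : P.leadingCoeff = c := by rw [hT, Polynomial.leadingCoeff_monic_mul hm]; simp
    rw [this, mul_comm]; exact hT
  set c := P.leadingCoeff with hc
  have hc0 : c ≠ 0 := by simpa [hc] using hP0
  set Q : Polynomial ℝ := Polynomial.C c * ∏ i ∈ univ.erase j, (Polynomial.X - Polynomial.C (z i)) with hQ
  have hPQ : P = (Polynomial.X - Polynomial.C (z j)) * Q := by
    rw [hprod, hQ, ← Finset.mul_prod_erase univ _ (mem_univ j)]; ring
  have hQ0 : Q ≠ 0 := by rintro h; rw [h] at hPQ; simp at hPQ; exact hP0 hPQ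
  have hQdeg : Q.natDegree + 1 = N := by
    rw [← hPdeg, hPQ, (Polynomial.monic_X_sub_C (z j)).natDegree_mul' hQ0]
    simp; ring
  have hQj : Q.eval (z j) ≠ 0 := by
    rw [hQ, Polynomial.eval_mul, Polynomial.eval_C, Polynomial.eval_prod]
    refine mul_ne_zero hc0 (Finset.prod_ne_zero_iff.mpr fun i hi => ?_)
    simp only [Polynomial.eval_sub, Polynomial.eval_X, Polynomial.eval_C]
    rw [sub_ne_zero]
    intro h
    exact (Finset.mem_erase.mp hi).1 (hzmono.injective h).symm
  -- division
  have hred : ∀ G : Polynomial ℝ, G.natDegree ≤ N → I (Q * G) = G.eval (z j) * I Q := by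
    intro G hG
    obtain ⟨H, hH⟩ : (Polynomial.X - Polynomial.C (z j)) ∣ G - Polynomial.C (G.eval (z j)) := by
      rw [Polynomial.dvd_iff_isRoot]; simp
    have hHdeg : H.natDegree < N := by
      by_cases hH0 : H = 0
      · rw [hH0]; simp; omega
      have h1 := (Polynomial.monic_X_sub_C (z j)).natDegree_mul' hH0
      rw [← hH] at h1
      have h2 : (G - Polynomial.C (G.eval (z j))).natDegree ≤ N := by
        rw [Polynomial.natDegree_sub_C]; exact hG
      rw [Polynomial.natDegree_X_sub_C] at h1
      omega
    have : Q * G = Polynomial.C (G.eval (z j)) * Q + P * H := by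
      rw [hPQ]
      linear_combination Q * hH
    rw [this, I_add, I_C, I_orth H hHdeg, add_zero]
  have hIQ : I Q ≠ 0 := by
    intro h
    have h1 := hred Q (by omega)
    rw [h, mul_zero] at h1
    have hpos : 0 < I (Q * Q) := by
      simp only [I]
      have hnn : ∀ x ∈ Set.Ioo (-1 : ℝ) 1, 0 < (1 - x) ^ α * (1 + x) ^ β := fun x hx =>
        mul_pos (Real.rpow_pos_of_pos (by linarith [hx.2]) _) (Real.rpow_pos_of_pos (by linarith [hx.1]) _)
      rw [intervalIntegral.integral_of_le (by norm_num), integral_Ioc_eq_integral_Ioo]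
      rw [setIntegral_pos_iff_support_of_nonneg_ae]
      · have hsub : Set.Ioo (-1 : ℝ) 1 \ (Q.roots.toFinset : Set ℝ) ⊆ (Function.support fun x => (Q * Q).eval x * ((1 - x) ^ α * (1 + x) ^ β)) ∩ Set.Ioo (-1) 1 := by
          rintro x ⟨hx, hx2⟩
          refine ⟨?_, hx⟩
          have : Q.eval x ≠ 0 := by
            intro h0; apply hx2; simp [hQ0, h0]
          simp only [Function.mem_support, Polynomial.eval_mul]
          exact mul_ne_zero (mul_ne_zero this this) (hnn x hx).ne'
        refine lt_of_lt_of_le ?_ (measure_mono hsub)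
        rw [measure_sdiff_null (Set.Finite.measure_zero (Finset.finite_toSet _) _)]
        simp
      · refine (ae_restrict_mem measurableSet_Ioo).mono fun x hx => ?_
        have := (hnn x hx).le
        simp only [Polynomial.eval_mul, Pi.zero_apply]
        exact mul_nonneg (mul_self_nonneg _) this
      · have := jac_poly_integrable hα hβ (Q * Q)
        rw [intervalIntegrable_iff_integrableOn_Ioo_of_le (by norm_num)] at this
        exact this
    linarith
  set G : Polynomial ℝ := 2 * (1 - Polynomial.X ^ 2) * Q.derivative +
      (Polynomial.C (β + 1) * (1 - Polynomial.X) - Polynomial.C (α + 1) * (1 + Polynomial.X)) * Q with hG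
  have hGdeg : G.natDegree ≤ N := by
    rw [hG]
    refine (Polynomial.natDegree_add_le _ _).trans (max_le ?_ ?_)
    · by_cases h1 : Q.natDegree = 0
      · rw [Polynomial.natDegree_eq_zero] at h1
        obtain ⟨q, hq⟩ := h1
        rw [← hq]; simp
      · have h2 := Polynomial.natDegree_derivative_le Q
        refine Polynomial.natDegree_mul_le.trans ?_
        have : (2 * (1 - Polynomial.X ^ 2) : Polynomial ℝ).natDegree ≤ 2 := by compute_degree
        omega
    · refine Polynomial.natDegree_mul_le.trans ?_
      have : ((Polynomial.C (β + 1) * (1 - Polynomial.X) - Polynomial.C (α + 1) * (1 + Polynomial.X)) : Polynomial ℝ).natDegree ≤ 1 := by compute_degree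
      omega
  have hGz : G.eval (z j) = 0 := by
    have h1 := hred G hGdeg
    have h2 := jac_parts hα hβ (Q * Q)
    have h3 : I (Q * G) = 0 := by
      rw [← h2]
      simp only [I]
      congr 1; ext x; congr 2
      rw [hG, Polynomial.derivative_mul (f := Q) (g := Q)]; ring
    rw [h3] at h1
    rcases mul_eq_zero.mp h1.symm with h | h
    · exact h
    · exact absurd h hIQ
  have hder : Q.derivative.eval (z j) = Q.eval (z j) * ∑ l ∈ univ.erase j, 1 / (z j - z l) := by
    rw [hQ, Polynomial.derivative_C_mul, Polynomial.derivative_prod_finset]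
    simp only [Polynomial.eval_mul, Polynomial.eval_C, Polynomial.eval_finsetSum, Polynomial.eval_prod,
      Polynomial.derivative_X_sub_C, mul_one, Polynomial.eval_sub, Polynomial.eval_X]
    rw [mul_assoc]
    congr 1
    rw [Finset.mul_sum]
    refine Finset.sum_congr rfl fun i hi => ?_
    rw [← Finset.mul_prod_erase _ _ hi]
    have : z j - z i ≠ 0 := by
      rw [sub_ne_zero]; intro h
      exact (Finset.mem_erase.mp hi).1 (hzmono.injective h).symm
    field_simp
  rw [hG] at hGz
  simp only [Polynomial.eval_add, Polynomial.eval_mul, hder] at hGz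
  set s := ∑ l ∈ univ.erase j, 1 / (z j - z l) with hs
  simp at hGz
  have h1 : 1 - z j ≠ 0 := by linarith [(hzmem j).2]
  have h2 : 1 + z j ≠ 0 := by linarith [(hzmem j).1]
  have h3 : 2 * (1 - z j ^ 2) * s + ((β + 1) * (1 - z j) - (α + 1) * (1 + z j)) = 0 := by
    apply mul_left_cancel₀ hQj
    linear_combination hGz
  field_simp
  linear_combination h3

lemma jac_sum_lt {N : ℕ} (F : Fin N → Fin N → ℝ) (hs : ∀ i j, F i j = F j i) (hd : ∀ i, F i i = 0) :
    2 * ∑ p ∈ univ.filter (fun p : Fin N × Fin N => p.1 < p.2), F p.1 p.2 = ∑ i, ∑ j, F i j := by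
  rw [← Fintype.sum_prod_type']
  rw [← Finset.sum_filter_add_sum_filter_not univ (fun p : Fin N × Fin N => p.1 < p.2), two_mul]
  congr 1
  rw [← Finset.sum_filter_add_sum_filter_not (univ.filter (fun p : Fin N × Fin N => ¬ p.1 < p.2)) (fun p : Fin N × Fin N => p.2 < p.1)]
  rw [Finset.filter_filter, Finset.filter_filter]
  have h0 : ∑ p ∈ univ.filter (fun p : Fin N × Fin N => ¬ p.1 < p.2 ∧ ¬ p.2 < p.1), F p.1 p.2 = 0 := by
    refine Finset.sum_eq_zero fun p hp => ?_
    simp only [Finset.mem_filter, not_lt] at hp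
    have : p.1 = p.2 := le_antisymm hp.2.2 hp.2.1
    rw [this, hd]
  rw [h0, add_zero]
  refine Finset.sum_bij' (fun p _ => (p.2, p.1)) (fun p _ => (p.2, p.1)) ?_ ?_ ?_ ?_ ?_
  · intro p hp; simp at hp ⊢; exact ⟨hp.le, hp⟩
  · intro p hp; simp at hp ⊢; exact hp.2
  · intro p hp; rfl
  · intro p hp; rfl
  · intro p hp; exact hs _ _

lemma jac_sum_lin {N : ℕ} (z y : Fin N → ℝ) :
    ∑ p ∈ univ.filter (fun p : Fin N × Fin N => p.1 < p.2), (y p.2 - y p.1) / (z p.2 - z p.1)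
      = ∑ j, y j * ∑ l ∈ univ.erase j, 1 / (z j - z l) := by
  have h := jac_sum_lt (fun i j => (y j - y i) / (z j - z i))
    (fun i j => by rw [← neg_sub (y i), ← neg_sub (z i), neg_div_neg_eq]) (fun i => by simp)
  have e : ∀ j, ∑ l ∈ univ.erase j, 1 / (z j - z l) = ∑ l, 1 / (z j - z l) := by
    intro j
    rw [← Finset.add_sum_erase univ _ (mem_univ j)]; simp
  simp only [e]
  have h2 : ∑ i, ∑ j, (y j - y i) / (z j - z i) = 2 * ∑ j, y j * ∑ l, 1 / (z j - z l) := by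
    simp only [sub_div, Finset.sum_sub_distrib, Finset.mul_sum]
    rw [Finset.sum_comm, ← Finset.sum_sub_distrib]
    refine Finset.sum_congr rfl fun j _ => ?_
    rw [← Finset.sum_sub_distrib]
    refine Finset.sum_congr rfl fun l _ => ?_
    rw [← neg_sub (z j) (z l), div_neg]; ring
  linarith

lemma jac_quad {N : ℕ} (z y d : Fin N → ℝ) (S : Matrix (Fin N) (Fin N) ℝ)
    (hS : ∀ i j, S i j = if i = j then (∑ l ∈ Finset.univ.erase j, 1 / (z j - z l) ^ 2) + d j
      else -1 / (z i - z j) ^ 2) :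
    ∑ i, ∑ j, y i * S i j * y j =
     ∑ p ∈ univ.filter (fun p : Fin N × Fin N => p.1 < p.2), ((y p.2 - y p.1) / (z p.2 - z p.1)) ^ 2
      + ∑ i, d i * y i ^ 2 := by
  have h := jac_sum_lt (fun i j => ((y j - y i) / (z j - z i)) ^ 2)
    (fun i j => by rw [← neg_sub (y i), ← neg_sub (z i), neg_div_neg_eq]) (fun i => by simp)
  have e : ∀ j, ∑ l ∈ univ.erase j, 1 / (z j - z l) ^ 2 = ∑ l, 1 / (z j - z l) ^ 2 := by
    intro j
    rw [← Finset.add_sum_erase univ _ (mem_univ j)]; simp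
  have hS' : ∀ i j, y i * S i j * y j = (if i = j then ((∑ l, 1 / (z i - z l) ^ 2) + d i) * y i ^ 2 else 0)
      - y i * y j / (z i - z j) ^ 2 := by
    intro i j
    rw [hS]
    split_ifs with hij
    · subst hij; rw [e]; simp; ring
    · ring
  simp only [hS', Finset.sum_sub_distrib, Finset.sum_ite_eq, Finset.mem_univ, if_true]
  have h2 : ∑ i, ∑ j, ((y j - y i) / (z j - z i)) ^ 2 = 2 * (∑ i, (∑ l, 1 / (z i - z l) ^ 2) * y i ^ 2 - ∑ i, ∑ j, y i * y j / (z i - z j) ^ 2) := by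
    have h3 : ∀ i j, ((y j - y i) / (z j - z i)) ^ 2 = 1 / (z j - z i) ^ 2 * y j ^ 2 +
        (1 / (z i - z j) ^ 2 * y i ^ 2 - 2 * (y i * y j / (z i - z j) ^ 2)) := by
      intro i j
      rw [← neg_sub (z i) (z j), div_pow, neg_sq]; ring
    simp only [h3, Finset.sum_add_distrib, Finset.sum_sub_distrib, ← Finset.mul_sum, ← Finset.sum_mul]
    rw [Finset.sum_comm]
    simp only [← Finset.sum_mul]
    ring
  simp only [add_mul, Finset.sum_add_distrib]
  linarith

open scoped MatrixOrder in
lemma jac_gauss {N : ℕ} (S : Matrix (Fin N) (Fin N) ℝ) (hS : S.PosDef) :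
    (2 * π) ^ (-(N : ℝ) / 2) * Real.sqrt S.det *
      ∫ x : Fin N → ℝ, Real.exp (-(∑ i, ∑ j, x i * S i j * x j) / 2) = 1 := by
  set B := CFC.sqrt S with hB
  have hBB : B * B = S := CFC.sqrt_mul_sqrt_self S hS.posSemidef.nonneg
  have hBH : B.transpose = B := by
    have h := (CFC.sqrt_nonneg S).isSelfAdjoint.star_eq
    rw [Matrix.star_eq_conjTranspose, Matrix.conjTranspose_eq_transpose_of_trivial] at h
    exact h
  have hdet : B.det * B.det = S.det := by rw [← Matrix.det_mul, hBB]
  have hpos := hS.det_pos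
  have hB0 : B.det ≠ 0 := by rintro h; rw [h] at hdet; linarith
  have hsq : Real.sqrt S.det = |B.det| := by rw [← hdet, Real.sqrt_mul_self_eq_abs]
  have hq : ∀ x : Fin N → ℝ, ∑ i, ∑ j, x i * S i j * x j = ∑ i, (B.mulVec x i) ^ 2 := by
    intro x
    have h1 : ∑ i, ∑ j, x i * S i j * x j = x ⬝ᵥ S.mulVec x := by
      simp only [dotProduct, Matrix.mulVec, Finset.mul_sum, mul_assoc]
    rw [h1, ← hBB, ← Matrix.mulVec_mulVec, Matrix.dotProduct_mulVec]
    nth_rewrite 1 [← hBH]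
    rw [Matrix.vecMul_transpose]
    simp only [dotProduct, sq]
  have h1 : ∫ x : Fin N → ℝ, Real.exp (-(∑ i, (x i) ^ 2) / 2) = (2 * π) ^ ((N : ℝ) / 2) := by
    have : ∀ x : Fin N → ℝ, Real.exp (-(∑ i, (x i) ^ 2) / 2) = ∏ i, Real.exp (-(1/2) * (x i) ^ 2) := by
      intro x
      rw [← Real.exp_sum, ← Finset.mul_sum]; congr 1; ring
    simp only [this]
    rw [integral_fintype_prod_volume_eq_prod (f := fun (_ : Fin N) (v : ℝ) => Real.exp (-(1/2) * v ^ 2))]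
    simp only [integral_gaussian, Finset.prod_const, Finset.card_univ, Fintype.card_fin]
    rw [Real.sqrt_eq_rpow, ← Real.rpow_mul_natCast (by positivity)]
    congr 1
    · ring
    · ring
  have hmap := Real.map_matrix_volume_pi_eq_smul_volume_pi hB0
  have h2 : ∫ x : Fin N → ℝ, Real.exp (-(∑ i, (B.mulVec x i) ^ 2) / 2) = |B.det|⁻¹ * (2 * π) ^ ((N : ℝ) / 2) := by
    have hm : Measurable (Matrix.toLin' B) := (LinearMap.continuous_of_finiteDimensional _).measurable
    have := integral_map (μ := volume) hm.aemeasurable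
      (f := fun x : Fin N → ℝ => Real.exp (-(∑ i, (x i) ^ 2) / 2)) (by
        apply Continuous.aestronglyMeasurable; fun_prop)
    rw [hmap, integral_smul_measure, h1] at this
    simp only [Matrix.toLin'_apply] at this
    rw [← this, ENNReal.toReal_ofReal (abs_nonneg _), abs_inv, smul_eq_mul]
  simp only [hq]
  rw [h2, hsq, neg_div, Real.rpow_neg (by positivity)]
  have : (2 * π) ^ ((N : ℝ) / 2) ≠ 0 := by positivity
  have : |B.det| ≠ 0 := by simpa using hB0
  field_simp

noncomputable def jacT (t p : ℝ) : ℝ := t ^ p * Real.exp (-(p * (t - 1)))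

lemma jacT_nonneg {t p : ℝ} (ht : 0 ≤ t) : 0 ≤ jacT t p :=
  mul_nonneg (Real.rpow_nonneg ht _) (Real.exp_pos _).le

lemma jacT_le {t p : ℝ} (ht : 0 ≤ t) (hp : 0 ≤ p) :
    jacT t p ≤ Real.exp (-(p * ((t - 1) ^ 2 / (2 * (1 + t))))) := by
  have h1 : t ≤ Real.exp (2 * (Real.sqrt t - 1)) := by
    have h := Real.add_one_le_exp (Real.sqrt t - 1)
    have h0 := Real.sqrt_nonneg t
    calc t = Real.sqrt t ^ 2 := (Real.sq_sqrt ht).symm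
      _ ≤ Real.exp (Real.sqrt t - 1) ^ 2 := by
        apply pow_le_pow_left₀ h0; linarith
      _ = _ := by rw [← Real.exp_nat_mul]; norm_num
  have h2 : 2 * (Real.sqrt t - 1) ≤ (t - 1) - (t - 1) ^ 2 / (2 * (1 + t)) := by
    have h0 := Real.sqrt_nonneg t
    obtain ⟨r, hr⟩ : ∃ r, r = Real.sqrt t := ⟨_, rfl⟩
    have hr2 : t = r ^ 2 := by rw [hr, Real.sq_sqrt ht]
    rw [← hr, hr2]
    rw [← hr] at h0
    have : (r ^ 2 - 1) ^ 2 / (2 * (1 + r ^ 2)) ≤ (r - 1) ^ 2 := by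
      rw [div_le_iff₀ (by positivity)]
      nlinarith [mul_nonneg (sq_nonneg (r - 1)) (sq_nonneg (r - 1))]
    nlinarith
  have h3 : t ^ p ≤ Real.exp (p * ((t - 1) - (t - 1) ^ 2 / (2 * (1 + t)))) := by
    calc t ^ p ≤ (Real.exp ((t - 1) - (t - 1) ^ 2 / (2 * (1 + t)))) ^ p :=
          Real.rpow_le_rpow ht (h1.trans (Real.exp_le_exp.mpr h2)) hp
      _ = _ := by rw [← Real.exp_mul, mul_comm]
  unfold jacT
  calc _ ≤ Real.exp (p * ((t - 1) - (t - 1) ^ 2 / (2 * (1 + t)))) * Real.exp (-(p * (t - 1))) :=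
        mul_le_mul_of_nonneg_right h3 (Real.exp_pos _).le
    _ = _ := by rw [← Real.exp_add]; congr 1; ring

lemma jacT_le_one {t p : ℝ} (ht : 0 ≤ t) (hp : 0 ≤ p) : jacT t p ≤ 1 := by
  refine (jacT_le ht hp).trans (Real.exp_le_one_iff.mpr ?_)
  have : 0 ≤ p * ((t - 1) ^ 2 / (2 * (1 + t))) := by positivity
  linarith

lemma jac_log_lim : Tendsto (fun s : ℝ => (Real.log (1 + s) - s) / s ^ 2) (𝓝[≠] 0) (𝓝 (-1 / 2)) := by
  have hb : ∀ᶠ s : ℝ in 𝓝[≠] 0, ‖(Real.log (1 + s) - s) / s ^ 2 - (-1 / 2)‖ ≤ 2 * |s| := by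
    have h1 : ∀ᶠ s : ℝ in 𝓝[≠] 0, |s| < 1 / 2 := by
      apply mem_nhdsWithin_of_mem_nhds
      have : Metric.ball (0 : ℝ) (1 / 2) ∈ 𝓝 (0 : ℝ) := Metric.ball_mem_nhds _ (by norm_num)
      filter_upwards [this] with s hs
      simpa using hs
    filter_upwards [h1, self_mem_nhdsWithin] with s hs hs0
    have hs0' : s ≠ 0 := hs0
    have h := Real.abs_log_sub_add_sum_range_le (x := -s) (by rw [abs_neg]; linarith) 2
    simp only [Finset.sum_range_succ, Finset.sum_range_zero, abs_neg, sub_neg_eq_add] at h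
    norm_num at h
    have e : (Real.log (1 + s) - s) / s ^ 2 - (-1 / 2) = (-s + s ^ 2 / 2 + Real.log (1 + s)) / s ^ 2 := by
      field_simp; ring
    rw [e, Real.norm_eq_abs, abs_div, abs_of_pos (by positivity : 0 < s ^ 2), div_le_iff₀ (by positivity)]
    refine h.trans ?_
    rw [div_le_iff₀ (by linarith), ← sq_abs s]
    have := abs_nonneg s
    nlinarith [pow_nonneg this 3]
  rw [tendsto_iff_norm_sub_tendsto_zero]
  refine squeeze_zero' (Eventually.of_forall fun s => norm_nonneg _) hb ?_
  have : Tendsto (fun s : ℝ => 2 * |s|) (𝓝 0) (𝓝 (2 * |0|)) := by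
    apply Continuous.tendsto; fun_prop
  simp only [abs_zero, mul_zero] at this
  exact this.mono_left nhdsWithin_le_nhds

lemma jacT_lim (c u κ0 : ℝ) :
    Tendsto (fun κ : ℝ => jacT (1 + u / Real.sqrt κ) ((κ - κ0) * c)) atTop
      (𝓝 (Real.exp (-(c * u ^ 2) / 2))) := by
  have hs : Tendsto (fun κ : ℝ => u / Real.sqrt κ) atTop (𝓝 0) :=
    Tendsto.div_atTop tendsto_const_nhds Real.tendsto_sqrt_atTop
  by_cases hu : u = 0
  · subst hu; simp [jacT]
  have hs' : Tendsto (fun κ : ℝ => u / Real.sqrt κ) atTop (𝓝[≠] 0) := by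
    rw [tendsto_nhdsWithin_iff]
    refine ⟨hs, ?_⟩
    filter_upwards [eventually_gt_atTop 0] with κ hκ
    have : Real.sqrt κ ≠ 0 := (Real.sqrt_pos.mpr hκ).ne'
    simp [hu, this]
  have h1 := jac_log_lim.comp hs'
  have h2 : Tendsto (fun κ : ℝ => (κ - κ0) / κ) atTop (𝓝 1) := by
    have : Tendsto (fun κ : ℝ => 1 - κ0 / κ) atTop (𝓝 (1 - 0)) :=
      tendsto_const_nhds.sub (Tendsto.div_atTop tendsto_const_nhds tendsto_id)
    rw [sub_zero] at this
    refine this.congr' ?_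
    filter_upwards [eventually_gt_atTop 0] with κ hκ
    field_simp
  have h3 := ((h2.mul_const (c * u ^ 2)).mul h1)
  have h4 := (Real.continuous_exp.tendsto _).comp h3
  have e : (1 : ℝ) * (c * u ^ 2) * (-1 / 2) = -(c * u ^ 2) / 2 := by ring
  rw [e] at h4
  refine h4.congr' ?_
  have hpos : ∀ᶠ κ : ℝ in atTop, -1 < u / Real.sqrt κ := hs.eventually_const_lt (by norm_num)
  filter_upwards [eventually_gt_atTop 0, hpos] with κ hκ hp
  have hr : Real.sqrt κ ≠ 0 := (Real.sqrt_pos.mpr hκ).ne'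
  have hsq : Real.sqrt κ ^ 2 = κ := Real.sq_sqrt hκ.le
  simp only [Function.comp, jacT]
  rw [Real.rpow_def_of_pos (by linarith), ← Real.exp_add]
  congr 1
  have : (κ - κ0) / κ * (c * u ^ 2) = (κ - κ0) * c * (u / Real.sqrt κ) ^ 2 := by
    rw [div_pow, hsq]; ring
  rw [this]
  have h5 : u / Real.sqrt κ ≠ 0 := div_ne_zero hu hr
  generalize u / Real.sqrt κ = s at *
  field_simp
  ring

noncomputable def jacW {N : ℕ} (a b κ : ℝ) (x : Fin N → ℝ) : ℝ :=
  (∏ p ∈ Finset.univ.filter (fun p : Fin N × Fin N => p.1 < p.2), (x p.2 - x p.1) ^ κ) *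
      ∏ i, ((1 - x i) ^ (κ * (a + b) / 2 - 1 / 2) * (1 + x i) ^ (κ * b / 2 - 1 / 2))

noncomputable def jacK {N : ℕ} (a b v : ℝ) (z : Fin N → ℝ) : ℝ :=
  (∏ p ∈ Finset.univ.filter (fun p : Fin N × Fin N => p.1 < p.2), (z p.2 - z p.1) ^ v) *
      ∏ i, ((1 - z i) ^ (v * ((a + b) / 2)) * (1 + z i) ^ (v * (b / 2)))

noncomputable def jacR {N : ℕ} (a b v : ℝ) (z x : Fin N → ℝ) : ℝ :=
  (∏ p ∈ Finset.univ.filter (fun p : Fin N × Fin N => p.1 < p.2),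
      jacT ((x p.2 - x p.1) / (z p.2 - z p.1)) v) *
      ∏ i, (jacT ((1 - x i) / (1 - z i)) (v * ((a + b) / 2)) * jacT ((1 + x i) / (1 + z i)) (v * (b / 2)))

lemma jac_factor_s8 {X Z v e κ0 : ℝ} (hX : 0 ≤ X) (hZ : 0 < Z) (hv : 0 ≤ v) (he : 0 ≤ e) (hκ : κ0 = v + e) :
    X ^ κ0 = Z ^ v * X ^ e * (jacT (X / Z) v * Real.exp (v * (X / Z - 1))) := by
  rw [hκ, Real.rpow_add_of_nonneg hX hv he, jacT, mul_assoc ((X / Z) ^ v), ← Real.exp_add,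
    neg_add_cancel, Real.exp_zero, Real.div_rpow hX hZ.le]
  have : Z ^ v ≠ 0 := (Real.rpow_pos_of_pos hZ _).ne'
  field_simp

lemma jacW_eq {N : ℕ} {a b : ℝ} (ha : 0 ≤ a) (hb : 0 < b) {z x : Fin N → ℝ} {κ : ℝ}
    (hκ : 1 / b ≤ κ) (hz : StrictMono z) (hzm : ∀ i, z i ∈ Set.Ioo (-1 : ℝ) 1)
    (hx : Monotone x) (hxm : ∀ i, x i ∈ Set.Icc (-1 : ℝ) 1)
    (hcrit : ∀ j, ∑ l ∈ univ.erase j, 1 / (z j - z l) - (a + b) / 2 * (1 / (1 - z j))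
      + b / 2 * (1 / (1 + z j)) = 0)
    (hlin : ∀ y : Fin N → ℝ, ∑ p ∈ univ.filter (fun p : Fin N × Fin N => p.1 < p.2), (y p.2 - y p.1) / (z p.2 - z p.1)
      = ∑ j, y j * ∑ l ∈ univ.erase j, 1 / (z j - z l)) :
    jacW a b κ x = jacK a b (κ - 1 / b) z * jacW a b (1 / b) x * jacR a b (κ - 1 / b) z x := by
  set κ0 := 1 / b with hκ0
  have hκ0b : κ0 * b = 1 := by rw [hκ0]; field_simp
  have hκ0p : 0 < κ0 := by rw [hκ0]; positivity
  set v := κ - κ0 with hv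
  have hv0 : 0 ≤ v := by linarith
  have f1 : ∀ p ∈ univ.filter (fun p : Fin N × Fin N => p.1 < p.2), (x p.2 - x p.1) ^ κ =
      (z p.2 - z p.1) ^ v * (x p.2 - x p.1) ^ κ0 * (jacT ((x p.2 - x p.1) / (z p.2 - z p.1)) v
        * Real.exp (v * ((x p.2 - x p.1) / (z p.2 - z p.1) - 1))) := by
    intro p hp
    have hp' : p.1 < p.2 := (Finset.mem_filter.mp hp).2
    exact jac_factor_s8 (by linarith [hx hp'.le]) (by linarith [hz hp']) hv0 hκ0p.le (by rw [hv]; ring)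
  have f2 : ∀ i, (1 - x i) ^ (κ * (a + b) / 2 - 1 / 2) * (1 + x i) ^ (κ * b / 2 - 1 / 2) =
      ((1 - z i) ^ (v * ((a + b) / 2)) * (1 - x i) ^ (κ0 * (a + b) / 2 - 1 / 2) *
        (jacT ((1 - x i) / (1 - z i)) (v * ((a + b) / 2)) * Real.exp (v * ((a + b) / 2) * ((1 - x i) / (1 - z i) - 1)))) *
      ((1 + z i) ^ (v * (b / 2)) * (1 + x i) ^ (κ0 * b / 2 - 1 / 2) *
        (jacT ((1 + x i) / (1 + z i)) (v * (b / 2)) * Real.exp (v * (b / 2) * ((1 + x i) / (1 + z i) - 1)))) := by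
    intro i
    rw [← jac_factor_s8 (κ0 := κ * (a + b) / 2 - 1 / 2), ← jac_factor_s8 (κ0 := κ * b / 2 - 1 / 2)]
    · linarith [(hxm i).1]
    · linarith [(hzm i).1]
    · positivity
    · rw [hκ0b]; norm_num
    · rw [hv]; ring
    · linarith [(hxm i).2]
    · linarith [(hzm i).2]
    · positivity
    · have : 0 ≤ κ0 * a := by positivity
      nlinarith
    · rw [hv]; ring
  have hE : (∏ p ∈ univ.filter (fun p : Fin N × Fin N => p.1 < p.2), Real.exp (v * ((x p.2 - x p.1) / (z p.2 - z p.1) - 1))) *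
     ((∏ i, Real.exp (v * ((a + b) / 2) * ((1 - x i) / (1 - z i) - 1))) * ∏ i, Real.exp (v * (b / 2) * ((1 + x i) / (1 + z i) - 1))) = 1 := by
    rw [← Real.exp_sum, ← Real.exp_sum, ← Real.exp_sum, ← Real.exp_add, ← Real.exp_add, Real.exp_eq_one_iff]
    have g1 : ∑ p ∈ univ.filter (fun p : Fin N × Fin N => p.1 < p.2), v * ((x p.2 - x p.1) / (z p.2 - z p.1) - 1)
        = v * ∑ j, (x j - z j) * ∑ l ∈ univ.erase j, 1 / (z j - z l) := by
      rw [← hlin (fun j => x j - z j), Finset.mul_sum]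
      refine Finset.sum_congr rfl fun p hp => ?_
      have hp' : p.1 < p.2 := (Finset.mem_filter.mp hp).2
      have : z p.2 - z p.1 ≠ 0 := by linarith [hz hp']
      field_simp
      ring
    rw [g1, Finset.mul_sum, ← Finset.sum_add_distrib, ← Finset.sum_add_distrib]
    refine Finset.sum_eq_zero fun j _ => ?_
    have h1 : 1 - z j ≠ 0 := by linarith [(hzm j).2]
    have h2 : 1 + z j ≠ 0 := by linarith [(hzm j).1]
    have e1 : (1 - x j) / (1 - z j) - 1 = -(x j - z j) * (1 / (1 - z j)) := by field_simp; ring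
    have e2 : (1 + x j) / (1 + z j) - 1 = (x j - z j) * (1 / (1 + z j)) := by field_simp; ring
    rw [e1, e2]
    linear_combination v * (x j - z j) * hcrit j
  rw [← mul_one (jacK a b v z * jacW a b κ0 x * jacR a b v z x), ← hE]
  unfold jacW jacK jacR
  rw [Finset.prod_congr rfl f1, Finset.prod_congr rfl (fun i _ => f2 i)]
  simp only [Finset.prod_mul_distrib]
  ring

lemma jacW_continuous {N : ℕ} {a b κ : ℝ} (ha : 0 ≤ a) (hb : 0 < b) (hκ : 1 / b ≤ κ) :
    Continuous (jacW a b κ : (Fin N → ℝ) → ℝ) := by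
  have hκ0 : 0 < κ := lt_of_lt_of_le (by positivity) hκ
  have h1 : 1 ≤ κ * b := by rwa [div_le_iff₀ hb] at hκ
  have h2 : 0 ≤ κ * a := by positivity
  unfold jacW
  refine Continuous.mul ?_ ?_
  · refine continuous_finsetProd _ fun p _ => ?_
    exact Continuous.rpow_const (by fun_prop) fun x => Or.inr hκ0.le
  · refine continuous_finsetProd _ fun i _ => Continuous.mul ?_ ?_
    · exact Continuous.rpow_const (by fun_prop) fun x => Or.inr (by nlinarith)
    · exact Continuous.rpow_const (by fun_prop) fun x => Or.inr (by nlinarith)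

lemma jacK_pos {N : ℕ} {a b v : ℝ} {z : Fin N → ℝ} (hz : StrictMono z)
    (hzm : ∀ i, z i ∈ Set.Ioo (-1 : ℝ) 1) : 0 < jacK a b v z := by
  unfold jacK
  refine mul_pos (Finset.prod_pos fun p hp => ?_) (Finset.prod_pos fun i _ => mul_pos ?_ ?_)
  · exact Real.rpow_pos_of_pos (by linarith [hz (Finset.mem_filter.mp hp).2]) _
  · exact Real.rpow_pos_of_pos (by linarith [(hzm i).2]) _
  · exact Real.rpow_pos_of_pos (by linarith [(hzm i).1]) _

lemma jacW_pos {N : ℕ} {a b κ : ℝ} {z : Fin N → ℝ} (hz : StrictMono z)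
    (hzm : ∀ i, z i ∈ Set.Ioo (-1 : ℝ) 1) : 0 < jacW a b κ z := by
  unfold jacW
  refine mul_pos (Finset.prod_pos fun p hp => ?_) (Finset.prod_pos fun i _ => mul_pos ?_ ?_)
  · exact Real.rpow_pos_of_pos (by linarith [hz (Finset.mem_filter.mp hp).2]) _
  · exact Real.rpow_pos_of_pos (by linarith [(hzm i).2]) _
  · exact Real.rpow_pos_of_pos (by linarith [(hzm i).1]) _

lemma jacW_nonneg {N : ℕ} {a b κ : ℝ} {x : Fin N → ℝ} (hx : Monotone x)
    (hxm : ∀ i, x i ∈ Set.Icc (-1 : ℝ) 1) : 0 ≤ jacW a b κ x := by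
  unfold jacW
  refine mul_nonneg (Finset.prod_nonneg fun p hp => ?_) (Finset.prod_nonneg fun i _ => mul_nonneg ?_ ?_)
  · exact Real.rpow_nonneg (by linarith [hx (Finset.mem_filter.mp hp).2.le]) _
  · exact Real.rpow_nonneg (by linarith [(hxm i).2]) _
  · exact Real.rpow_nonneg (by linarith [(hxm i).1]) _

lemma jacR_nonneg {N : ℕ} {a b v : ℝ} {z x : Fin N → ℝ} (hz : StrictMono z)
    (hzm : ∀ i, z i ∈ Set.Ioo (-1 : ℝ) 1)
    (hx : Monotone x) (hxm : ∀ i, x i ∈ Set.Icc (-1 : ℝ) 1) : 0 ≤ jacR a b v z x := by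
  unfold jacR
  refine mul_nonneg (Finset.prod_nonneg fun p hp => ?_) (Finset.prod_nonneg fun i _ => mul_nonneg ?_ ?_)
  · have hp' := (Finset.mem_filter.mp hp).2
    exact jacT_nonneg (div_nonneg (by linarith [hx hp'.le]) (by linarith [hz hp']))
  · exact jacT_nonneg (div_nonneg (by linarith [(hxm i).2]) (by linarith [(hzm i).2]))
  · exact jacT_nonneg (div_nonneg (by linarith [(hxm i).1]) (by linarith [(hzm i).1]))

lemma jacR_le {N : ℕ} {a b v : ℝ} {z x : Fin N → ℝ} (ha : 0 ≤ a) (hb : 0 < b) (hv : 0 ≤ v)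
    (hz : StrictMono z) (hzm : ∀ i, z i ∈ Set.Ioo (-1 : ℝ) 1)
    (hx : Monotone x) (hxm : ∀ i, x i ∈ Set.Icc (-1 : ℝ) 1) :
    jacR a b v z x ≤ ∏ i, Real.exp (-(v * ((a + b) / 2) * ((x i - z i) ^ 2 / 16))) := by
  unfold jacR
  have h1 : (∏ p ∈ Finset.univ.filter (fun p : Fin N × Fin N => p.1 < p.2),
      jacT ((x p.2 - x p.1) / (z p.2 - z p.1)) v) ≤ 1 := by
    refine Finset.prod_le_one (fun p hp => ?_) (fun p hp => ?_)
    · have hp' := (Finset.mem_filter.mp hp).2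
      exact jacT_nonneg (div_nonneg (by linarith [hx hp'.le]) (by linarith [hz hp']))
    · have hp' := (Finset.mem_filter.mp hp).2
      exact jacT_le_one (div_nonneg (by linarith [hx hp'.le]) (by linarith [hz hp'])) hv
  have n1 : ∀ i, 0 ≤ (1 - x i) / (1 - z i) := fun i =>
    div_nonneg (by linarith [(hxm i).2]) (by linarith [(hzm i).2])
  have n2 : ∀ i, 0 ≤ (1 + x i) / (1 + z i) := fun i =>
    div_nonneg (by linarith [(hxm i).1]) (by linarith [(hzm i).1])
  have h0 : 0 ≤ ∏ i, (jacT ((1 - x i) / (1 - z i)) (v * ((a + b) / 2)) * jacT ((1 + x i) / (1 + z i)) (v * (b / 2))) :=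
    Finset.prod_nonneg fun i _ => mul_nonneg (jacT_nonneg (n1 i)) (jacT_nonneg (n2 i))
  refine (mul_le_of_le_one_left h0 h1).trans ?_
  refine Finset.prod_le_prod (fun i _ => mul_nonneg (jacT_nonneg (n1 i)) (jacT_nonneg (n2 i))) fun i _ => ?_
  refine (mul_le_of_le_one_right (jacT_nonneg (n1 i)) (jacT_le_one (n2 i) (by positivity))).trans ?_
  refine (jacT_le (n1 i) (by positivity)).trans (Real.exp_le_exp.mpr ?_)
  apply neg_le_neg
  apply mul_le_mul_of_nonneg_left _ (by positivity)
  have hz1 : 0 < 1 - z i := by linarith [(hzm i).2]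
  have hx1 : 0 ≤ 1 - x i := by linarith [(hxm i).2]
  have e : ((1 - x i) / (1 - z i) - 1) ^ 2 / (2 * (1 + (1 - x i) / (1 - z i))) =
      (x i - z i) ^ 2 / (2 * (1 - z i) * ((1 - z i) + (1 - x i))) := by
    have : (1 - z i) + (1 - x i) ≠ 0 := by linarith
    have h2 : 1 + (1 - x i) / (1 - z i) = ((1 - z i) + (1 - x i)) / (1 - z i) := by field_simp
    rw [h2]
    field_simp
    ring
  rw [e]
  apply div_le_div_of_nonneg_left (sq_nonneg _)
  · have : 0 < (1 - z i) + (1 - x i) := by linarith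
    positivity
  · have a1 : 1 - z i ≤ 2 := by linarith [(hzm i).1]
    have a2 : 1 - x i ≤ 2 := by linarith [(hxm i).1]
    nlinarith [mul_le_mul a1 (add_le_add a1 a2) (by linarith) (by norm_num)]

lemma jacR_lim {N : ℕ} (a b κ0 : ℝ) {z : Fin N → ℝ}
    (hz : StrictMono z) (hzm : ∀ i, z i ∈ Set.Ioo (-1 : ℝ) 1) (y : Fin N → ℝ) :
    Tendsto (fun κ : ℝ => jacR a b (κ - κ0) z (z + (Real.sqrt κ)⁻¹ • y)) atTop
      (𝓝 (Real.exp (-(∑ p ∈ univ.filter (fun p : Fin N × Fin N => p.1 < p.2), ((y p.2 - y p.1) / (z p.2 - z p.1)) ^ 2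
      + ∑ i, ((a + b) / 2 * (1 / (1 - z i) ^ 2) + b / 2 * (1 / (1 + z i) ^ 2)) * y i ^ 2) / 2))) := by
  have e : Real.exp (-(∑ p ∈ univ.filter (fun p : Fin N × Fin N => p.1 < p.2), ((y p.2 - y p.1) / (z p.2 - z p.1)) ^ 2
      + ∑ i, ((a + b) / 2 * (1 / (1 - z i) ^ 2) + b / 2 * (1 / (1 + z i) ^ 2)) * y i ^ 2) / 2)
      = (∏ p ∈ univ.filter (fun p : Fin N × Fin N => p.1 < p.2), Real.exp (-(1 * ((y p.2 - y p.1) / (z p.2 - z p.1)) ^ 2) / 2)) *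
        ∏ i, (Real.exp (-((a + b) / 2 * (-y i / (1 - z i)) ^ 2) / 2) * Real.exp (-(b / 2 * (y i / (1 + z i)) ^ 2) / 2)) := by
    simp only [← Real.exp_add, ← Real.exp_sum]
    congr 1
    rw [neg_add, add_div, ← Finset.sum_neg_distrib, ← Finset.sum_neg_distrib, Finset.sum_div, Finset.sum_div]
    congr 1
    · refine Finset.sum_congr rfl fun p _ => ?_
      ring
    · refine Finset.sum_congr rfl fun i _ => ?_
      rw [div_pow, div_pow, neg_sq]
      ring
  rw [e]
  unfold jacR
  refine Tendsto.mul (tendsto_finsetProd _ fun p hp => ?_) (tendsto_finsetProd _ fun i _ => Tendsto.mul ?_ ?_)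
  · have hp' := (Finset.mem_filter.mp hp).2
    have : z p.2 - z p.1 ≠ 0 := by linarith [hz hp']
    refine (jacT_lim 1 ((y p.2 - y p.1) / (z p.2 - z p.1)) κ0).congr fun κ => ?_
    congr 1
    · simp only [Pi.add_apply, Pi.smul_apply, smul_eq_mul]
      rw [eq_div_iff this, add_mul, div_mul_eq_mul_div, div_mul_cancel₀ _ this]
      ring
    · ring
  · have : 1 - z i ≠ 0 := by linarith [(hzm i).2]
    refine (jacT_lim ((a + b) / 2) (-y i / (1 - z i)) κ0).congr fun κ => ?_
    congr 1
    simp only [Pi.add_apply, Pi.smul_apply, smul_eq_mul]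
    rw [eq_div_iff this, add_mul, div_mul_eq_mul_div, div_mul_cancel₀ _ this]
    ring
  · have : 1 + z i ≠ 0 := by linarith [(hzm i).1]
    refine (jacT_lim (b / 2) (y i / (1 + z i)) κ0).congr fun κ => ?_
    congr 1
    simp only [Pi.add_apply, Pi.smul_apply, smul_eq_mul]
    rw [eq_div_iff this, add_mul, div_mul_eq_mul_div, div_mul_cancel₀ _ this]
    ring

lemma jac_laplace {N : ℕ} {a b : ℝ} (ha : 0 ≤ a) (hb : 0 < b) {z : Fin N → ℝ}
    (hz : StrictMono z) (hzm : ∀ i, z i ∈ Set.Ioo (-1 : ℝ) 1)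
    (hcrit : ∀ j, ∑ l ∈ univ.erase j, 1 / (z j - z l) - (a + b) / 2 * (1 / (1 - z j))
      + b / 2 * (1 / (1 + z j)) = 0)
    (hlin : ∀ y : Fin N → ℝ, ∑ p ∈ univ.filter (fun p : Fin N × Fin N => p.1 < p.2), (y p.2 - y p.1) / (z p.2 - z p.1)
      = ∑ j, y j * ∑ l ∈ univ.erase j, 1 / (z j - z l))
    (A : Set (Fin N → ℝ))
    (hA : A = {x | Monotone x ∧ ∀ i, x i ∈ Set.Icc (-1 : ℝ) 1})
    (f : BoundedContinuousFunction (Fin N → ℝ) ℝ) :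
    Tendsto (fun κ : ℝ => ∫ y : Fin N → ℝ, f y * (A.indicator (jacW a b κ) (z + (Real.sqrt κ)⁻¹ • y)
        / jacK a b (κ - 1 / b) z)) atTop
      (𝓝 (∫ y : Fin N → ℝ, f y * (jacW a b (1 / b) z * Real.exp (-(∑ p ∈ univ.filter (fun p : Fin N × Fin N => p.1 < p.2), ((y p.2 - y p.1) / (z p.2 - z p.1)) ^ 2
      + ∑ i, ((a + b) / 2 * (1 / (1 - z i) ^ 2) + b / 2 * (1 / (1 + z i) ^ 2)) * y i ^ 2) / 2)))) := by
  have hAc : IsClosed A := by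
    have : A = {x | Monotone x} ∩ Set.Icc (fun _ => -1) (fun _ => 1) := by
      rw [hA]; ext x
      simp only [Set.mem_ofPred_eq, Set.mem_inter_iff, Set.mem_Icc, Pi.le_def]
      constructor
      · rintro ⟨h, h2⟩; exact ⟨h, fun i => (h2 i).1, fun i => (h2 i).2⟩
      · rintro ⟨h, h2, h3⟩; exact ⟨h, fun i => ⟨h2 i, h3 i⟩⟩
    rw [this]
    exact isClosed_monotone.inter isClosed_Icc
  have hAk : IsCompact A := by
    refine (isCompact_Icc (a := fun _ : Fin N => (-1 : ℝ)) (b := fun _ => 1)).of_isClosed_subset hAc ?_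
    rw [hA]
    rintro x ⟨_, h⟩
    exact ⟨fun i => (h i).1, fun i => (h i).2⟩
  obtain ⟨C, hC⟩ := hAk.exists_bound_of_continuousOn (jacW_continuous (N := N) ha hb le_rfl).continuousOn
  have hκ0 : 0 < 1 / b := by positivity
  have hxz : ∀ y : Fin N → ℝ, Tendsto (fun κ : ℝ => z + (Real.sqrt κ)⁻¹ • y) atTop (𝓝 z) := by
    intro y
    have h1 : Tendsto (fun κ : ℝ => (Real.sqrt κ)⁻¹) atTop (𝓝 0) :=
      tendsto_inv_atTop_zero.comp Real.tendsto_sqrt_atTop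
    simpa using (h1.smul_const y).const_add z
  have hint : Integrable (fun y : Fin N → ℝ => ∏ i, Real.exp (-((a + b) / 64) * y i ^ 2)) := by
    refine Integrable.fintype_prod (f := fun (_ : Fin N) (t : ℝ) => Real.exp (-((a + b) / 64) * t ^ 2)) fun i => ?_
    exact integrable_exp_neg_mul_sq (by positivity)
  refine tendsto_integral_filter_of_dominated_convergence
    (fun y => (‖f‖ * |C|) * ∏ i, Real.exp (-((a + b) / 64) * y i ^ 2)) ?_ ?_ (hint.const_mul _) ?_
  · filter_upwards [eventually_ge_atTop (1 / b)] with κ hκ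
    apply Measurable.aestronglyMeasurable
    refine f.continuous.measurable.mul (Measurable.div_const ?_ _)
    refine ((jacW_continuous ha hb hκ).measurable.indicator hAc.measurableSet).comp ?_
    apply Continuous.measurable
    fun_prop
  · filter_upwards [eventually_ge_atTop (2 * (1 / b))] with κ hκ
    refine Eventually.of_forall fun y => ?_
    have hκ1 : 1 / b ≤ κ := by linarith
    have hκp : 0 < κ := by linarith
    have hprod : 0 ≤ ∏ i, Real.exp (-((a + b) / 64) * y i ^ 2) := by positivity
    rw [norm_mul, mul_assoc]
    refine mul_le_mul (f.norm_coe_le_norm y) ?_ (norm_nonneg _) (norm_nonneg _)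
    by_cases hx : z + (Real.sqrt κ)⁻¹ • y ∈ A
    · rw [Set.indicator_of_mem hx]
      have hx' := hx
      rw [hA] at hx'
      obtain ⟨hx1, hx2⟩ := hx'
      rw [jacW_eq ha hb hκ1 hz hzm hx1 hx2 hcrit hlin, mul_assoc,
        mul_div_cancel_left₀ _ (jacK_pos hz hzm).ne', norm_mul]
      refine mul_le_mul ((hC _ hx).trans (le_abs_self C)) ?_ (norm_nonneg _) (abs_nonneg _)
      rw [Real.norm_eq_abs, abs_of_nonneg (jacR_nonneg hz hzm hx1 hx2)]
      refine (jacR_le ha hb (by linarith) hz hzm hx1 hx2).trans ?_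
      refine Finset.prod_le_prod (fun i _ => (Real.exp_pos _).le) fun i _ => Real.exp_le_exp.mpr ?_
      have e : ((z + (Real.sqrt κ)⁻¹ • y) i - z i) ^ 2 = y i ^ 2 / κ := by
        simp only [Pi.add_apply, Pi.smul_apply, smul_eq_mul, add_sub_cancel_left, mul_pow, inv_pow]
        rw [Real.sq_sqrt hκp.le]; ring
      rw [e]
      have h1 : κ / 2 ≤ κ - 1 / b := by linarith
      have h2 : 0 ≤ (a + b) / 2 * (y i ^ 2 / κ / 16) := by positivity
      have h3 := mul_le_mul_of_nonneg_right h1 h2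
      have h4 : κ / 2 * ((a + b) / 2 * (y i ^ 2 / κ / 16)) = (a + b) / 64 * y i ^ 2 := by
        field_simp; ring
      rw [mul_assoc]
      linarith
    · rw [Set.indicator_of_notMem hx]
      simp only [zero_div, norm_zero]
      positivity
  · refine Eventually.of_forall fun y => Tendsto.const_mul _ ?_
    have hW : Tendsto (fun κ : ℝ => jacW a b (1 / b) (z + (Real.sqrt κ)⁻¹ • y)) atTop (𝓝 (jacW a b (1 / b) z)) :=
      ((jacW_continuous ha hb le_rfl).tendsto z).comp (hxz y)
    refine (hW.mul (jacR_lim a b (1 / b) hz hzm y)).congr' ?_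
    have hev : ∀ᶠ κ : ℝ in atTop, z + (Real.sqrt κ)⁻¹ • y ∈ A := by
      have hnh : ∀ᶠ x : Fin N → ℝ in 𝓝 z, x ∈ A := by
        have h1 : ∀ᶠ x : Fin N → ℝ in 𝓝 z, ∀ i, x i ∈ Set.Ioo (-1 : ℝ) 1 := by
          rw [eventually_all]
          intro i
          exact (continuous_apply i).tendsto z (Ioo_mem_nhds (hzm i).1 (hzm i).2)
        have h2 : ∀ᶠ x : Fin N → ℝ in 𝓝 z, ∀ i j, i < j → x i < x j := by
          rw [eventually_all]
          intro i
          rw [eventually_all]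
          intro j
          by_cases hij : i < j
          · have := ((continuous_apply i).tendsto z).eventually_lt ((continuous_apply j).tendsto z) (hz hij)
            filter_upwards [this] with x hx _ using hx
          · exact Eventually.of_forall fun x h => absurd h hij
        filter_upwards [h1, h2] with x h1 h2
        rw [hA]
        refine ⟨StrictMono.monotone (fun i j hij => h2 i j hij), fun i => Set.Ioo_subset_Icc_self (h1 i)⟩
      exact (hxz y).eventually hnh
    filter_upwards [hev, eventually_ge_atTop (1 / b)] with κ hx hκ
    rw [Set.indicator_of_mem hx]
    rw [hA] at hx
    rw [jacW_eq ha hb hκ hz hzm hx.1 hx.2 hcrit hlin, mul_assoc,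
        mul_div_cancel_left₀ _ (jacK_pos hz hzm).ne']

theorem jacobi_ensemble_clt
    (N : ℕ) (hN : 1 ≤ N) (a b : ℝ) (ha : 0 ≤ a) (hb : 0 < b)
    (α β : ℝ) (hα : α = a + b - 1) (hβ : β = b - 1)
    (P : Polynomial ℝ) (hPdeg : P.natDegree = N)
    (hPorth : ∀ Q : Polynomial ℝ, Q.natDegree < N →
      ∫ x in Set.Ioo (-1 : ℝ) 1,
        P.eval x * Q.eval x * (1 - x) ^ α * (1 + x) ^ β = 0)
    (hPone : P.eval 1 = (∏ j ∈ Finset.range N, (α + 1 + j)) / (N.factorial : ℝ))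
    (z : Fin N → ℝ) (hzmono : StrictMono z)
    (hzroot : ∀ i, P.eval (z i) = 0)
    (hzmem : ∀ i, z i ∈ Set.Ioo (-1 : ℝ) 1)
    (A : Set (Fin N → ℝ))
    (hA : A = {x | Monotone x ∧ ∀ i, x i ∈ Set.Icc (-1 : ℝ) 1})
    (w : ℝ → (Fin N → ℝ) → ℝ)
    (hw : w = fun κ x =>
      (∏ p ∈ Finset.univ.filter (fun p : Fin N × Fin N => p.1 < p.2), (x p.2 - x p.1) ^ κ) *
      ∏ i, ((1 - x i) ^ (κ * (a + b) / 2 - 1 / 2) * (1 + x i) ^ (κ * b / 2 - 1 / 2)))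
    (S : Matrix (Fin N) (Fin N) ℝ)
    (hS : S = Matrix.of fun i j =>
      if i = j then
        (∑ l ∈ Finset.univ.erase j, 1 / (z j - z l) ^ 2) +
          (a + b) / 2 * (1 / (1 - z j) ^ 2) + b / 2 * (1 / (1 + z j) ^ 2)
      else -1 / (z i - z j) ^ 2)
    : S.PosDef ∧
      ∀ f : BoundedContinuousFunction (Fin N → ℝ) ℝ,
        Tendsto (fun κ : ℝ =>
            (∫ x in A, f (Real.sqrt κ • (x - z)) * w κ x) / (∫ x in A, w κ x))
          atTop
          (𝓝 (∫ x : Fin N → ℝ, f x *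
            ((2 * π) ^ (-(N : ℝ) / 2) * Real.sqrt S.det *
              Real.exp (-(∑ i, ∑ j, x i * S i j * x j) / 2)))) := by
  classical
  have hcrit : ∀ j, ∑ l ∈ univ.erase j, 1 / (z j - z l) - (a + b) / 2 * (1 / (1 - z j))
      + b / 2 * (1 / (1 + z j)) = 0 := by
    intro j
    have h := jac_critical N hN α β (by linarith) (by linarith) P hPdeg hPorth z hzmono hzroot hzmem j
    have e1 : α + 1 = a + b := by linarith
    have e2 : β + 1 = b := by linarith
    rwa [e1, e2] at h
  set d : Fin N → ℝ := fun j => (a + b) / 2 * (1 / (1 - z j) ^ 2) + b / 2 * (1 / (1 + z j) ^ 2) with hd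
  have hS' : ∀ i j, S i j = if i = j then (∑ l ∈ Finset.univ.erase j, 1 / (z j - z l) ^ 2) + d j
      else -1 / (z i - z j) ^ 2 := by
    intro i j
    rw [hS, Matrix.of_apply, hd, add_assoc]
  have hquad := fun y => jac_quad z y d S hS'
  have hdpos : ∀ j, 0 < d j := by
    intro j
    have h1 : 0 < 1 - z j := by linarith [(hzmem j).2]
    have h2 : 0 < 1 + z j := by linarith [(hzmem j).1]
    simp only [hd]
    positivity
  have hPD : S.PosDef := by
    refine Matrix.PosDef.of_dotProduct_mulVec_pos ?_ ?_
    · ext i j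
      simp only [Matrix.conjTranspose_apply, star_trivial, hS']
      by_cases hij : i = j
      · subst hij; rfl
      · rw [if_neg hij, if_neg (Ne.symm hij), ← neg_sub (z i), neg_sq]
    · intro x hx
      have h1 : star x ⬝ᵥ S.mulVec x = ∑ i, ∑ j, x i * S i j * x j := by
        simp only [dotProduct, Matrix.mulVec, Finset.mul_sum, mul_assoc, star_trivial]
      rw [h1, hquad]
      obtain ⟨k, hk⟩ := Function.ne_iff.mp hx
      have h2 : 0 < ∑ i, d i * x i ^ 2 := by
        refine Finset.sum_pos' (fun i _ => mul_nonneg (hdpos i).le (sq_nonneg _)) ⟨k, mem_univ k, ?_⟩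
        have : x k ≠ 0 := hk
        exact mul_pos (hdpos k) (by positivity)
      have h3 : 0 ≤ ∑ p ∈ univ.filter (fun p : Fin N × Fin N => p.1 < p.2),
          ((x p.2 - x p.1) / (z p.2 - z p.1)) ^ 2 := Finset.sum_nonneg fun p _ => sq_nonneg _
      linarith
  refine ⟨hPD, fun f => ?_⟩
  have hwW : ∀ κ, w κ = jacW a b κ := by
    intro κ; rw [hw]; rfl
  have hgauss := jac_gauss S hPD
  have hlap := fun g => jac_laplace ha hb hzmono hzmem hcrit (jac_sum_lin z) A hA g
  have hWz : 0 < jacW a b (1 / b) z := jacW_pos hzmono hzmem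
  have hq2 : ∀ y : Fin N → ℝ, ∑ p ∈ univ.filter (fun p : Fin N × Fin N => p.1 < p.2), ((y p.2 - y p.1) / (z p.2 - z p.1)) ^ 2
      + ∑ i, ((a + b) / 2 * (1 / (1 - z i) ^ 2) + b / 2 * (1 / (1 + z i) ^ 2)) * y i ^ 2 =
      ∑ i, ∑ j, y i * S i j * y j := fun y => (hquad y).symm
  simp only [hq2] at hlap
  have hlim : ∀ g : BoundedContinuousFunction (Fin N → ℝ) ℝ,
      ∫ y : Fin N → ℝ, g y * (jacW a b (1 / b) z * Real.exp (-(∑ i, ∑ j, y i * S i j * y j) / 2)) =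
      jacW a b (1 / b) z * ∫ y : Fin N → ℝ, g y * Real.exp (-(∑ i, ∑ j, y i * S i j * y j) / 2) := by
    intro g
    rw [← integral_const_mul]
    congr 1; ext y; ring
  simp only [hlim] at hlap
  set c0 := (2 * π) ^ (-(N : ℝ) / 2) * Real.sqrt S.det with hc0
  set I1 := ∫ x : Fin N → ℝ, Real.exp (-(∑ i, ∑ j, x i * S i j * x j) / 2) with hI1
  have hI0 : I1 ≠ 0 := by rintro h; rw [h] at hgauss; simp at hgauss
  have hone := hlap (BoundedContinuousFunction.const _ 1)
  simp only [BoundedContinuousFunction.const_apply, one_mul] at hone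
  have hdiv := (hlap f).div hone (mul_ne_zero hWz.ne' hI0)
  have hAm : MeasurableSet A := by
    have : A = {x | Monotone x} ∩ Set.Icc (fun _ => -1) (fun _ => 1) := by
      rw [hA]; ext x
      simp only [Set.mem_ofPred_eq, Set.mem_inter_iff, Set.mem_Icc, Pi.le_def]
      constructor
      · rintro ⟨h, h2⟩; exact ⟨h, fun i => (h2 i).1, fun i => (h2 i).2⟩
      · rintro ⟨h, h2, h3⟩; exact ⟨h, fun i => ⟨h2 i, h3 i⟩⟩
    rw [this]
    exact (isClosed_monotone.inter isClosed_Icc).measurableSet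
  have hgoal : ∫ x : Fin N → ℝ, f x * (c0 * Real.exp (-(∑ i, ∑ j, x i * S i j * x j) / 2)) =
      (jacW a b (1 / b) z * ∫ y : Fin N → ℝ, f y * Real.exp (-(∑ i, ∑ j, y i * S i j * y j) / 2)) /
      (jacW a b (1 / b) z * I1) := by
    rw [mul_div_mul_left _ _ hWz.ne', eq_div_iff hI0]
    have : ∫ x : Fin N → ℝ, f x * (c0 * Real.exp (-(∑ i, ∑ j, x i * S i j * x j) / 2)) =
        c0 * ∫ y : Fin N → ℝ, f y * Real.exp (-(∑ i, ∑ j, y i * S i j * y j) / 2) := by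
      rw [← integral_const_mul]
      congr 1; ext y; ring
    rw [this]
    linear_combination (∫ y : Fin N → ℝ, f y * Real.exp (-(∑ i, ∑ j, y i * S i j * y j) / 2)) * hgauss
  rw [hgoal]
  refine hdiv.congr' ?_
  filter_upwards [eventually_gt_atTop 0] with κ hκ
  have hr : Real.sqrt κ ≠ 0 := (Real.sqrt_pos.mpr hκ).ne'
  have hK : jacK a b (κ - 1 / b) z ≠ 0 := (jacK_pos hzmono hzmem).ne'
  have hcv : ∀ g : (Fin N → ℝ) → ℝ, ∫ x in A, g (Real.sqrt κ • (x - z)) * w κ x =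
      |(Real.sqrt κ ^ Module.finrank ℝ (Fin N → ℝ))⁻¹| * jacK a b (κ - 1 / b) z *
      ∫ y : Fin N → ℝ, g y * (A.indicator (jacW a b κ) (z + (Real.sqrt κ)⁻¹ • y) / jacK a b (κ - 1 / b) z) := by
    intro g
    rw [← integral_indicator hAm]
    have h1 := Measure.integral_comp_smul (volume : Measure (Fin N → ℝ))
      (fun y => g y * A.indicator (jacW a b κ) (z + (Real.sqrt κ)⁻¹ • y)) (Real.sqrt κ)
    have h2 := integral_sub_right_eq_self (μ := (volume : Measure (Fin N → ℝ))) (fun x => g (Real.sqrt κ • x) *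
      A.indicator (jacW a b κ) (z + (Real.sqrt κ)⁻¹ • Real.sqrt κ • x)) z
    rw [h1] at h2
    rw [smul_eq_mul] at h2
    rw [mul_assoc, ← integral_const_mul]
    have h3 : ∀ y, jacK a b (κ - 1 / b) z * (g y * (A.indicator (jacW a b κ) (z + (Real.sqrt κ)⁻¹ • y) / jacK a b (κ - 1 / b) z))
        = g y * A.indicator (jacW a b κ) (z + (Real.sqrt κ)⁻¹ • y) := by
      intro y; rw [mul_left_comm, mul_div_cancel₀ _ hK]
    simp only [h3]
    rw [← h2]
    congr 1; ext x
    rw [smul_smul, inv_mul_cancel₀ hr, one_smul, add_sub_cancel]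
    by_cases hx : x ∈ A
    · simp [hx, hwW]
    · simp [hx]
  have hcf := hcv f
  have hc1 := hcv (fun _ => 1)
  simp only [one_mul] at hc1
  have hne : |(Real.sqrt κ ^ Module.finrank ℝ (Fin N → ℝ))⁻¹| * jacK a b (κ - 1 / b) z ≠ 0 := by
    refine mul_ne_zero ?_ hK
    simp [hr]
  simp only [Pi.div_apply]
  rw [hcf, hc1, mul_div_mul_left _ _ hne]
end
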